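/- arXiv:2506.03715 — 3 statements merged into one kernel-verified Lean document; each statement's English description precedes it below -/
import Mathlib

section
/- Let 2 ≤ k < n and let V be a distribution of k-planes of class C¹ on ℝⁿ. Then for every d ∈ [0, k) there exists a k-dimensional embedded submanifold S ⊆ ℝⁿ of class C^{1,1} such that the Hausdorff dimension of the tangency set τ(S,V) equals d. -/
noncomputable section
open MeasureTheory Set Module Filter Metric
open scoped ENNReal NNReal Topology RealInnerProductSpace

/-- `ℝⁿ` with the Euclidean norm. -/
abbrev Euc (n : ℕ) : Type := EuclideanSpace ℝ (Fin n)

variable {n : ℕ}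

/-- A distribution of `k`-planes of class `C¹` on the open set `Ω ⊆ ℝⁿ`:
a map into the Grassmannian `Gr(k,n)` that is locally spanned by `k`
vector fields of class `C¹`. -/
def IsC1PlaneField (k : ℕ) (Ω : Set (Euc n)) (V : Euc n → Submodule ℝ (Euc n)) : Prop :=
  IsOpen Ω ∧ (∀ x ∈ Ω, finrank ℝ (V x) = k) ∧
    ∀ x ∈ Ω, ∃ U : Set (Euc n), IsOpen U ∧ x ∈ U ∧ U ⊆ Ω ∧
      ∃ X : Fin k → Euc n → Euc n,
        (∀ i, ContDiffOn ℝ 1 (X i) U) ∧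
        ∀ y ∈ U, V y = Submodule.span ℝ (Set.range fun i => X i y)

/-- Tangency set of a surface `S` to the plane field `V`:
points of `S` where the tangent space of `S` (the tangent cone, which for a `C¹`
submanifold is exactly the classical tangent plane) coincides with `V(x)`. -/
def tangencySet (S : Set (Euc n)) (V : Euc n → Submodule ℝ (Euc n)) : Set (Euc n) :=
  {x ∈ S | tangentConeAt ℝ S x = (V x : Set (Euc n))}

/-- The graph map of `f : W → Wᗮ`. -/
def graphMap (W : Submodule ℝ (Euc n)) (f : ↥W → ↥Wᗮ) : ↥W → Euc n :=
  fun z => (z : Euc n) + (f z : Euc n)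

/-- `S` is a `k`-dimensional embedded submanifold of `ℝⁿ` of class `C^{1,1}`:
near each of its points it is the graph, over a `k`-plane `W`, of a `C¹` function
`f : W → Wᗮ` whose gradient is Lipschitz. -/
def IsC11Submanifold (k : ℕ) (S : Set (Euc n)) : Prop :=
  S.Nonempty ∧
  ∀ x ∈ S, ∃ (W : Submodule ℝ (Euc n)) (U : Set ↥W) (f : ↥W → ↥Wᗮ) (O : Set (Euc n)),
    finrank ℝ W = k ∧ IsOpen U ∧ ContDiffOn ℝ 1 f U ∧
    (∃ L : ℝ≥0, LipschitzOnWith L (fun z => fderiv ℝ f z) U) ∧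
    IsOpen O ∧ x ∈ O ∧ S ∩ O = (graphMap W f '' U) ∩ O

/-! ### The Cantor set -/

/-- The coding map. -/
def ccode (r : ℝ) (b : ℕ → Fin 2) : ℝ := ∑' i, ((b i : ℕ) : ℝ) * ((1 - r) * r ^ i)

/-- One dimensional Cantor set. -/
def cant (r : ℝ) : Set ℝ := Set.range (ccode r)

theorem fin2_cast_le (c : Fin 2) : ((c : ℕ) : ℝ) ≤ 1 := by
  have : (c : ℕ) ≤ 1 := by omega
  exact_mod_cast this

theorem ccode_bound {r : ℝ} (h0 : 0 < r) (h1 : r < 1) (b : ℕ → Fin 2) (i : ℕ) :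
    ‖((b i : ℕ) : ℝ) * ((1 - r) * r ^ i)‖ ≤ (1 - r) * r ^ i := by
  have h2 : 0 ≤ (1 - r) * r ^ i := by have := sub_pos.2 h1; positivity
  rw [Real.norm_of_nonneg (by positivity)]
  have := fin2_cast_le (b i)
  nlinarith

theorem summable_geo {r : ℝ} (h0 : 0 < r) (h1 : r < 1) :
    Summable (fun i : ℕ => (1 - r) * r ^ i) :=
  (summable_geometric_of_lt_one h0.le h1).mul_left _

theorem ccode_summable {r : ℝ} (h0 : 0 < r) (h1 : r < 1) (b : ℕ → Fin 2) :
    Summable (fun i => ((b i : ℕ) : ℝ) * ((1 - r) * r ^ i)) :=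
  Summable.of_norm_bounded (summable_geo h0 h1) (ccode_bound h0 h1 b)

theorem ccode_cons {r : ℝ} (h0 : 0 < r) (h1 : r < 1) (b : ℕ → Fin 2) :
    ccode r b = ((b 0 : ℕ) : ℝ) * (1 - r) + r * ccode r (fun i => b (i + 1)) := by
  unfold ccode
  rw [(ccode_summable h0 h1 b).tsum_eq_zero_add, ← tsum_mul_left]
  congr 1
  · simp
  · congr 1; ext i; ring

theorem ccode_mem {r : ℝ} (h0 : 0 < r) (h1 : r < 1) (b : ℕ → Fin 2) :
    0 ≤ ccode r b ∧ ccode r b ≤ 1 := by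
  constructor
  · apply tsum_nonneg; intro i; have := sub_pos.2 h1; positivity
  · have h : ∑' i : ℕ, (1 - r) * r ^ i = 1 := by
      rw [tsum_mul_left, tsum_geometric_of_lt_one h0.le h1]
      exact mul_inv_cancel₀ (sub_pos.2 h1).ne'
    rw [← h]
    exact (ccode_summable h0 h1 b).tsum_le_tsum
      (fun i => (le_abs_self _).trans (ccode_bound h0 h1 b i)) (summable_geo h0 h1)

theorem ccode_continuous {r : ℝ} (h0 : 0 < r) (h1 : r < 1) : Continuous (ccode r) := by
  unfold ccode
  refine continuous_tsum (fun i => ?_) (summable_geo h0 h1) (fun i b => ccode_bound h0 h1 b i)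
  have : Continuous fun c : Fin 2 => ((c : ℕ) : ℝ) := continuous_of_discreteTopology
  exact (this.comp (continuous_apply i)).mul continuous_const

theorem cant_compact {r : ℝ} (h0 : 0 < r) (h1 : r < 1) : IsCompact (cant r) :=
  isCompact_range (ccode_continuous h0 h1)

theorem cant_zero (r : ℝ) : (0 : ℝ) ∈ cant r := ⟨fun _ => 0, by simp [ccode]⟩

theorem cant_mem {r : ℝ} (h0 : 0 < r) (h1 : r < 1) {t : ℝ} (ht : t ∈ cant r) :
    0 ≤ t ∧ t ≤ 1 := by
  obtain ⟨b, rfl⟩ := ht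
  exact ccode_mem h0 h1 b

theorem cant_split {r : ℝ} (h0 : 0 < r) (h1 : r < 1) {t : ℝ} (ht : t ∈ cant r) :
    ∃ c : Bool, ∃ u ∈ cant r, t = (if c then 1 else 0) * (1 - r) + r * u := by
  obtain ⟨b, rfl⟩ := ht
  refine ⟨decide (b 0 = 1), _, ⟨fun i => b (i + 1), rfl⟩, ?_⟩
  rw [ccode_cons h0 h1 b]
  congr 2
  generalize b 0 = c
  fin_cases c <;> simp

theorem cant_smul {r : ℝ} (h0 : 0 < r) (h1 : r < 1) {t : ℝ} (ht : t ∈ cant r) :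
    r * t ∈ cant r := by
  obtain ⟨b, rfl⟩ := ht
  refine ⟨fun i => Nat.casesOn i 0 b, ?_⟩
  rw [ccode_cons h0 h1]
  simp

theorem ccode_sep {r : ℝ} (h0 : 0 < r) (h1 : r < 1 / 2) (m : ℕ) :
    ∀ b b' : ℕ → Fin 2, (∀ i < m, b i = b' i) → b m ≠ b' m →
      (1 - 2 * r) * r ^ m ≤ |ccode r b - ccode r b'| := by
  induction m with
  | zero =>
    intro b b' _ hne
    rw [ccode_cons h0 (by linarith) b, ccode_cons h0 (by linarith) b']
    have h2 := ccode_mem h0 (by linarith) (fun i => b (i + 1))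
    have h3 := ccode_mem h0 (by linarith) (fun i => b' (i + 1))
    revert h2 h3 hne
    generalize ccode r (fun i => b (i + 1)) = u
    generalize ccode r (fun i => b' (i + 1)) = v
    generalize b 0 = c
    generalize b' 0 = c'
    intro hne h2 h3
    have hu : r * u ≤ r := by nlinarith
    have hv : r * v ≤ r := by nlinarith
    have hu' : 0 ≤ r * u := by nlinarith
    have hv' : 0 ≤ r * v := by nlinarith
    fin_cases c <;> fin_cases c' <;> simp at hne ⊢
    · rw [abs_of_nonpos] <;> linarith
    · rw [abs_of_nonneg] <;> linarith
  | succ m ih =>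
    intro b b' heq hne
    rw [ccode_cons h0 (by linarith) b, ccode_cons h0 (by linarith) b', heq 0 (by omega)]
    have := ih (fun i => b (i + 1)) (fun i => b' (i + 1)) (fun i hi => heq _ (by omega)) hne
    rw [show ∀ a x y : ℝ, a + r * x - (a + r * y) = r * (x - y) by intros; ring, abs_mul,
      abs_of_pos h0, pow_succ]
    nlinarith

/-- A choice of digits. -/
def cdig (r : ℝ) (t : ℝ) : ℕ → Fin 2 :=
  open Classical in if h : t ∈ cant r then h.choose else 0

theorem ccode_cdig {r t : ℝ} (ht : t ∈ cant r) : ccode r (cdig r t) = t := by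
  unfold cdig; rw [dif_pos ht]; exact ht.choose_spec

theorem ccode_inj {r : ℝ} (h0 : 0 < r) (h1 : r < 1 / 2) : Function.Injective (ccode r) := by
  intro b b' h
  by_contra hne
  have hex : ∃ m, b m ≠ b' m := by by_contra! hc; exact hne (funext hc)
  classical
  have := ccode_sep h0 h1 (Nat.find hex) b b'
    (fun i hi => by simpa using Nat.find_min hex hi) (Nat.find_spec hex)
  rw [h, sub_self, abs_zero] at this
  have h2 : 0 < (1 - 2 * r) * r ^ (Nat.find hex) := by
    have : 0 < 1 - 2 * r := by linarith
    positivity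
  linarith

theorem cdig_holder {r s : ℝ} (h0 : 0 < r) (h1 : r < 1 / 2) (hs : 0 < s) (hrs : r ^ s = 1 / 2)
    {t u : ℝ} (ht : t ∈ cant r) (hu : u ∈ cant r) :
    |Real.ofDigits (cdig r t) - Real.ofDigits (cdig r u)| ≤
      ((1 - 2 * r)⁻¹) ^ s * |t - u| ^ s := by
  have h12 : 0 < 1 - 2 * r := by linarith
  by_cases htu : cdig r t = cdig r u
  · rw [htu, sub_self, abs_zero]; positivity
  have hex : ∃ m, cdig r t m ≠ cdig r u m := by by_contra! hc; exact htu (funext hc)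
  classical
  set m := Nat.find hex with hm
  have hlt : ∀ i < m, cdig r t i = cdig r u i := fun i hi => by
    simpa using Nat.find_min hex hi
  have := ccode_sep h0 h1 m _ _ hlt (Nat.find_spec hex)
  rw [ccode_cdig ht, ccode_cdig hu] at this
  have h3 := Real.abs_ofDigits_sub_ofDigits_le hlt
  refine h3.trans ?_
  rw [← Real.mul_rpow (by positivity) (by positivity)]
  have h4 : r ^ m ≤ (1 - 2 * r)⁻¹ * |t - u| := by
    rw [le_inv_mul_iff₀ h12]; exact this
  calc (((2 : ℕ) : ℝ) ^ m)⁻¹ = (r ^ m) ^ s := by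
        rw [← Real.rpow_natCast r m, ← Real.rpow_mul h0.le, mul_comm, Real.rpow_mul h0.le, hrs]
        simp
    _ ≤ _ := Real.rpow_le_rpow (by positivity) h4 hs.le

/-- The product Cantor set. -/
def cantk (k : ℕ) (r : ℝ) : Set (Fin k → ℝ) := {x | ∀ i, x i ∈ cant r}

theorem cantk_zero (k : ℕ) (r : ℝ) : (0 : Fin k → ℝ) ∈ cantk k r := fun _ => cant_zero r

theorem le_dimH_cantk (k : ℕ) {r s : ℝ} (h0 : 0 < r) (h1 : r < 1 / 2) (hs : 0 < s)
    (hrs : r ^ s = 1 / 2) : ENNReal.ofReal (s * k) ≤ dimH (cantk k r) := by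
  have h12 : 0 < 1 - 2 * r := by linarith
  set f : (Fin k → ℝ) → (Fin k → ℝ) := fun x i => Real.ofDigits (cdig r (x i)) with hf
  have hH : HolderOnWith (((1 - 2 * r)⁻¹) ^ s).toNNReal s.toNNReal f (cantk k r) := by
    intro x hx y hy
    rw [edist_pi_le_iff]
    intro i
    have h := cdig_holder h0 h1 hs hrs (hx i) (hy i)
    have h2 : |x i - y i| ≤ dist x y := by
      rw [← Real.dist_eq]; exact dist_le_pi_dist x y i
    have h3 : |x i - y i| ^ s ≤ dist x y ^ s := Real.rpow_le_rpow (abs_nonneg _) h2 hs.le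
    rw [edist_dist, edist_dist, Real.coe_toNNReal _ hs.le,
      ENNReal.ofReal_rpow_of_nonneg dist_nonneg hs.le]
    change _ ≤ ENNReal.ofReal _ * _
    rw [← ENNReal.ofReal_mul (by positivity)]
    apply ENNReal.ofReal_le_ofReal
    rw [Real.dist_eq]
    refine h.trans ?_
    gcongr
  have h2 := hH.dimH_image_le (by simpa using hs)
  have h3 : Set.pi univ (fun _ : Fin k => Icc (0 : ℝ) 1) ⊆ f '' cantk k r := by
    intro y hy
    have : ∀ i, ∃ b : ℕ → Fin 2, Real.ofDigits b = y i := fun i => by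
      obtain ⟨b, -, hb⟩ := Real.ofDigits_SurjOn (b := 2) (by norm_num) (hy i trivial)
      exact ⟨b, hb⟩
    choose b hb using this
    refine ⟨fun i => ccode r (b i), fun i => ⟨_, rfl⟩, ?_⟩
    ext i
    simp only [hf]
    rw [← hb i]
    congr 1
    exact ccode_inj h0 h1 (ccode_cdig ⟨_, rfl⟩)
  have h4 : dimH (Set.pi univ (fun _ : Fin k => Icc (0 : ℝ) 1)) = k := by
    rw [Real.dimH_of_nonempty_interior]
    · simp
    · rw [interior_pi_set Set.finite_univ]
      exact ⟨fun _ => 1 / 2, fun i _ => by simp only [interior_Icc]; constructor <;> norm_num⟩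
  have h5 := (dimH_mono h3).trans h2
  rw [h4] at h5
  change _ ≤ _ / ENNReal.ofReal s at h5
  rw [ENNReal.le_div_iff_mul_le (Or.inl (by simpa using hs)) (Or.inl (by simp))] at h5
  rw [mul_comm, ENNReal.ofReal_mul (by positivity)]
  simpa using h5

theorem cantk_cover (k : ℕ) {r : ℝ} (h0 : 0 < r) (h1 : r < 1) (N : ℕ) :
    ∃ c : (Fin N → Fin k → Bool) → (Fin k → ℝ),
      cantk k r ⊆ ⋃ w, closedBall (c w) (r ^ N) := by
  induction N with
  | zero =>
    refine ⟨fun _ => 0, fun x hx => ?_⟩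
    simp only [mem_iUnion]
    refine ⟨fun i => i.elim0, ?_⟩
    rw [mem_closedBall, dist_pi_le_iff (by simp)]
    intro i
    have := cant_mem h0 h1 (hx i)
    simp [abs_le]; constructor <;> linarith
  | succ N ih =>
    obtain ⟨c, hc⟩ := ih
    refine ⟨fun w => fun i => (if w 0 i then 1 else 0) * (1 - r) + r * c (Fin.tail w) i,
      fun x hx => ?_⟩
    have : ∀ i, _ := fun i => cant_split h0 h1 (hx i)
    choose b u hu hxu using this
    obtain ⟨w, hw⟩ := mem_iUnion.1 (hc (show u ∈ cantk k r from hu))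
    refine mem_iUnion.2 ⟨Fin.cons b w, ?_⟩
    rw [mem_closedBall, dist_pi_le_iff (by positivity)] at hw ⊢
    intro i
    have := hw i
    rw [Real.dist_eq] at this ⊢
    rw [hxu i]
    simp only [Fin.cons_zero, Fin.tail_cons]
    rw [show ∀ a x y : ℝ, a + r * x - (a + r * y) = r * (x - y) by intros; ring, abs_mul,
      abs_of_pos h0, pow_succ]
    nlinarith

theorem dimH_cantk_le (k : ℕ) {r s : ℝ} (h0 : 0 < r) (h1 : r < 1 / 2) (hs : 0 < s)
    (hrs : r ^ s = 1 / 2) : dimH (cantk k r) ≤ ENNReal.ofReal (s * k) := by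
  choose c hc using cantk_cover k h0 (by linarith : r < 1)
  have hsk : 0 ≤ s * k := by positivity
  apply dimH_le_of_hausdorffMeasure_ne_top
  rw [Real.coe_toNNReal _ hsk]
  have hdiam : ∀ N w, Metric.ediam (closedBall (c N w) (r ^ N)) ≤ ENNReal.ofReal (2 * r ^ N) := by
    intro N w
    rw [← Metric.closedEBall_ofReal (by positivity)]
    refine Metric.ediam_closedEBall_le.trans ?_
    rw [ENNReal.ofReal_mul (by norm_num)]; simp
  have h := Measure.hausdorffMeasure_le_liminf_sum (s * k) (cantk k r) (l := atTop)
    (fun N => ENNReal.ofReal (2 * r ^ N)) (by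
      rw [← ENNReal.ofReal_zero]
      apply ENNReal.tendsto_ofReal
      simpa using (tendsto_pow_atTop_nhds_zero_of_lt_one h0.le (by linarith)).const_mul 2)
    (fun N w => closedBall (c N w) (r ^ N)) (Eventually.of_forall hdiam)
    (Eventually.of_forall hc)
  refine (h.trans_lt (lt_of_le_of_lt (b := ENNReal.ofReal (2 ^ (s * k))) ?_ ENNReal.ofReal_lt_top)).ne
  refine liminf_le_of_frequently_le' (Frequently.of_forall fun N => ?_)
  calc _ ≤ ∑ w : Fin N → Fin k → Bool, ENNReal.ofReal ((2 * r ^ N) ^ (s * k)) := by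
        refine Finset.sum_le_sum fun w _ => ?_
        rw [← ENNReal.ofReal_rpow_of_nonneg (by positivity) hsk]
        exact ENNReal.rpow_le_rpow (hdiam N w) hsk
    _ = ENNReal.ofReal (2 ^ (s * k)) := by
        rw [Finset.sum_const, nsmul_eq_mul, ← ENNReal.ofReal_natCast, ← ENNReal.ofReal_mul (by positivity)]
        congr 1
        rw [Real.mul_rpow (by norm_num) (by positivity)]
        have : (r ^ N) ^ (s * k) = (1 / 2 : ℝ) ^ (N * k) := by
          rw [← hrs, ← Real.rpow_natCast r N, ← Real.rpow_natCast, ← Real.rpow_mul h0.le, ← Real.rpow_mul h0.le]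
          congr 1; push_cast; ring
        rw [this]
        simp only [Finset.card_univ, Fintype.card_pi, Fintype.card_bool, Finset.prod_const, Fintype.card_fin]
        push_cast
        rw [← pow_mul, mul_comm N k, one_div, inv_pow]
        field_simp

/-! ### The recursive construction -/

section Recursion

variable {k : ℕ} {Y : Type*} [NormedAddCommGroup Y] [NormedSpace ℝ Y]

/-- Affine function with value `y` at `p` and the prescribed slope. -/
def affP (A : (Fin k → ℝ) → Y → ((Fin k → ℝ) →L[ℝ] Y)) (p : Fin k → ℝ) (y : Y)
    (x : Fin k → ℝ) : Y := y + A p y (x - p)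

/-- 0-1 vectors. -/
def indv (τ : Fin k → Bool) : Fin k → ℝ := fun i => if τ i then 1 else 0

/-- corners of the sub-cubes. -/
def childp (r l : ℝ) (p : Fin k → ℝ) (τ : Fin k → Bool) : Fin k → ℝ :=
  p + (l * (1 - r)) • indv τ

/-- the half vector -/
def hv (k : ℕ) : Fin k → ℝ := fun _ => 1 / 2

/-- Recursive construction. -/
def Fs (r : ℝ) (A : (Fin k → ℝ) → Y → ((Fin k → ℝ) →L[ℝ] Y)) (φ : (Fin k → ℝ) → ℝ) :
    ℕ → ℝ → (Fin k → ℝ) → Y → (Fin k → ℝ) → Y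
  | 0, _, p, y => affP A p y
  | N + 1, l, p, y => fun x => affP A p y x + ∑ τ : Fin k → Bool,
      φ ((r * l)⁻¹ • (x - childp r l p τ)) •
        (Fs r A φ N (r * l) (childp r l p τ) (affP A p y (childp r l p τ)) x - affP A p y x)

/-- Properties of the bump function. -/
structure GoodBump (k : ℕ) (r α β : ℝ) (φ : (Fin k → ℝ) → ℝ) : Prop where
  r0 : 0 < r
  r1 : r < 1 / 2
  smooth : ContDiff ℝ 3 φ
  one : ∀ z, ‖z - hv k‖ < α → φ z = 1
  zero : ∀ z, β ≤ ‖z - hv k‖ → φ z = 0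
  nest : r * β + (1 - r) / 2 < α
  disj : α + β ≤ (1 - r) / r
  αh : 1 / 2 < α

theorem norm_indv_sub_hv (τ : Fin k → Bool) : ‖indv τ - hv k‖ ≤ 1 / 2 := by
  rw [pi_norm_le_iff_of_nonneg (by norm_num)]
  intro i
  simp only [indv, hv, Pi.sub_apply]
  split_ifs <;> norm_num [abs_le]

theorem norm_indv (τ : Fin k → Bool) : ‖indv τ‖ ≤ 1 := by
  rw [pi_norm_le_iff_of_nonneg (by norm_num)]
  intro i
  simp only [indv]
  split_ifs <;> norm_num

theorem norm_indv_sub {τ σ : Fin k → Bool} (h : τ ≠ σ) : 1 ≤ ‖indv τ - indv σ‖ := by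
  obtain ⟨i, hi⟩ := Function.ne_iff.1 h
  refine le_trans ?_ (norm_le_pi_norm _ i)
  simp only [indv, Pi.sub_apply]
  cases h1 : τ i <;> cases h2 : σ i <;> simp_all

theorem exists_goodBump (k : ℕ) {r : ℝ} (h0 : 0 < r) (h1 : r < 1 / 2) :
    ∃ α β φ, GoodBump k r α β φ ∧ HasCompactSupport φ := by
  set s := (1 - 2 * r) / (4 * r) with hs
  have hs0 : 0 < s := by rw [hs]; apply div_pos <;> linarith
  have hrs : r * s = (1 - 2 * r) / 4 := by rw [hs]; field_simp
  let f : ContDiffBump (hv k) := ⟨(1 + s) / 2, (1 + 2 * s) / 2, by positivity, by linarith⟩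
  refine ⟨(1 + s) / 2, (1 + 2 * s) / 2, f, ⟨h0, h1, f.contDiff, ?_, ?_, ?_, ?_, ?_⟩,
    f.hasCompactSupport⟩
  · intro z hz
    apply f.one_of_mem_closedBall
    rw [mem_closedBall, dist_eq_norm]; exact hz.le
  · intro z hz
    apply f.zero_of_le_dist
    rw [dist_eq_norm]; exact hz
  · nlinarith
  · rw [le_div_iff₀ h0]; nlinarith
  · linarith

variable {r α β : ℝ} {φ : (Fin k → ℝ) → ℝ} {A : (Fin k → ℝ) → Y → ((Fin k → ℝ) →L[ℝ] Y)}

theorem resc_child (hr : 0 < r) {l : ℝ} (hl : 0 < l) (p x : Fin k → ℝ) (τ : Fin k → Bool) :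
    (r * l)⁻¹ • (x - childp r l p τ) = r⁻¹ • (l⁻¹ • (x - p) - (1 - r) • indv τ) := by
  unfold childp
  ext i
  simp only [Pi.smul_apply, Pi.sub_apply, Pi.add_apply, smul_eq_mul]
  field_simp
  ring

theorem bump_zero_outer (hb : GoodBump k r α β φ) {l : ℝ} (hl : 0 < l) (p x : Fin k → ℝ)
    (τ : Fin k → Bool) (hx : r * β + (1 - r) / 2 < ‖l⁻¹ • (x - p) - hv k‖) :
    φ ((r * l)⁻¹ • (x - childp r l p τ)) = 0 := by
  have hr := hb.r0
  apply hb.zero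
  rw [resc_child hr hl]
  set z := l⁻¹ • (x - p)
  by_contra! hc
  have h1 : z - hv k = r • (r⁻¹ • (z - (1 - r) • indv τ) - hv k) + (1 - r) • (indv τ - hv k) := by
    rw [smul_sub r, smul_smul, mul_inv_cancel₀ hr.ne']; module
  have h2 : ‖z - hv k‖ ≤ r * β + (1 - r) * (1 / 2) := by
    rw [h1]
    refine (norm_add_le _ _).trans ?_
    rw [norm_smul, norm_smul, Real.norm_of_nonneg hr.le,
      Real.norm_of_nonneg (by linarith [hb.r1] : (0 : ℝ) ≤ 1 - r)]
    have := norm_indv_sub_hv τ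
    have := hb.r1
    gcongr
    linarith
  linarith

theorem bump_zero_other (hb : GoodBump k r α β φ) {l : ℝ} (hl : 0 < l) (p x : Fin k → ℝ)
    {τ σ : Fin k → Bool} (hne : τ ≠ σ) (hx : ‖(r * l)⁻¹ • (x - childp r l p τ) - hv k‖ < α) :
    φ ((r * l)⁻¹ • (x - childp r l p σ)) = 0 := by
  have hr := hb.r0
  apply hb.zero
  rw [resc_child hr hl] at hx ⊢
  set z := l⁻¹ • (x - p)
  by_contra! hc
  have h1 : ((1 - r) / r) • (indv τ - indv σ) = (r⁻¹ • (z - (1 - r) • indv σ) - hv k)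
      - (r⁻¹ • (z - (1 - r) • indv τ) - hv k) := by
    rw [div_eq_inv_mul]; module
  have h2 : (1 - r) / r ≤ ‖((1 - r) / r) • (indv τ - indv σ)‖ := by
    have h3 : 0 ≤ (1 - r) / r := div_nonneg (by linarith [hb.r1]) hr.le
    rw [norm_smul, Real.norm_of_nonneg h3]
    exact le_mul_of_one_le_right h3 (norm_indv_sub hne)
  rw [h1] at h2
  have h3 := norm_sub_le (r⁻¹ • (z - (1 - r) • indv σ) - hv k)
    (r⁻¹ • (z - (1 - r) • indv τ) - hv k)
  have := hb.disj
  linarith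

theorem Fs_outer (hb : GoodBump k r α β φ) (N : ℕ) {l : ℝ} (hl : 0 < l) (p : Fin k → ℝ) (y : Y)
    (x : Fin k → ℝ) (hx : r * β + (1 - r) / 2 < ‖l⁻¹ • (x - p) - hv k‖) :
    Fs r A φ N l p y x = affP A p y x := by
  cases N with
  | zero => rfl
  | succ N =>
    simp only [Fs]
    rw [Finset.sum_eq_zero, add_zero]
    intro τ _
    rw [bump_zero_outer hb hl p x τ hx, zero_smul]

theorem Fs_core (hb : GoodBump k r α β φ) (N : ℕ) {l : ℝ} (hl : 0 < l) (p : Fin k → ℝ) (y : Y)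
    (x : Fin k → ℝ) (τ : Fin k → Bool)
    (hx : ‖(r * l)⁻¹ • (x - childp r l p τ) - hv k‖ < α) :
    Fs r A φ (N + 1) l p y x =
      Fs r A φ N (r * l) (childp r l p τ) (affP A p y (childp r l p τ)) x := by
  simp only [Fs]
  rw [Finset.sum_eq_single τ]
  · rw [hb.one _ hx, one_smul]; abel
  · intro σ _ hne
    rw [bump_zero_other hb hl p x hne.symm hx, zero_smul]
  · simp

theorem Fs_core_ev (hb : GoodBump k r α β φ) {l : ℝ} (hl : 0 < l) (p : Fin k → ℝ) (y : Y)
    (x : Fin k → ℝ) (τ : Fin k → Bool)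
    (hx : ‖(r * l)⁻¹ • (x - childp r l p τ) - hv k‖ < α) (N : ℕ) :
    Fs r A φ (N + 1) l p y =ᶠ[𝓝 x]
      Fs r A φ N (r * l) (childp r l p τ) (affP A p y (childp r l p τ)) := by
  have hc : Continuous fun x : Fin k → ℝ => ‖(r * l)⁻¹ • (x - childp r l p τ) - hv k‖ := by
    fun_prop
  filter_upwards [hc.continuousAt.eventually_lt continuousAt_const hx] with x' hx'
  exact Fs_core hb N hl p y x' τ hx'

theorem Fs_cases (hb : GoodBump k r α β φ) {l : ℝ} (hl : 0 < l) (p : Fin k → ℝ) (y : Y)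
    (x : Fin k → ℝ) :
    (∃ τ : Fin k → Bool, ∀ N, Fs r A φ (N + 1) l p y =ᶠ[𝓝 x]
      Fs r A φ N (r * l) (childp r l p τ) (affP A p y (childp r l p τ))) ∨
    (∀ N, Fs r A φ (N + 1) l p y =ᶠ[𝓝 x] Fs r A φ 1 l p y) := by
  by_cases h : ∃ τ, ‖(r * l)⁻¹ • (x - childp r l p τ) - hv k‖ < α
  · obtain ⟨τ, hτ⟩ := h
    exact Or.inl ⟨τ, Fs_core_ev hb hl p y x τ hτ⟩
  · right
    push Not at h
    intro N
    have h2 : ∀ τ : Fin k → Bool, ∀ᶠ x' in 𝓝 x,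
        r * β + (1 - r) / 2 < ‖(r * l)⁻¹ • (x' - childp r l p τ) - hv k‖ := by
      intro τ
      have hc : Continuous fun x : Fin k → ℝ => ‖(r * l)⁻¹ • (x - childp r l p τ) - hv k‖ := by
        fun_prop
      exact continuousAt_const.eventually_lt hc.continuousAt (hb.nest.trans_le (h τ))
    filter_upwards [eventually_all.2 h2] with x' hx'
    simp only [Fs]
    congr 1
    refine Finset.sum_congr rfl fun τ _ => ?_
    rw [Fs_outer hb N (mul_pos hb.r0 hl) _ _ _ (hx' τ)]

theorem Fs_contDiff (hb : GoodBump k r α β φ) (N : ℕ) : ∀ (l : ℝ) (p : Fin k → ℝ) (y : Y),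
    ContDiff ℝ 3 (Fs r A φ N l p y) := by
  have haff : ∀ (p : Fin k → ℝ) (y : Y), ContDiff ℝ 3 (affP A p y) := fun p y => by
    unfold affP
    exact contDiff_const.add ((A p y).contDiff.comp (contDiff_id.sub contDiff_const))
  induction N with
  | zero => intro l p y; exact haff p y
  | succ N ih =>
    intro l p y
    refine (haff p y).add (ContDiff.sum fun τ _ => ContDiff.smul ?_ ((ih _ _ _).sub (haff p y)))
    exact hb.smooth.comp (by fun_prop)

theorem Fs_base (hb : GoodBump k r α β φ) (N : ℕ) : ∀ (l : ℝ), 0 < l → ∀ (p : Fin k → ℝ) (y : Y),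
    Fs r A φ N l p y p = y := by
  induction N with
  | zero => intro l _ p y; simp [Fs, affP]
  | succ N ih =>
    intro l hl p y
    have hp : childp r l p (fun _ => false) = p := by
      unfold childp; ext i; simp [indv]
    have h2 : ‖(r * l)⁻¹ • (p - childp r l p (fun _ => false)) - hv k‖ < α := by
      rw [hp, sub_self, smul_zero, zero_sub, norm_neg]
      refine lt_of_le_of_lt ?_ hb.αh
      rw [pi_norm_le_iff_of_nonneg (by norm_num)]
      intro i; simp only [hv]; norm_num
    rw [Fs_core hb N hl p y p _ h2, hp, ih _ (mul_pos hb.r0 hl)]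
    simp [affP]

end Recursion

section Estimates

variable {k : ℕ} {Y : Type*} [NormedAddCommGroup Y] [NormedSpace ℝ Y]

/-- the model bump -/
def Psi (φ : (Fin k → ℝ) → ℝ) (z : Fin k → ℝ) : Fin k → ℝ := φ z • z

/-- Bounds for the model bump. -/
structure PsiBound (φ : (Fin k → ℝ) → ℝ) (C : ℝ) : Prop where
  nonneg : 0 ≤ C
  b0 : ∀ z, ‖Psi φ z‖ ≤ C
  b1 : ∀ z, ‖fderiv ℝ (Psi φ) z‖ ≤ C
  b2 : ∀ z z', ‖fderiv ℝ (Psi φ) z - fderiv ℝ (Psi φ) z'‖ ≤ C * ‖z - z'‖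

theorem Psi_contDiff {φ : (Fin k → ℝ) → ℝ} (h : ContDiff ℝ 3 φ) : ContDiff ℝ 3 (Psi φ) :=
  h.smul contDiff_id

theorem exists_psiBound {φ : (Fin k → ℝ) → ℝ} (h : ContDiff ℝ 3 φ) (hc : HasCompactSupport φ) :
    ∃ C, PsiBound φ C := by
  have h1 := Psi_contDiff h
  have hcs : HasCompactSupport (Psi φ) := hc.smul_right
  have hcs' : HasCompactSupport (fderiv ℝ (Psi φ)) := hcs.fderiv ℝ
  have hfc : ContDiff ℝ 2 (fderiv ℝ (Psi φ)) := h1.fderiv_right (by norm_num)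
  obtain ⟨C0, hC0⟩ := hcs.exists_bound_of_continuous h1.continuous
  obtain ⟨C1, hC1⟩ := hcs'.exists_bound_of_continuous hfc.continuous
  obtain ⟨C2, hC2⟩ := hfc.lipschitzWith_of_hasCompactSupport hcs' (by norm_num)
  refine ⟨max (max C0 C1) C2, ?_, fun z => ?_, fun z => ?_, fun z z' => ?_⟩
  · exact C2.2.trans (le_max_right _ _)
  · exact (hC0 z).trans ((le_max_left _ _).trans (le_max_left _ _))
  · exact (hC1 z).trans ((le_max_right _ _).trans (le_max_left _ _))
  · have := hC2.dist_le_mul z z'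
    rw [dist_eq_norm, dist_eq_norm] at this
    refine this.trans ?_
    gcongr
    exact le_max_right _ _

/-- Lipschitz and bounded slope field. -/
structure GoodA (A : (Fin k → ℝ) → Y → ((Fin k → ℝ) →L[ℝ] Y)) (L a : ℝ) : Prop where
  L0 : 0 ≤ L
  a0 : 0 ≤ a
  lip : ∀ p y p' y', ‖A p y - A p' y'‖ ≤ L * (‖p - p'‖ + ‖y - y'‖)
  bd : ∀ p y, ‖A p y‖ ≤ a

variable {r α β : ℝ} {φ : (Fin k → ℝ) → ℝ} {A : (Fin k → ℝ) → Y → ((Fin k → ℝ) →L[ℝ] Y)}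
  {C L a : ℝ}

/-- slope difference -/
def slopeB (r : ℝ) (A : (Fin k → ℝ) → Y → ((Fin k → ℝ) →L[ℝ] Y)) (l : ℝ) (p : Fin k → ℝ) (y : Y)
    (τ : Fin k → Bool) : (Fin k → ℝ) →L[ℝ] Y :=
  A (childp r l p τ) (affP A p y (childp r l p τ)) - A p y

theorem norm_slopeB (hA : GoodA A L a) (h0 : 0 < r) (h1 : r < 1 / 2) {l : ℝ} (hl : 0 < l)
    (p : Fin k → ℝ) (y : Y) (τ : Fin k → Bool) :
    ‖slopeB r A l p y τ‖ ≤ L * (1 + a) * l := by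
  have h2 : ‖childp r l p τ - p‖ ≤ l := by
    unfold childp
    rw [add_sub_cancel_left, norm_smul, Real.norm_of_nonneg (by nlinarith)]
    have := norm_indv τ
    have := norm_nonneg (indv τ)
    have : l * (1 - r) ≤ l := by nlinarith
    have : 0 ≤ l * (1 - r) := by nlinarith
    nlinarith
  have h3 : ‖affP A p y (childp r l p τ) - y‖ ≤ a * l := by
    unfold affP
    rw [add_sub_cancel_left]
    refine ((A p y).le_opNorm _).trans ?_
    have := hA.bd p y
    have := hA.a0
    gcongr
  refine (hA.lip _ _ _ _).trans ?_
  have := hA.L0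
  calc _ ≤ L * (l + a * l) := by gcongr
    _ = _ := by ring

theorem Fs_one (h0 : 0 < r) {l : ℝ} (hl : 0 < l) (p : Fin k → ℝ) (y : Y) (x : Fin k → ℝ) :
    Fs r A φ 1 l p y x = affP A p y x + ∑ τ : Fin k → Bool,
      slopeB r A l p y τ ((r * l) • Psi φ ((r * l)⁻¹ • (x - childp r l p τ))) := by
  simp only [Fs]
  congr 1
  refine Finset.sum_congr rfl fun τ _ => ?_
  have h2 : affP A (childp r l p τ) (affP A p y (childp r l p τ)) x - affP A p y x
      = slopeB r A l p y τ (x - childp r l p τ) := by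
    unfold slopeB
    rw [sub_apply]
    generalize childp r l p τ = q
    have : A p y (x - p) = A p y (x - q) + A p y (q - p) := by rw [← map_add]; congr 1; abel
    unfold affP
    rw [this]
    abel
  have hne : r * l ≠ 0 := (mul_pos h0 hl).ne'
  rw [h2, ← map_smul]
  congr 1
  unfold Psi
  rw [smul_smul, smul_smul, mul_assoc, mul_comm _ (r * l)⁻¹, ← mul_assoc, mul_inv_cancel₀ hne,
    one_mul]

theorem affP_hasFDerivAt (p : Fin k → ℝ) (y : Y) (x : Fin k → ℝ) :
    HasFDerivAt (affP A p y) (A p y) x := by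
  unfold affP
  have h : HasFDerivAt (fun x : Fin k → ℝ => x - p) (ContinuousLinearMap.id ℝ _) x :=
    (hasFDerivAt_id x).sub_const p
  simpa using ((A p y).hasFDerivAt.comp x h).const_add y

theorem Fs_one_hasFDerivAt (hφ : ContDiff ℝ 3 φ) (h0 : 0 < r) {l : ℝ} (hl : 0 < l)
    (p : Fin k → ℝ) (y : Y) (x : Fin k → ℝ) :
    HasFDerivAt (Fs r A φ 1 l p y) (A p y + ∑ τ : Fin k → Bool,
      (slopeB r A l p y τ) ∘L (fderiv ℝ (Psi φ) ((r * l)⁻¹ • (x - childp r l p τ)))) x := by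
  have hne : r * l ≠ 0 := (mul_pos h0 hl).ne'
  have he : Fs r A φ 1 l p y = fun x => affP A p y x + ∑ τ : Fin k → Bool,
      slopeB r A l p y τ ((r * l) • Psi φ ((r * l)⁻¹ • (x - childp r l p τ))) :=
    funext fun x => Fs_one h0 hl p y x
  rw [he]
  refine (affP_hasFDerivAt p y x).add (HasFDerivAt.fun_sum fun τ _ => ?_)
  refine (slopeB r A l p y τ).hasFDerivAt.comp x ?_
  have h1 : HasFDerivAt (fun x : Fin k → ℝ => (r * l)⁻¹ • (x - childp r l p τ))
      ((r * l)⁻¹ • ContinuousLinearMap.id ℝ (Fin k → ℝ)) x :=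
    HasFDerivAt.fun_const_smul ((hasFDerivAt_id x).sub_const _) _
  have h2 : HasFDerivAt (Psi φ) (fderiv ℝ (Psi φ) ((r * l)⁻¹ • (x - childp r l p τ)))
      ((r * l)⁻¹ • (x - childp r l p τ)) :=
    (((Psi_contDiff hφ).differentiable (by norm_num)) _).hasFDerivAt
  have h3 := HasFDerivAt.fun_const_smul (h2.comp x h1) (r * l)
  have h4 : (r * l) • (fderiv ℝ (Psi φ) ((r * l)⁻¹ • (x - childp r l p τ)) ∘L
      ((r * l)⁻¹ • ContinuousLinearMap.id ℝ (Fin k → ℝ)))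
      = fderiv ℝ (Psi φ) ((r * l)⁻¹ • (x - childp r l p τ)) := by
    refine ContinuousLinearMap.ext fun v => ?_
    simp only [smul_apply, ContinuousLinearMap.comp_apply, ContinuousLinearMap.id_apply, map_smul]
    rw [smul_smul, mul_inv_cancel₀ hne, one_smul]
  rw [h4] at h3
  exact h3

/-- total constant -/
def Tc (k : ℕ) (C L a : ℝ) : ℝ := (Fintype.card (Fin k → Bool) : ℝ) * (L * (1 + a) * C)

theorem Tc_nonneg (hC : PsiBound φ C) (hA : GoodA A L a) : 0 ≤ Tc k C L a := by
  have := hC.nonneg; have := hA.L0; have := hA.a0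
  unfold Tc; positivity

theorem Fs_diff0 (hC : PsiBound φ C) (hA : GoodA A L a) (h0 : 0 < r) (h1 : r < 1 / 2) {l : ℝ}
    (hl : 0 < l) (hl1 : l ≤ 1) (p : Fin k → ℝ) (y : Y) (x : Fin k → ℝ) :
    ‖Fs r A φ 1 l p y x - Fs r A φ 0 l p y x‖ ≤ Tc k C L a * l := by
  rw [Fs_one h0 hl]
  simp only [Fs, add_sub_cancel_left]
  have : ∀ τ ∈ (Finset.univ : Finset (Fin k → Bool)),
      ‖slopeB r A l p y τ ((r * l) • Psi φ ((r * l)⁻¹ • (x - childp r l p τ)))‖ ≤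
        L * (1 + a) * l * C := by
    intro τ _
    refine (ContinuousLinearMap.le_opNorm _ _).trans ?_
    have h2 := norm_slopeB hA h0 h1 hl p y τ
    have h3 : ‖(r * l) • Psi φ ((r * l)⁻¹ • (x - childp r l p τ))‖ ≤ C := by
      rw [norm_smul, Real.norm_of_nonneg (by positivity)]
      have h4 := hC.b0 ((r * l)⁻¹ • (x - childp r l p τ))
      have h5 : r * l ≤ 1 := by nlinarith
      have h6 : 0 ≤ r * l := by positivity
      nlinarith [hC.nonneg, norm_nonneg (Psi φ ((r * l)⁻¹ • (x - childp r l p τ)))]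
    have := hA.L0; have := hA.a0
    gcongr
  refine (norm_sum_le_of_le _ this).trans (le_of_eq ?_)
  rw [Finset.sum_const, nsmul_eq_mul, Finset.card_univ]; unfold Tc; ring

theorem Fs_fdiff0 (hφ : ContDiff ℝ 3 φ) (hC : PsiBound φ C) (hA : GoodA A L a) (h0 : 0 < r)
    (h1 : r < 1 / 2) {l : ℝ}
    (hl : 0 < l) (p : Fin k → ℝ) (y : Y) (x : Fin k → ℝ) :
    ‖fderiv ℝ (Fs r A φ 1 l p y) x - fderiv ℝ (Fs r A φ 0 l p y) x‖ ≤ Tc k C L a * l := by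
  rw [(Fs_one_hasFDerivAt hφ h0 hl p y x).fderiv]
  simp only [Fs]
  rw [(affP_hasFDerivAt p y x).fderiv, add_sub_cancel_left]
  have : ∀ τ ∈ (Finset.univ : Finset (Fin k → Bool)),
      ‖(slopeB r A l p y τ) ∘L (fderiv ℝ (Psi φ) ((r * l)⁻¹ • (x - childp r l p τ)))‖ ≤
        L * (1 + a) * l * C := by
    intro τ _
    refine (ContinuousLinearMap.opNorm_comp_le _ _).trans ?_
    have h2 := norm_slopeB hA h0 h1 hl p y τ
    have h3 := hC.b1 ((r * l)⁻¹ • (x - childp r l p τ))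
    have := hA.L0; have := hA.a0
    gcongr
  refine (norm_sum_le_of_le _ this).trans (le_of_eq ?_)
  rw [Finset.sum_const, nsmul_eq_mul, Finset.card_univ]; unfold Tc; ring

theorem Fs_flip0 (hφ : ContDiff ℝ 3 φ) (hC : PsiBound φ C) (hA : GoodA A L a) (h0 : 0 < r)
    (h1 : r < 1 / 2) {l : ℝ}
    (hl : 0 < l) (p : Fin k → ℝ) (y : Y) (x x' : Fin k → ℝ) :
    ‖fderiv ℝ (Fs r A φ 1 l p y) x - fderiv ℝ (Fs r A φ 1 l p y) x'‖ ≤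
      Tc k C L a / r * ‖x - x'‖ := by
  rw [(Fs_one_hasFDerivAt hφ h0 hl p y x).fderiv, (Fs_one_hasFDerivAt hφ h0 hl p y x').fderiv,
    add_sub_add_left_eq_sub, ← Finset.sum_sub_distrib]
  have : ∀ τ ∈ (Finset.univ : Finset (Fin k → Bool)),
      ‖(slopeB r A l p y τ) ∘L (fderiv ℝ (Psi φ) ((r * l)⁻¹ • (x - childp r l p τ)))
        - (slopeB r A l p y τ) ∘L (fderiv ℝ (Psi φ) ((r * l)⁻¹ • (x' - childp r l p τ)))‖ ≤
        L * (1 + a) * l * (C * ((r * l)⁻¹ * ‖x - x'‖)) := by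
    intro τ _
    rw [← ContinuousLinearMap.comp_sub]
    refine (ContinuousLinearMap.opNorm_comp_le _ _).trans ?_
    have h2 := norm_slopeB hA h0 h1 hl p y τ
    have h3 := hC.b2 ((r * l)⁻¹ • (x - childp r l p τ)) ((r * l)⁻¹ • (x' - childp r l p τ))
    rw [← smul_sub, sub_sub_sub_cancel_right, norm_smul, Real.norm_of_nonneg (by positivity)] at h3
    have := hA.L0; have := hA.a0
    gcongr
  refine (norm_sum_le_of_le _ this).trans (le_of_eq ?_)
  rw [Finset.sum_const, nsmul_eq_mul, Finset.card_univ]; unfold Tc; field_simp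

theorem Fs_diff (hb : GoodBump k r α β φ) (hC : PsiBound φ C) (hA : GoodA A L a) (N : ℕ) :
    ∀ (l : ℝ), 0 < l → l ≤ 1 → ∀ (p : Fin k → ℝ) (y : Y) (x : Fin k → ℝ),
    ‖Fs r A φ (N + 1) l p y x - Fs r A φ N l p y x‖ ≤ Tc k C L a * l * r ^ N ∧
    ‖fderiv ℝ (Fs r A φ (N + 1) l p y) x - fderiv ℝ (Fs r A φ N l p y) x‖ ≤
      Tc k C L a * l * r ^ N := by
  have h0 := hb.r0
  have h1 := hb.r1
  have hT := Tc_nonneg hC hA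
  induction N with
  | zero =>
    intro l hl hl1 p y x
    simp only [pow_zero, mul_one]
    exact ⟨Fs_diff0 hC hA h0 h1 hl hl1 p y x, Fs_fdiff0 hb.smooth hC hA h0 h1 hl p y x⟩
  | succ N ih =>
    intro l hl hl1 p y x
    rcases Fs_cases (A := A) hb hl p y x with ⟨τ, h⟩ | h
    · rw [(h (N + 1)).eq_of_nhds, (h N).eq_of_nhds, (h (N + 1)).fderiv_eq, (h N).fderiv_eq]
      have := ih (r * l) (by positivity) (by nlinarith) (childp r l p τ)
        (affP A p y (childp r l p τ)) x
      rwa [show Tc k C L a * (r * l) * r ^ N = Tc k C L a * l * r ^ (N + 1) by ring] at this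
    · rw [(h (N + 1)).eq_of_nhds, (h N).eq_of_nhds, (h (N + 1)).fderiv_eq, (h N).fderiv_eq]
      simp only [sub_self, norm_zero]
      exact ⟨by positivity, by positivity⟩

theorem Fs_second (hb : GoodBump k r α β φ) (hC : PsiBound φ C) (hA : GoodA A L a) (N : ℕ) :
    ∀ (l : ℝ), 0 < l → ∀ (p : Fin k → ℝ) (y : Y) (x : Fin k → ℝ),
    ‖fderiv ℝ (fderiv ℝ (Fs r A φ N l p y)) x‖ ≤ Tc k C L a / r := by
  have h0 := hb.r0
  have h1 := hb.r1
  have hT := Tc_nonneg hC hA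
  induction N with
  | zero =>
    intro l hl p y x
    have : fderiv ℝ (Fs r A φ 0 l p y) = fun _ => A p y :=
      funext fun x => (affP_hasFDerivAt p y x).fderiv
    rw [this]
    have h2 := norm_fderiv_le_of_lipschitz ℝ (x₀ := x)
      (LipschitzWith.const (α := Fin k → ℝ) (A p y))
    exact h2.trans (by simp only [NNReal.coe_zero]; positivity)
  | succ N ih =>
    intro l hl p y x
    rcases Fs_cases (A := A) hb hl p y x with ⟨τ, h⟩ | h
    · rw [(h N).fderiv.fderiv_eq]
      exact ih _ (by positivity) _ _ _
    · rw [(h N).fderiv.fderiv_eq]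
      have hnn : 0 ≤ Tc k C L a / r := by positivity
      have : LipschitzWith (Tc k C L a / r).toNNReal (fderiv ℝ (Fs r A φ 1 l p y)) := by
        refine LipschitzWith.of_dist_le_mul fun x x' => ?_
        rw [dist_eq_norm, dist_eq_norm, Real.coe_toNNReal _ hnn]
        exact Fs_flip0 hb.smooth hC hA h0 h1 hl p y x x'
      have h2 := norm_fderiv_le_of_lipschitz ℝ (x₀ := x) this
      rwa [Real.coe_toNNReal _ hnn] at h2

theorem Fs_tang (hb : GoodBump k r α β φ) (hA : GoodA A L a) (N : ℕ) :
    ∀ (l : ℝ), 0 < l → ∀ (p : Fin k → ℝ) (y : Y) (u : Fin k → ℝ), u ∈ cantk k r →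
    ‖fderiv ℝ (Fs r A φ N l p y) (p + l • u) - A (p + l • u) (Fs r A φ N l p y (p + l • u))‖ ≤
      L * (1 + a) * l * r ^ N := by
  have h0 := hb.r0
  have h1 := hb.r1
  have hL := hA.L0
  have ha := hA.a0
  induction N with
  | zero =>
    intro l hl p y u hu
    simp only [Fs, pow_zero, mul_one]
    rw [(affP_hasFDerivAt p y _).fderiv]
    have hu1 : ‖u‖ ≤ 1 := by
      rw [pi_norm_le_iff_of_nonneg (by norm_num)]
      intro i
      have := cant_mem h0 (by linarith) (hu i)
      rw [Real.norm_of_nonneg this.1]; exact this.2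
    have hlu : ‖l • u‖ ≤ l := by
      rw [norm_smul, Real.norm_of_nonneg hl.le]; nlinarith
    refine (hA.lip _ _ _ _).trans ?_
    have h2 : ‖p - (p + l • u)‖ ≤ l := by
      rw [sub_add_cancel_left, norm_neg]; exact hlu
    have h3 : ‖y - affP A p y (p + l • u)‖ ≤ a * l := by
      unfold affP
      rw [sub_add_cancel_left, norm_neg, add_sub_cancel_left]
      refine ((A p y).le_opNorm _).trans ?_
      have := hA.bd p y
      gcongr
    calc _ ≤ L * (l + a * l) := by gcongr
      _ = _ := by ring
  | succ N ih =>
    intro l hl p y u hu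
    have : ∀ i, _ := fun i => cant_split h0 (by linarith : r < 1) (hu i)
    choose τ v hv' huv using this
    have hx : p + l • u = childp r l p τ + (r * l) • v := by
      unfold childp
      ext i
      simp only [Pi.add_apply, Pi.smul_apply, smul_eq_mul, indv]
      rw [huv i]; ring
    have hne : r * l ≠ 0 := by positivity
    have hcore : ‖(r * l)⁻¹ • (p + l • u - childp r l p τ) - hv k‖ < α := by
      rw [hx, add_sub_cancel_left, smul_smul, inv_mul_cancel₀ hne, one_smul]
      refine lt_of_le_of_lt ?_ hb.αh
      rw [pi_norm_le_iff_of_nonneg (by norm_num)]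
      intro i
      have := cant_mem h0 (by linarith) (hv' i)
      simp only [Pi.sub_apply, hv, Real.norm_eq_abs, abs_le]
      constructor <;> linarith
    have hev := Fs_core_ev (A := A) hb hl p y _ τ hcore N
    rw [hev.fderiv_eq, hev.eq_of_nhds]
    have := ih (r * l) (by positivity) (childp r l p τ) (affP A p y (childp r l p τ)) v hv'
    rw [← hx] at this
    refine this.trans (le_of_eq ?_)
    ring

theorem exists_F0 (k : ℕ) (Y : Type*) [NormedAddCommGroup Y] [NormedSpace ℝ Y] [CompleteSpace Y]
    {r : ℝ} (h0 : 0 < r) (h1 : r < 1 / 2) (L a : ℝ) :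
    ∃ M : ℝ, 0 ≤ M ∧ ∀ A : (Fin k → ℝ) → Y → ((Fin k → ℝ) →L[ℝ] Y), GoodA A L a →
      ∃ (F : (Fin k → ℝ) → Y) (F' : (Fin k → ℝ) → ((Fin k → ℝ) →L[ℝ] Y)),
        (∀ x, HasFDerivAt F (F' x) x) ∧ (∀ x, ‖F' x‖ ≤ M) ∧
        (∀ x x', ‖F' x - F' x'‖ ≤ M * ‖x - x'‖) ∧ F 0 = 0 ∧
        ∀ x ∈ cantk k r, F' x = A x (F x) := by
  obtain ⟨α, β, φ, hb, hcs⟩ := exists_goodBump k h0 h1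
  obtain ⟨C, hC⟩ := exists_psiBound hb.smooth hcs
  have h1r : 0 < 1 - r := by linarith
  set T := Tc k C L a with hTdef
  refine ⟨max 0 (max (a + T / (1 - r)) (T / r)), le_max_left _ _, fun A hA => ?_⟩
  have hT : 0 ≤ T := Tc_nonneg hC hA
  set f : ℕ → (Fin k → ℝ) → Y := fun N => Fs r A φ N 1 0 0 with hf
  have hd : ∀ N x, dist (f N x) (f (N + 1) x) ≤ T * r ^ N := fun N x => by
    have := (Fs_diff hb hC hA N 1 one_pos le_rfl 0 0 x).1
    rw [dist_comm, dist_eq_norm]; simpa using this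
  have hd' : ∀ N x, dist (fderiv ℝ (f N) x) (fderiv ℝ (f (N + 1)) x) ≤ T * r ^ N := fun N x => by
    have := (Fs_diff hb hC hA N 1 one_pos le_rfl 0 0 x).2
    rw [dist_comm, dist_eq_norm]; simpa using this
  have hlim : ∀ x, ∃ y, Tendsto (fun N => f N x) atTop (𝓝 y) := fun x =>
    cauchySeq_tendsto_of_complete
      (cauchySeq_of_le_geometric r T (by linarith) (fun N => hd N x))
  have hlim' : ∀ x, ∃ y, Tendsto (fun N => fderiv ℝ (f N) x) atTop (𝓝 y) := fun x =>
    cauchySeq_tendsto_of_complete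
      (cauchySeq_of_le_geometric r T (by linarith) (fun N => hd' N x))
  choose F hF using hlim
  choose F' hF' using hlim'
  have hr0 : Tendsto (fun N : ℕ => r ^ N) atTop (𝓝 0) :=
    tendsto_pow_atTop_nhds_zero_of_lt_one h0.le (by linarith)
  have hsm : ∀ N, ContDiff ℝ 3 (f N) := fun N => Fs_contDiff hb N 1 0 0
  refine ⟨F, F', ?_, ?_, ?_, ?_, ?_⟩
  · refine hasFDerivAt_of_tendstoUniformly (f := f) (f' := fun N => fderiv ℝ (f N)) (l := atTop)
      ?_ ?_ hF
    · rw [Metric.tendstoUniformly_iff]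
      intro ε hε
      have h2 : Tendsto (fun N : ℕ => T * r ^ N / (1 - r)) atTop (𝓝 0) := by
        simpa using (hr0.const_mul T).div_const (1 - r)
      filter_upwards [h2.eventually_lt_const hε] with N hN x
      rw [dist_comm]
      exact (dist_le_of_le_geometric_of_tendsto r T (by linarith) (fun N => hd' N x) (hF' x) N).trans_lt hN
    · intro N x
      exact ((hsm N).differentiable (by norm_num) x).hasFDerivAt
  · intro x
    have h2 := dist_le_of_le_geometric_of_tendsto r T (by linarith) (fun N => hd' N x) (hF' x) 0
    have h3 : fderiv ℝ (f 0) x = A 0 0 := (affP_hasFDerivAt 0 0 x).fderiv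
    rw [h3, dist_eq_norm, pow_zero, mul_one] at h2
    have h4 := hA.bd 0 0
    have h5 : ‖F' x‖ ≤ ‖A 0 0‖ + ‖A 0 0 - F' x‖ := by
      have := norm_sub_le (A 0 0) (A 0 0 - F' x)
      simpa using this
    exact (by linarith : ‖F' x‖ ≤ a + T / (1 - r)).trans
      ((le_max_left _ _).trans (le_max_right _ _))
  · intro x x'
    have h2 : ∀ N, ‖fderiv ℝ (f N) x - fderiv ℝ (f N) x'‖ ≤ T / r * ‖x - x'‖ := by
      intro N
      have hnn : 0 ≤ T / r := by positivity
      have hlip : LipschitzWith (T / r).toNNReal (fderiv ℝ (f N)) := by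
        refine lipschitzWith_of_nnnorm_fderiv_le (𝕜 := ℝ) ?_ fun x => ?_
        · exact ((hsm N).fderiv_right (m := 2) (by norm_num)).differentiable (by norm_num)
        · rw [← NNReal.coe_le_coe, coe_nnnorm, Real.coe_toNNReal _ hnn]
          exact Fs_second hb hC hA N 1 one_pos 0 0 x
      have := hlip.dist_le_mul x x'
      rwa [dist_eq_norm, dist_eq_norm, Real.coe_toNNReal _ hnn] at this
    have h3 := le_of_tendsto ((hF' x).sub (hF' x')).norm (Eventually.of_forall h2)
    refine h3.trans ?_
    gcongr
    exact (le_max_right _ _).trans (le_max_right _ _)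
  · have h2 : ∀ N, f N 0 = 0 := fun N => Fs_base hb N 1 one_pos 0 0
    refine tendsto_nhds_unique (hF 0) ?_
    simp [h2]
  · intro x hx
    have h2 : ∀ N, ‖fderiv ℝ (f N) x - A x (f N x)‖ ≤ L * (1 + a) * r ^ N := fun N => by
      simpa using Fs_tang hb hA N 1 one_pos 0 0 x hx
    have hAc : Continuous (A x) := by
      have : LipschitzWith L.toNNReal (A x) := by
        refine LipschitzWith.of_dist_le_mul fun y y' => ?_
        rw [dist_eq_norm, dist_eq_norm, Real.coe_toNNReal _ hA.L0]
        simpa using hA.lip x y x y'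
      exact this.continuous
    have h3 := ((hF' x).sub ((hAc.tendsto _).comp (hF x))).norm
    have h4 : Tendsto (fun N : ℕ => L * (1 + a) * r ^ N) atTop (𝓝 0) := by
      simpa using hr0.const_mul (L * (1 + a))
    have h5 := le_of_tendsto_of_tendsto h3 h4 (Eventually.of_forall h2)
    exact sub_eq_zero.1 (norm_le_zero_iff.1 h5)

end Estimates

section Core

/-- one-dimensional cells -/
def cell (r : ℝ) : Option (ℚ × Bool) → Set ℝ
  | none => cant r
  | some (s, true) => {t | infDist t (cant r) = infDist (s : ℝ) (cant r) + (t - s) ∧ (s : ℝ) ≤ t}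
  | some (s, false) => {t | infDist t (cant r) = infDist (s : ℝ) (cant r) + (s - t) ∧ t ≤ (s : ℝ)}

theorem cell_cover {r : ℝ} (h0 : 0 < r) (h1 : r < 1) (t : ℝ) : ∃ o, t ∈ cell r o := by
  by_cases ht : t ∈ cant r
  · exact ⟨none, ht⟩
  obtain ⟨q, hq, hd⟩ := (cant_compact h0 h1).exists_infDist_eq_dist ⟨0, cant_zero r⟩ t
  have hne : q ≠ t := fun h => ht (h ▸ hq)
  rw [Real.dist_eq] at hd
  rcases lt_or_gt_of_ne hne with h | h
  · obtain ⟨s, hs1, hs2⟩ := exists_rat_btwn h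
    refine ⟨some (s, true), ?_, hs2.le⟩
    have h2 : infDist t (cant r) ≤ infDist (s : ℝ) (cant r) + dist t s := infDist_le_infDist_add_dist
    have h3 : infDist (s : ℝ) (cant r) ≤ dist (s : ℝ) q := infDist_le_dist_of_mem hq
    rw [Real.dist_eq, abs_of_pos (by linarith)] at h2 h3
    rw [abs_of_pos (by linarith)] at hd
    linarith
  · obtain ⟨s, hs1, hs2⟩ := exists_rat_btwn h
    refine ⟨some (s, false), ?_, hs1.le⟩
    have h2 : infDist t (cant r) ≤ infDist (s : ℝ) (cant r) + dist t s := infDist_le_infDist_add_dist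
    have h3 : infDist (s : ℝ) (cant r) ≤ dist (s : ℝ) q := infDist_le_dist_of_mem hq
    rw [Real.dist_eq, abs_of_neg (by linarith)] at h2 h3
    rw [abs_of_neg (by linarith)] at hd
    linarith

theorem cell_diff {r : ℝ} {o : Option (ℚ × Bool)} (ho : o ≠ none) {t t' : ℝ} (ht : t ∈ cell r o)
    (ht' : t' ∈ cell r o) : |t - t'| = |infDist t (cant r) - infDist t' (cant r)| := by
  match o, ho with
  | some (s, true), _ =>
    have h1 : infDist t (cant r) = _ := ht.1
    have h2 : infDist t' (cant r) = _ := ht'.1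
    rw [h1, h2]; congr 1; ring
  | some (s, false), _ =>
    have h1 : infDist t (cant r) = _ := ht.1
    have h2 : infDist t' (cant r) = _ := ht'.1
    rw [h1, h2, abs_sub_comm t t']; congr 1; ring

theorem dimH_le_of_cells (k : ℕ) {r : ℝ} (h0 : 0 < r) (h1 : r < 1) (T : Set (Fin k → ℝ))
    (hT : ∀ x ∈ T, ∀ x' ∈ T, ∀ i,
      |infDist (x i) (cant r) - infDist (x' i) (cant r)| ≤ 1 / 2 * ‖x - x'‖) :
    dimH T ≤ dimH (cantk k r) := by
  have hcov : T = ⋃ o : Fin k → Option (ℚ × Bool), T ∩ {x | ∀ i, x i ∈ cell r (o i)} := by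
    ext x
    simp only [mem_iUnion, mem_inter_iff, mem_ofPred_eq]
    constructor
    · intro hx
      choose o ho using fun i => cell_cover h0 h1 (x i)
      exact ⟨o, hx, ho⟩
    · rintro ⟨o, hx, _⟩; exact hx
  rw [hcov, dimH_iUnion]
  refine iSup_le fun o => ?_
  classical
  set S := T ∩ {x | ∀ i, x i ∈ cell r (o i)} with hS
  let π : (Fin k → ℝ) → (Fin k → ℝ) := fun x i => if o i = none then x i else 0
  have hπ : ∀ x ∈ S, ∀ x' ∈ S, ‖x - x'‖ ≤ ‖π x - π x'‖ := by
    intro x hx x' hx'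
    have h2 : ‖x - x'‖ ≤ max (1 / 2 * ‖x - x'‖) ‖π x - π x'‖ := by
      rw [pi_norm_le_iff_of_nonneg (le_max_of_le_right (norm_nonneg _))]
      intro i
      by_cases hi : o i = none
      · refine le_max_of_le_right ?_
        have := norm_le_pi_norm (π x - π x') i
        simpa [π, hi] using this
      · refine le_max_of_le_left ?_
        rw [Pi.sub_apply, Real.norm_eq_abs, cell_diff hi (hx.2 i) (hx'.2 i)]
        exact hT x hx.1 x' hx'.1 i
    rcases le_max_iff.1 h2 with h | h
    · have := norm_nonneg (x - x')
      have := norm_nonneg (π x - π x')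
      linarith
    · exact h
  have hinj : InjOn π S := by
    intro x hx x' hx' h
    have := hπ x hx x' hx'
    rw [h, sub_self, norm_zero] at this
    exact sub_eq_zero.1 (norm_le_zero_iff.1 this)
  have hl : LipschitzOnWith 1 (Function.invFunOn π S) (π '' S) := by
    refine LipschitzOnWith.of_dist_le_mul ?_
    rintro _ ⟨x, hx, rfl⟩ _ ⟨x', hx', rfl⟩
    rw [hinj.leftInvOn_invFunOn hx, hinj.leftInvOn_invFunOn hx', dist_eq_norm, dist_eq_norm]
    simpa using hπ x hx x' hx'
  have h3 := hl.dimH_image_le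
  rw [hinj.leftInvOn_invFunOn.image_image] at h3
  refine h3.trans (dimH_mono ?_)
  rintro _ ⟨x, hx, rfl⟩ i
  by_cases hi : o i = none
  · have := hx.2 i
    rw [hi] at this
    simp only [π, hi, if_true]
    exact this
  · simp only [π, hi, if_false]; exact cant_zero r

theorem dimH_cantk_ball (k : ℕ) {r : ℝ} (h0 : 0 < r) (h1 : r < 1) {ρ : ℝ} (hρ : 0 < ρ) :
    dimH (cantk k r) ≤ dimH (cantk k r ∩ ball 0 ρ) := by
  obtain ⟨J, hJ⟩ := exists_pow_lt_of_lt_one hρ h1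
  have hpos : 0 < r ^ J := by positivity
  have hsub : cantk k r ⊆ (fun x => (r ^ J)⁻¹ • x) '' (cantk k r ∩ ball 0 ρ) := by
    intro x hx
    refine ⟨r ^ J • x, ⟨?_, ?_⟩, ?_⟩
    · have : ∀ J : ℕ, r ^ J • x ∈ cantk k r := by
        intro J
        induction J with
        | zero => simpa using hx
        | succ J ih =>
          intro i
          have := cant_smul h0 h1 (ih i)
          simp only [Pi.smul_apply, smul_eq_mul] at this ⊢
          rw [pow_succ']; rwa [mul_assoc]
      exact this J
    · rw [mem_ball_zero_iff, norm_smul, Real.norm_of_nonneg hpos.le]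
      have : ‖x‖ ≤ 1 := by
        rw [pi_norm_le_iff_of_nonneg zero_le_one]
        intro i
        have := cant_mem h0 h1 (hx i)
        rw [Real.norm_of_nonneg this.1]; exact this.2
      nlinarith
    · simp [smul_smul, hpos.ne']
  refine (dimH_mono hsub).trans ?_
  exact (lipschitzWith_smul (r ^ J)⁻¹).dimH_image_le _

/-- truncated distance -/
def eta (r ρ t : ℝ) : ℝ := min (infDist t (cant r)) ρ

theorem eta_cont (r ρ : ℝ) : Continuous (eta r ρ) := (continuous_infDist_pt _).min continuous_const

theorem eta_lip (r ρ t t' : ℝ) : |eta r ρ t - eta r ρ t'| ≤ |t - t'| := by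
  unfold eta
  refine (abs_min_sub_min_le_max _ _ _ _).trans ?_
  rw [sub_self, abs_zero, max_eq_left (abs_nonneg _)]
  have := (lipschitz_infDist_pt (cant r)).dist_le_mul t t'
  simpa [Real.dist_eq] using this

theorem eta_nonneg {r ρ : ℝ} (hρ : 0 ≤ ρ) (t : ℝ) : 0 ≤ eta r ρ t := le_min infDist_nonneg hρ

theorem eta_le (r ρ t : ℝ) : eta r ρ t ≤ ρ := min_le_right _ _

theorem eta_zero {r ρ t : ℝ} (hρ : 0 ≤ ρ) (ht : t ∈ cant r) : eta r ρ t = 0 := by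
  unfold eta; rw [infDist_zero_of_mem ht]; exact min_eq_left hρ

theorem eta_small {r ρ t : ℝ} (ht : |t| < ρ) : eta r ρ t = infDist t (cant r) := by
  refine min_eq_left ?_
  have := infDist_le_dist_of_mem (x := t) (cant_zero r)
  rw [Real.dist_eq, sub_zero] at this
  linarith

/-- the corrector -/
def Gam (k : ℕ) (r ρ : ℝ) (x : Fin k → ℝ) : ℝ := ∑ i, ∫ t in (0:ℝ)..(x i), eta r ρ t

/-- its derivative -/
def Gam' (k : ℕ) (r ρ : ℝ) (x : Fin k → ℝ) : (Fin k → ℝ) →L[ℝ] ℝ :=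
  ∑ i, eta r ρ (x i) • ContinuousLinearMap.proj (R := ℝ) (φ := fun _ : Fin k => ℝ) i

theorem Gam_hasFDerivAt (k : ℕ) (r ρ : ℝ) (x : Fin k → ℝ) :
    HasFDerivAt (Gam k r ρ) (Gam' k r ρ x) x := by
  unfold Gam Gam'
  refine HasFDerivAt.fun_sum fun i _ => ?_
  have h1 : HasDerivAt (fun u => ∫ t in (0:ℝ)..u, eta r ρ t) (eta r ρ (x i)) (x i) :=
    intervalIntegral.integral_hasDerivAt_right ((eta_cont r ρ).intervalIntegrable _ _)
      ((eta_cont r ρ).stronglyMeasurableAtFilter _ _) (eta_cont r ρ).continuousAt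
  exact h1.comp_hasFDerivAt x (ContinuousLinearMap.proj (R := ℝ) (φ := fun _ : Fin k => ℝ) i).hasFDerivAt

theorem Gam_zero (k : ℕ) (r ρ : ℝ) : Gam k r ρ 0 = 0 := by simp [Gam]

theorem norm_proj_le' {k : ℕ} (i : Fin k) :
    ‖ContinuousLinearMap.proj (R := ℝ) (φ := fun _ : Fin k => ℝ) i‖ ≤ 1 :=
  ContinuousLinearMap.opNorm_le_bound _ zero_le_one fun x => by
    rw [one_mul]; exact norm_le_pi_norm x i

theorem Gam'_bd (k : ℕ) {r ρ : ℝ} (hρ : 0 ≤ ρ) (x : Fin k → ℝ) : ‖Gam' k r ρ x‖ ≤ k * ρ := by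
  unfold Gam'
  have : ∀ i ∈ (Finset.univ : Finset (Fin k)),
      ‖eta r ρ (x i) • ContinuousLinearMap.proj (R := ℝ) (φ := fun _ : Fin k => ℝ) i‖ ≤ ρ := by
    intro i _
    rw [norm_smul, Real.norm_of_nonneg (eta_nonneg hρ _)]
    have := norm_proj_le' i
    have := eta_le r ρ (x i)
    have := eta_nonneg (r := r) hρ (x i)
    nlinarith [norm_nonneg (ContinuousLinearMap.proj (R := ℝ) (φ := fun _ : Fin k => ℝ) i)]
  refine (norm_sum_le_of_le _ this).trans (le_of_eq ?_)
  simp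

theorem Gam'_lip (k : ℕ) (r ρ : ℝ) (x x' : Fin k → ℝ) :
    ‖Gam' k r ρ x - Gam' k r ρ x'‖ ≤ k * ‖x - x'‖ := by
  unfold Gam'
  rw [← Finset.sum_sub_distrib]
  have : ∀ i ∈ (Finset.univ : Finset (Fin k)),
      ‖eta r ρ (x i) • ContinuousLinearMap.proj (R := ℝ) (φ := fun _ : Fin k => ℝ) i -
        eta r ρ (x' i) • ContinuousLinearMap.proj (R := ℝ) (φ := fun _ : Fin k => ℝ) i‖
        ≤ ‖x - x'‖ := by
    intro i _
    have h1 := norm_proj_le' i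
    revert h1
    generalize ContinuousLinearMap.proj (R := ℝ) (φ := fun _ : Fin k => ℝ) i = P
    intro h1
    have h4 : eta r ρ (x i) • P - eta r ρ (x' i) • P = (eta r ρ (x i) - eta r ρ (x' i)) • P :=
      (sub_smul _ _ _).symm
    rw [h4, norm_smul, Real.norm_eq_abs]
    have h2 := eta_lip r ρ (x i) (x' i)
    have h3 := norm_le_pi_norm (x - x') i
    rw [Pi.sub_apply, Real.norm_eq_abs] at h3
    have := abs_nonneg (eta r ρ (x i) - eta r ρ (x' i))
    nlinarith [norm_nonneg P]
  refine (norm_sum_le_of_le _ this).trans (le_of_eq ?_)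
  simp

theorem Gam'_single (k : ℕ) (r ρ : ℝ) (x : Fin k → ℝ) (i : Fin k) :
    Gam' k r ρ x (Pi.single i 1) = eta r ρ (x i) := by
  unfold Gam'
  simp [Pi.single_apply]

theorem lip_of_hasFDerivAt {E Y : Type*} [NormedAddCommGroup E] [NormedSpace ℝ E]
    [NormedAddCommGroup Y] [NormedSpace ℝ Y] {f : E → Y} {f' : E → E →L[ℝ] Y} {M : ℝ}
    (h : ∀ x, HasFDerivAt f (f' x) x) (hM : ∀ x, ‖f' x‖ ≤ M) (x x' : E) :
    ‖f x - f x'‖ ≤ M * ‖x - x'‖ :=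
  convex_univ.norm_image_sub_le_of_norm_hasFDerivWithin_le
    (fun z _ => (h z).hasFDerivWithinAt) (fun z _ => hM z) (mem_univ x') (mem_univ x)

theorem core_pos (k : ℕ) (Y : Type*) [NormedAddCommGroup Y] [NormedSpace ℝ Y] [CompleteSpace Y]
    [Nontrivial Y] {L a : ℝ} (A : (Fin k → ℝ) → Y → ((Fin k → ℝ) →L[ℝ] Y)) (hA : GoodA A L a)
    {d : ℝ} (hd : 0 < d) (hdk : d < k) :
    ∃ (F : (Fin k → ℝ) → Y) (F' : (Fin k → ℝ) → ((Fin k → ℝ) →L[ℝ] Y)) (M : ℝ),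
      (∀ x, HasFDerivAt F (F' x) x) ∧ (∀ x x', ‖F' x - F' x'‖ ≤ M * ‖x - x'‖) ∧ F 0 = 0 ∧
      ∃ ρ₀ > 0, ∀ ρ > 0, ρ ≤ ρ₀ →
        dimH {x | x ∈ ball (0 : Fin k → ℝ) ρ ∧ F' x = A x (F x)} = ENNReal.ofReal d := by
  have hk : (0 : ℝ) < k := hd.trans hdk
  set s := d / k with hs
  have hs0 : 0 < s := by positivity
  have hs1 : s < 1 := by rw [hs, div_lt_one hk]; exact hdk
  set r : ℝ := (1 / 2 : ℝ) ^ (1 / s) with hr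
  have h0 : 0 < r := by positivity
  have hrs : r ^ s = 1 / 2 := by
    rw [hr, ← Real.rpow_mul (by norm_num), one_div_mul_cancel hs0.ne', Real.rpow_one]
  have h1 : r < 1 / 2 := by
    have : (1 / 2 : ℝ) ^ (1 / s) < (1 / 2 : ℝ) ^ (1 : ℝ) :=
      Real.rpow_lt_rpow_of_exponent_gt (by norm_num) (by norm_num) ((one_lt_div hs0).2 hs1)
    rwa [Real.rpow_one] at this
  have hsk : s * k = d := by rw [hs]; field_simp
  have hL := hA.L0
  obtain ⟨M, hM0, hM⟩ := exists_F0 k Y h0 h1 (L * (1 + k)) a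
  obtain ⟨e, he⟩ := exists_norm_eq Y (zero_le_one (α := ℝ))
  set M2 := M + L * (1 + k) * (1 + M) with hM2
  have hM2' : 0 ≤ M2 := by positivity
  set K := 2 * (M2 + 1) with hK
  have hK0 : 0 < K := by positivity
  set ρ₁ := 1 / K with hρ₁
  have hρ0 : 0 < ρ₁ := by positivity
  have hKρ : K * ρ₁ = 1 := by rw [hρ₁]; field_simp
  set G := Gam k r ρ₁ with hG
  set G' := Gam' k r ρ₁ with hG'
  have hGl : ∀ x x', ‖G x - G x'‖ ≤ k * ρ₁ * ‖x - x'‖ :=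
    lip_of_hasFDerivAt (Gam_hasFDerivAt k r ρ₁) (Gam'_bd k hρ0.le)
  set A' : (Fin k → ℝ) → Y → ((Fin k → ℝ) →L[ℝ] Y) := fun x y => A x (y + (K * G x) • e) with hA'
  have hgood : GoodA A' (L * (1 + k)) a := by
    refine ⟨by positivity, hA.a0, fun p y p' y' => ?_, fun p y => hA.bd _ _⟩
    refine (hA.lip _ _ _ _).trans ?_
    rw [mul_assoc L]
    refine mul_le_mul_of_nonneg_left ?_ hL
    have h2 : ‖y + (K * G p) • e - (y' + (K * G p') • e)‖ ≤ ‖y - y'‖ + k * ‖p - p'‖ := by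
      rw [add_sub_add_comm, ← sub_smul, ← mul_sub]
      refine (norm_add_le _ _).trans ?_
      gcongr
      rw [norm_smul, he, mul_one, norm_mul, Real.norm_of_nonneg hK0.le]
      calc K * ‖G p - G p'‖ ≤ K * (k * ρ₁ * ‖p - p'‖) := by gcongr; exact hGl p p'
        _ = (K * ρ₁) * (k * ‖p - p'‖) := by ring
        _ = _ := by rw [hKρ, one_mul]
    have := norm_nonneg (y - y')
    have := norm_nonneg (p - p')
    nlinarith
  obtain ⟨F, F', hF, hFb, hFl, hF0, hFt⟩ := hM A' hgood
  have hFlip := lip_of_hasFDerivAt hF hFb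
  refine ⟨fun x => F x + (K * G x) • e, fun x => F' x + (K • G' x).smulRight e, M + K * k, ?_, ?_, ?_,
    ρ₁, hρ0, ?_⟩
  · intro x
    exact (hF x).add (((Gam_hasFDerivAt k r ρ₁ x).const_mul K).smul_const e)
  · intro x x'
    have h2 : F' x + (K • G' x).smulRight e - (F' x' + (K • G' x').smulRight e)
        = (F' x - F' x') + (K • (G' x - G' x')).smulRight e := by
      refine ContinuousLinearMap.ext fun v => ?_
      simp [sub_smul, mul_sub]
      abel
    rw [h2]
    refine (norm_add_le _ _).trans ?_
    rw [add_mul]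
    refine add_le_add (hFl x x') ?_
    rw [ContinuousLinearMap.norm_smulRight_apply, he, mul_one, norm_smul, Real.norm_of_nonneg hK0.le,
      mul_assoc K]
    refine mul_le_mul_of_nonneg_left ?_ hK0.le
    exact Gam'_lip k r ρ₁ x x'
  · simp [hF0, hG, Gam_zero]
  · intro ρ hρ hρρ
    have hcle : dimH (cantk k r) = ENNReal.ofReal d := by
      rw [← hsk]
      exact le_antisymm (dimH_cantk_le k h0 h1 hs0 hrs) (le_dimH_cantk k h0 h1 hs0 hrs)
    rw [← hcle]
    refine le_antisymm (dimH_le_of_cells k h0 (by linarith) _ ?_) ?_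
    · rintro x ⟨hx, hxt⟩ x' ⟨hx', hxt'⟩ i
      have hsm : ∀ z ∈ ball (0 : Fin k → ℝ) ρ, eta r ρ₁ (z i) = infDist (z i) (cant r) := by
        intro z hz
        rw [mem_ball_zero_iff] at hz
        refine eta_small ?_
        have := norm_le_pi_norm z i
        rw [Real.norm_eq_abs] at this
        linarith
      rw [← hsm x hx, ← hsm x' hx']
      have key : ∀ z, F' z + (K • G' z).smulRight e = A z (F z + (K * G z) • e) →
          (A' z (F z) - F' z) (Pi.single i 1) = (K * eta r ρ₁ (z i)) • e := by
        intro z hz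
        have h2 : A' z (F z) - F' z = (K • G' z).smulRight e := by
          simp only [hA']
          rw [← hz]; abel
        rw [h2, ContinuousLinearMap.smulRight_apply, smul_apply, hG', Gam'_single, smul_eq_mul]
      have e1 := key x hxt
      have e2 := key x' hxt'
      have hn : ‖(Pi.single i 1 : Fin k → ℝ)‖ ≤ 1 := by
        rw [Pi.norm_single]; simp
      have e3 : ‖(A' x (F x) - F' x - (A' x' (F x') - F' x')) (Pi.single i 1)‖ ≤ M2 * ‖x - x'‖ := by
        refine (ContinuousLinearMap.le_opNorm _ _).trans ?_
        have h3 : ‖A' x (F x) - F' x - (A' x' (F x') - F' x')‖ ≤ M2 * ‖x - x'‖ := by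
          rw [sub_sub_sub_comm]
          refine (norm_sub_le _ _).trans ?_
          have h4 := hgood.lip x (F x) x' (F x')
          have h5 := hFl x x'
          have h6 := hFlip x x'
          have h7 : L * (1 + k) * (‖x - x'‖ + ‖F x - F x'‖) ≤
            L * (1 + k) * (‖x - x'‖ + M * ‖x - x'‖) := by gcongr
          rw [hM2]; nlinarith
        have := norm_nonneg (A' x (F x) - F' x - (A' x' (F x') - F' x'))
        nlinarith [norm_nonneg (Pi.single i 1 : Fin k → ℝ)]
      rw [sub_apply, e1, e2, ← sub_smul, norm_smul, he, mul_one, ← mul_sub, norm_mul,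
        Real.norm_of_nonneg hK0.le, Real.norm_eq_abs] at e3
      have : K * |eta r ρ₁ (x i) - eta r ρ₁ (x' i)| ≤ K * (1 / 2 * ‖x - x'‖) := by
        refine e3.trans ?_
        have := norm_nonneg (x - x')
        rw [hK]; nlinarith
      exact le_of_mul_le_mul_left this hK0
    · refine (dimH_cantk_ball k h0 (by linarith) hρ).trans (dimH_mono ?_)
      rintro x ⟨hx, hxb⟩
      refine ⟨hxb, ?_⟩
      have h2 : G' x = 0 := by
        rw [hG']; unfold Gam'
        refine Finset.sum_eq_zero fun i _ => ?_
        rw [eta_zero hρ0.le (hx i), zero_smul]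
      have h3 := hFt x hx
      simp only [hA'] at h3
      simp only [h2]
      rw [← h3]
      refine ContinuousLinearMap.ext fun v => ?_
      simp

theorem core_zero (k : ℕ) (Y : Type*) [NormedAddCommGroup Y] [NormedSpace ℝ Y]
    [Nontrivial Y] {L a : ℝ} (A : (Fin k → ℝ) → Y → ((Fin k → ℝ) →L[ℝ] Y)) (hA : GoodA A L a)
    (hk : 0 < k) :
    ∃ (F : (Fin k → ℝ) → Y) (F' : (Fin k → ℝ) → ((Fin k → ℝ) →L[ℝ] Y)) (M : ℝ),
      (∀ x, HasFDerivAt F (F' x) x) ∧ (∀ x x', ‖F' x - F' x'‖ ≤ M * ‖x - x'‖) ∧ F 0 = 0 ∧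
      ∃ ρ₀ > 0, ∀ ρ > 0, ρ ≤ ρ₀ →
        dimH {x | x ∈ ball (0 : Fin k → ℝ) ρ ∧ F' x = A x (F x)} = ENNReal.ofReal 0 := by
  obtain ⟨e, he⟩ := exists_norm_eq Y (zero_le_one (α := ℝ))
  set B : (Fin k → ℝ) →L[ℝ] Y :=
    (ContinuousLinearMap.proj (R := ℝ) (φ := fun _ : Fin k => ℝ) ⟨0, hk⟩).smulRight e with hB
  have hB0 : B ≠ 0 := by
    intro h
    have : B (Pi.single ⟨0, hk⟩ 1) = 0 := by rw [h]; rfl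
    rw [hB] at this
    simp at this
    rw [this] at he
    simp at he
  have hBn : 0 < ‖B‖ := norm_pos_iff.2 hB0
  set T := A 0 0 + B with hT
  have hL := hA.L0
  set c := L * (1 + ‖T‖) + 1 with hc
  have hc0 : 0 < c := by positivity
  refine ⟨T, fun _ => T, 0, fun x => T.hasFDerivAt, by simp, map_zero _, ‖B‖ / c, by positivity, ?_⟩
  intro ρ hρ hρρ
  have : {x | x ∈ ball (0 : Fin k → ℝ) ρ ∧ T = A x (T x)} = ∅ := by
    rw [eq_empty_iff_forall_notMem]
    rintro x ⟨hx, hxt⟩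
    rw [mem_ball_zero_iff] at hx
    have h2 := hA.lip x (T x) 0 0
    rw [← hxt, hT, add_sub_cancel_left, ← hT, sub_zero, sub_zero] at h2
    have h3 := T.le_opNorm x
    have h4 : ‖x‖ < ‖B‖ / c := by linarith
    rw [lt_div_iff₀ hc0] at h4
    have h5 : L * (‖x‖ + ‖T x‖) ≤ L * (‖x‖ + ‖T‖ * ‖x‖) := by gcongr
    rw [hc] at h4
    nlinarith [norm_nonneg x]
  rw [this]; simp

theorem core (k : ℕ) (Y : Type*) [NormedAddCommGroup Y] [NormedSpace ℝ Y] [CompleteSpace Y]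
    [Nontrivial Y] {L a : ℝ} (A : (Fin k → ℝ) → Y → ((Fin k → ℝ) →L[ℝ] Y)) (hA : GoodA A L a)
    {d : ℝ} (hd : 0 ≤ d) (hdk : d < k) :
    ∃ (F : (Fin k → ℝ) → Y) (F' : (Fin k → ℝ) → ((Fin k → ℝ) →L[ℝ] Y)) (M : ℝ),
      (∀ x, HasFDerivAt F (F' x) x) ∧ (∀ x x', ‖F' x - F' x'‖ ≤ M * ‖x - x'‖) ∧ F 0 = 0 ∧
      ∃ ρ₀ > 0, ∀ ρ > 0, ρ ≤ ρ₀ →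
        dimH {x | x ∈ ball (0 : Fin k → ℝ) ρ ∧ F' x = A x (F x)} = ENNReal.ofReal d := by
  rcases hd.eq_or_lt with h | h
  · subst h
    exact core_zero k Y A hA (by exact_mod_cast hdk)
  · exact core_pos k Y A hA h hdk

end Core

section Reduction

theorem projW (W : Submodule ℝ (Euc n)) (w : ↥W) (y : ↥Wᗮ) :
    W.orthogonalProjectionOnto ((w : Euc n) + (y : Euc n)) = w := by
  rw [map_add, Submodule.orthogonalProjectionOnto_mem_subspace_eq_self,
    Submodule.orthogonalProjectionOnto_apply_of_mem_orthogonal y.2, add_zero]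

theorem projO (W : Submodule ℝ (Euc n)) (w : ↥W) (y : ↥Wᗮ) :
    Wᗮ.orthogonalProjectionOnto ((w : Euc n) + (y : Euc n)) = y := by
  rw [map_add, Submodule.orthogonalProjectionOnto_mem_subspace_eq_self,
    Submodule.orthogonalProjectionOnto_apply_of_mem_orthogonal (Submodule.le_orthogonal_orthogonal W w.2),
    zero_add]

theorem proj_decomp (W : Submodule ℝ (Euc n)) (v : Euc n) :
    (W.orthogonalProjectionOnto v : Euc n) + (Wᗮ.orthogonalProjectionOnto v : Euc n) = v := by
  obtain ⟨y, hy, z, hz, rfl⟩ := W.exists_add_mem_mem_orthogonal v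
  rw [projW W ⟨y, hy⟩ ⟨z, hz⟩, projO W ⟨y, hy⟩ ⟨z, hz⟩]

variable {k : ℕ}

/-- graph over `E` -/
def gph (W : Submodule ℝ (Euc n)) (Φ : (Fin k → ℝ) ≃L[ℝ] ↥W) (F : (Fin k → ℝ) → ↥Wᗮ)
    (x : Fin k → ℝ) : Euc n := (Φ x : Euc n) + (F x : Euc n)

/-- derivative of the graph map -/
def gphL (W : Submodule ℝ (Euc n)) (Φ : (Fin k → ℝ) ≃L[ℝ] ↥W) (R : (Fin k → ℝ) →L[ℝ] ↥Wᗮ) :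
    (Fin k → ℝ) →L[ℝ] Euc n :=
  W.subtypeL ∘L (Φ : (Fin k → ℝ) →L[ℝ] ↥W) + Wᗮ.subtypeL ∘L R

theorem gphL_apply (W : Submodule ℝ (Euc n)) (Φ : (Fin k → ℝ) ≃L[ℝ] ↥W)
    (R : (Fin k → ℝ) →L[ℝ] ↥Wᗮ) (c : Fin k → ℝ) :
    gphL W Φ R c = (Φ c : Euc n) + (R c : Euc n) := rfl

theorem gph_hasFDerivAt {W : Submodule ℝ (Euc n)} {Φ : (Fin k → ℝ) ≃L[ℝ] ↥W}
    {F : (Fin k → ℝ) → ↥Wᗮ} {R : (Fin k → ℝ) →L[ℝ] ↥Wᗮ} {x : Fin k → ℝ} (h : HasFDerivAt F R x) :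
    HasFDerivAt (gph W Φ F) (gphL W Φ R) x := by
  have h1 : HasFDerivAt (fun x => (Φ x : Euc n)) (W.subtypeL ∘L (Φ : (Fin k → ℝ) →L[ℝ] ↥W)) x :=
    (W.subtypeL ∘L (Φ : (Fin k → ℝ) →L[ℝ] ↥W)).hasFDerivAt
  exact h1.add (Wᗮ.subtypeL.hasFDerivAt.comp x h)

theorem gphL_range_inj {W : Submodule ℝ (Euc n)} {Φ : (Fin k → ℝ) ≃L[ℝ] ↥W}
    {R R' : (Fin k → ℝ) →L[ℝ] ↥Wᗮ} :
    range (gphL W Φ R) = range (gphL W Φ R') ↔ R = R' := by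
  refine ⟨fun h => ContinuousLinearMap.ext fun c => ?_, fun h => by rw [h]⟩
  have h1 : gphL W Φ R c ∈ range (gphL W Φ R') := h ▸ mem_range_self c
  obtain ⟨c', hc'⟩ := h1
  rw [gphL_apply, gphL_apply] at hc'
  have h2 := congrArg W.orthogonalProjectionOnto hc'
  rw [projW, projW] at h2
  have h3 := congrArg Wᗮ.orthogonalProjectionOnto hc'
  rw [projO, projO, Φ.injective h2] at h3
  exact h3.symm

theorem tangentCone_gph {W : Submodule ℝ (Euc n)} {Φ : (Fin k → ℝ) ≃L[ℝ] ↥W}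
    {F : (Fin k → ℝ) → ↥Wᗮ} {R : (Fin k → ℝ) →L[ℝ] ↥Wᗮ} {x : Fin k → ℝ} (h : HasFDerivAt F R x)
    {B : Set (Fin k → ℝ)} (hB : IsOpen B) (hx : x ∈ B) :
    tangentConeAt ℝ (gph W Φ F '' B) (gph W Φ F x) = range (gphL W Φ R) := by
  apply Subset.antisymm
  · intro v hv
    set pW := W.orthogonalProjectionOnto with hpW
    set pO := Wᗮ.orthogonalProjectionOnto with hpO
    set q : Euc n →L[ℝ] (Fin k → ℝ) := (Φ.symm : ↥W →L[ℝ] (Fin k → ℝ)) ∘L pW with hq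
    have hqg : ∀ z, q (gph W Φ F z) = z := by
      intro z
      rw [hq, ContinuousLinearMap.comp_apply, gph, hpW, projW]
      exact Φ.symm_apply_apply z
    have h1 : HasFDerivAt (fun z => pO z - F (q z)) (pO - R ∘L q) (gph W Φ F x) := by
      have h' : HasFDerivAt F R (q (gph W Φ F x)) := by rw [hqg]; exact h
      exact pO.hasFDerivAt.sub (h'.comp _ q.hasFDerivAt)
    have h2 := (h1.hasFDerivWithinAt (s := gph W Φ F '' B)).mapsTo_tangent_cone hv
    have hz : ∀ z, pO (gph W Φ F z) - F (q (gph W Φ F z)) = 0 := by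
      intro z
      rw [hqg, gph, hpO, projO, sub_self]
    have h3 : (fun z => pO z - F (q z)) '' (gph W Φ F '' B) ⊆ {0} := by
      rintro _ ⟨_, ⟨z, _, rfl⟩, rfl⟩
      exact hz z
    have h4 := tangentConeAt_mono (𝕜 := ℝ) h3 h2
    have hz' := hz x
    simp only at h4
    rw [hz'] at h4
    have h5 := tangentConeAt_subset_zero (𝕜 := ℝ) (by
      intro hacc
      rw [accPt_iff_nhds] at hacc
      obtain ⟨y, hy, hy'⟩ := hacc univ univ_mem
      exact hy' hy.2) h4
    have h6 : pO v - R (q v) = 0 := h5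
    refine ⟨q v, ?_⟩
    rw [gphL_apply, ← sub_eq_zero.1 h6, hq, ContinuousLinearMap.comp_apply]
    have : Φ ((Φ.symm : ↥W →L[ℝ] (Fin k → ℝ)) (pW v)) = pW v := Φ.apply_symm_apply _
    rw [this]
    exact proj_decomp W v
  · rintro _ ⟨c, rfl⟩
    refine ((gph_hasFDerivAt (Φ := Φ) h).hasFDerivWithinAt (s := B)).mapsTo_tangent_cone ?_
    rw [tangentConeAt_of_mem_nhds (hB.mem_nhds hx)]
    exact mem_univ c

theorem gph_c11 {W : Submodule ℝ (Euc n)} (Φ : (Fin k → ℝ) ≃L[ℝ] ↥W) (hW : finrank ℝ W = k)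
    {F : (Fin k → ℝ) → ↥Wᗮ} {F' : (Fin k → ℝ) → (Fin k → ℝ) →L[ℝ] ↥Wᗮ} {M : ℝ}
    (hF : ∀ x, HasFDerivAt F (F' x) x) (hM : ∀ x x', ‖F' x - F' x'‖ ≤ M * ‖x - x'‖)
    {B : Set (Fin k → ℝ)} (hB : IsOpen B) (hne : B.Nonempty) :
    IsC11Submanifold k (gph W Φ F '' B) := by
  refine ⟨hne.image _, fun x _ => ⟨W, Φ '' B, fun w => F (Φ.symm w), univ, hW, ?_, ?_, ?_,
    isOpen_univ, mem_univ _, ?_⟩⟩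
  · exact Φ.toHomeomorph.isOpenMap _ hB
  · have : ContDiff ℝ 1 F := by
      rw [contDiff_one_iff_hasFDerivAt]
      refine ⟨F', ?_, hF⟩
      have : LipschitzWith M.toNNReal F' := LipschitzWith.of_dist_le_mul fun x x' => by
        rw [dist_eq_norm, dist_eq_norm]
        refine (hM x x').trans ?_
        gcongr
        exact Real.le_coe_toNNReal M
      exact this.continuous
    exact (this.comp Φ.symm.contDiff).contDiffOn
  · set P : ↥W →L[ℝ] (Fin k → ℝ) := (Φ.symm : ↥W →L[ℝ] (Fin k → ℝ)) with hP
    have hfd : ∀ w, fderiv ℝ (fun w => F (Φ.symm w)) w = F' (P w) ∘L P := fun w =>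
      ((hF (Φ.symm w)).comp w P.hasFDerivAt).fderiv
    refine ⟨(max M 0 * ‖P‖ * ‖P‖).toNNReal, LipschitzOnWith.of_dist_le_mul fun w _ w' _ => ?_⟩
    rw [Real.coe_toNNReal _ (by positivity), hfd, hfd, dist_eq_norm, dist_eq_norm,
      ← ContinuousLinearMap.sub_comp]
    refine (ContinuousLinearMap.opNorm_comp_le _ _).trans ?_
    have h1 := hM (P w) (P w')
    rw [← map_sub] at h1
    have h2 := P.le_opNorm (w - w')
    calc _ ≤ (max M 0 * (‖P‖ * ‖w - w'‖)) * ‖P‖ := by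
          gcongr
          refine h1.trans ?_
          gcongr
          exact le_max_left _ _
      _ = _ := by ring
  · congr 1
    rw [image_image]
    refine image_congr fun z _ => ?_
    simp [gph, graphMap]

theorem dimH_gph {W : Submodule ℝ (Euc n)} (Φ : (Fin k → ℝ) ≃L[ℝ] ↥W)
    {F : (Fin k → ℝ) → ↥Wᗮ} {F' : (Fin k → ℝ) → (Fin k → ℝ) →L[ℝ] ↥Wᗮ} {M : ℝ}
    (hF : ∀ x, HasFDerivAt F (F' x) x) (hM : ∀ x x', ‖F' x - F' x'‖ ≤ M * ‖x - x'‖)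
    (T : Set (Fin k → ℝ)) : dimH (gph W Φ F '' T) = dimH T := by
  apply le_antisymm
  · have : ContDiff ℝ 1 F := by
      rw [contDiff_one_iff_hasFDerivAt]
      refine ⟨F', ?_, hF⟩
      have : LipschitzWith M.toNNReal F' := LipschitzWith.of_dist_le_mul fun x x' => by
        rw [dist_eq_norm, dist_eq_norm]
        refine (hM x x').trans ?_
        gcongr
        exact Real.le_coe_toNNReal M
      exact this.continuous
    have h2 : ContDiff ℝ 1 (gph W Φ F) :=
      (W.subtypeL.contDiff.comp Φ.contDiff).add (Wᗮ.subtypeL.contDiff.comp this)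
    exact h2.contDiffOn.dimH_image_le convex_univ (subset_univ T)
  · set q : Euc n →L[ℝ] (Fin k → ℝ) :=
      (Φ.symm : ↥W →L[ℝ] (Fin k → ℝ)) ∘L W.orthogonalProjectionOnto with hq
    have hqg : ∀ z, q (gph W Φ F z) = z := by
      intro z
      rw [hq, ContinuousLinearMap.comp_apply, gph, projW]
      exact Φ.symm_apply_apply z
    have h3 := q.lipschitz.dimH_image_le (gph W Φ F '' T)
    rw [image_image] at h3
    simpa only [hqg, image_id'] using h3

/-- local normal form of the plane field -/
theorem normal_form {V : Euc n → Submodule ℝ (Euc n)} (hV : IsC1PlaneField k univ V) :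
    ∃ (Φ : (Fin k → ℝ) ≃L[ℝ] ↥(V 0)) (Aₑ : Euc n → (Fin k → ℝ) →L[ℝ] ↥(V 0)ᗮ) (N : Set (Euc n)),
      IsOpen N ∧ (0 : Euc n) ∈ N ∧ ContDiffOn ℝ 1 Aₑ N ∧
      ∀ y ∈ N, (V y : Set (Euc n)) = range (gphL (V 0) Φ (Aₑ y)) := by
  obtain ⟨-, hfin, hloc⟩ := hV
  obtain ⟨U, hU, h0U, -, X, hX, hspan⟩ := hloc 0 (mem_univ _)
  have hfin0 := hfin 0 (mem_univ _)
  set W := V 0 with hW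
  let T : Euc n → (Fin k → ℝ) →L[ℝ] Euc n := fun y =>
    ∑ i, (ContinuousLinearMap.proj (R := ℝ) (φ := fun _ : Fin k => ℝ) i).smulRight (X i y)
  have hTapp : ∀ y c, T y c = ∑ i, c i • X i y := fun y c => by simp [T]
  have hTrange : ∀ y ∈ U, (V y : Set (Euc n)) = range (T y) := by
    intro y hy
    ext v
    rw [hspan y hy, SetLike.mem_coe, Submodule.mem_span_range_iff_exists_fun]
    simp only [mem_range, hTapp]
  have hTc : ContDiffOn ℝ 1 T U :=
    ContDiffOn.sum fun i _ => contDiffOn_const.smulRight (hX i)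
  let B : Euc n → (Fin k → ℝ) →L[ℝ] ↥W := fun y => W.orthogonalProjectionOnto ∘L T y
  let D : Euc n → (Fin k → ℝ) →L[ℝ] ↥Wᗮ := fun y => Wᗮ.orthogonalProjectionOnto ∘L T y
  have hBc : ContDiffOn ℝ 1 B U := contDiffOn_const.clm_comp hTc
  have hDc : ContDiffOn ℝ 1 D U := contDiffOn_const.clm_comp hTc
  have hsurj : Function.Surjective (B 0) := by
    intro w
    have : (w : Euc n) ∈ (V 0 : Set (Euc n)) := w.2
    rw [hTrange 0 h0U] at this
    obtain ⟨c, hc⟩ := this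
    refine ⟨c, ?_⟩
    simp only [B, ContinuousLinearMap.comp_apply, hc]
    exact Submodule.orthogonalProjectionOnto_mem_subspace_eq_self w
  have hfeq : finrank ℝ (Fin k → ℝ) = finrank ℝ W := by rw [hfin0]; simp
  have hinj : Function.Injective (B 0) :=
    (LinearMap.injective_iff_surjective_of_finrank_eq_finrank (f := (B 0).toLinearMap) hfeq).2 hsurj
  let Φ : (Fin k → ℝ) ≃L[ℝ] ↥W :=
    (LinearEquiv.ofBijective (B 0).toLinearMap ⟨hinj, hsurj⟩).toContinuousLinearEquiv
  have hΦ : ∀ c, Φ c = B 0 c := fun c => rfl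
  let Q : Euc n → (Fin k → ℝ) →L[ℝ] (Fin k → ℝ) := fun y =>
    (Φ.symm : ↥W →L[ℝ] (Fin k → ℝ)) ∘L B y
  have hQc : ContDiffOn ℝ 1 Q U := contDiffOn_const.clm_comp hBc
  have hQ0 : Q 0 = 1 := ContinuousLinearMap.ext fun c => Φ.symm_apply_apply c
  refine ⟨Φ, fun y => D y ∘L Ring.inverse (Q y), U ∩ Q ⁻¹' {R | IsUnit R},
    hQc.continuousOn.isOpen_inter_preimage hU Units.isOpen, ⟨h0U, ?_⟩, ?_, ?_⟩
  · show IsUnit (Q 0)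
    rw [hQ0]; exact isUnit_one
  · refine (hDc.mono inter_subset_left).clm_comp ?_
    intro y hy
    obtain ⟨u, hu⟩ := hy.2
    have h1 : ContDiffAt ℝ 1 Ring.inverse (Q y) := hu ▸ contDiffAt_ringInverse ℝ u
    exact h1.comp_contDiffWithinAt y ((hQc.mono inter_subset_left) y hy)
  · rintro y ⟨hy, hun⟩
    rw [hTrange y hy]
    have hun' : IsUnit (Q y) := hun
    have key : ∀ c, T y c = gphL W Φ (D y ∘L Ring.inverse (Q y)) (Q y c) := by
      intro c
      rw [gphL_apply]
      have h1 : Φ (Q y c) = W.orthogonalProjectionOnto (T y c) := Φ.apply_symm_apply _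
      have h2 : (D y ∘L Ring.inverse (Q y)) (Q y c) = Wᗮ.orthogonalProjectionOnto (T y c) := by
        have : (Ring.inverse (Q y) * Q y) c = c := by rw [Ring.inverse_mul_cancel _ hun']; rfl
        have h3 : Ring.inverse (Q y) (Q y c) = c := this
        rw [ContinuousLinearMap.comp_apply, h3]; rfl
      rw [h1, h2, proj_decomp]
    apply Subset.antisymm
    · rintro _ ⟨c, rfl⟩
      exact ⟨_, (key c).symm⟩
    · rintro _ ⟨c, rfl⟩
      refine ⟨Ring.inverse (Q y) c, ?_⟩
      rw [key]
      have : (Q y * Ring.inverse (Q y)) c = c := by rw [Ring.mul_inverse_cancel _ hun']; rfl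
      have h3 : Q y (Ring.inverse (Q y) c) = c := this
      rw [h3]

/-- global Lipschitz slope field -/
theorem cutoff {Z : Type*} [NormedAddCommGroup Z] [NormedSpace ℝ Z] {A : Euc n → Z} {N : Set (Euc n)}
    (hN : IsOpen N) (h0 : (0 : Euc n) ∈ N) (hA : ContDiffOn ℝ 1 A N) :
    ∃ (A₁ : Euc n → Z) (L a δ : ℝ), 0 ≤ L ∧ 0 ≤ a ∧ 0 < δ ∧
      (∀ y y', ‖A₁ y - A₁ y'‖ ≤ L * ‖y - y'‖) ∧ (∀ y, ‖A₁ y‖ ≤ a) ∧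
      ∀ y ∈ ball (0 : Euc n) δ, y ∈ N ∧ A₁ y = A y := by
  obtain ⟨ε, hε, hεN⟩ := Metric.isOpen_iff.1 hN 0 h0
  let χ : ContDiffBump (0 : Euc n) := ⟨ε / 3, ε / 2, by positivity, by linarith⟩
  have hsub : tsupport (fun y => χ y • A y) ⊆ N := by
    refine (tsupport_smul_subset_left _ _).trans ?_
    rw [χ.tsupport_eq]
    refine (closedBall_subset_ball ?_).trans hεN
    show ε / 2 < ε
    linarith
  have hcd : ContDiff ℝ 1 (fun y => χ y • A y) := by
    rw [contDiff_iff_contDiffAt]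
    intro y
    by_cases hy : y ∈ tsupport (fun y => χ y • A y)
    · exact χ.contDiff.contDiffAt.smul (hA.contDiffAt (hN.mem_nhds (hsub hy)))
    · have := notMem_tsupport_iff_eventuallyEq.1 hy
      exact (contDiffAt_const (c := (0 : Z))).congr_of_eventuallyEq this
  have hcs : HasCompactSupport (fun y => χ y • A y) := χ.hasCompactSupport.smul_right
  obtain ⟨L, hL⟩ := hcd.lipschitzWith_of_hasCompactSupport hcs one_ne_zero
  obtain ⟨a, ha⟩ := hcs.exists_bound_of_continuous hcd.continuous
  refine ⟨fun y => χ y • A y, L, a, ε / 3, L.2, (norm_nonneg _).trans (ha 0), by positivity, ?_, ha, ?_⟩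
  · intro y y'
    have := hL.dist_le_mul y y'
    rwa [dist_eq_norm, dist_eq_norm] at this
  · intro y hy
    refine ⟨hεN (ball_subset_ball (by linarith) hy), ?_⟩
    have : χ y = 1 := χ.one_of_mem_closedBall (ball_subset_closedBall hy)
    simp only [this, one_smul]

end Reduction


theorem statement0 {n k : ℕ} (hk : 2 ≤ k) (hkn : k < n)
    (V : Euc n → Submodule ℝ (Euc n)) (hV : IsC1PlaneField k univ V)
    (d : ℝ) (hd0 : 0 ≤ d) (hdk : d < k) :
    ∃ S : Set (Euc n), IsC11Submanifold k S ∧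
      dimH (tangencySet S V) = ENNReal.ofReal d := by
  obtain ⟨Φ, A₀, N, hN, h0N, hA₀, hVN⟩ := normal_form hV
  obtain ⟨A₁, L, a, δ, hL, ha, hδ, hlip, hbd, hA₁⟩ := cutoff hN h0N hA₀
  have hfin0 : finrank ℝ (V 0) = k := hV.2.1 0 (mem_univ _)
  have hnt : Nontrivial ↥(V 0)ᗮ := by
    rw [← finrank_pos_iff (R := ℝ)]
    have := (V 0).finrank_add_finrank_orthogonal
    rw [hfin0, finrank_euclideanSpace_fin] at this
    omega
  obtain ⟨c, hc0, hcb⟩ := (Φ : (Fin k → ℝ) →L[ℝ] ↥(V 0)).isBoundedLinearMap.bound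
  have hgood : GoodA (fun (x : Fin k → ℝ) (y : ↥(V 0)ᗮ) => A₁ ((Φ x : Euc n) + (y : Euc n)))
      (L * (c + 1)) a := by
    refine ⟨by positivity, ha, fun p y p' y' => ?_, fun p y => hbd _⟩
    refine (hlip _ _).trans ?_
    rw [mul_assoc]
    refine mul_le_mul_of_nonneg_left ?_ hL
    have h1 : ‖(Φ p : Euc n) + (y : Euc n) - ((Φ p' : Euc n) + (y' : Euc n))‖ ≤
        ‖Φ p - Φ p'‖ + ‖y - y'‖ := by
      rw [add_sub_add_comm]
      exact norm_add_le _ _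
    have h2 : ‖Φ p - Φ p'‖ ≤ c * ‖p - p'‖ := by
      rw [← map_sub]
      exact hcb _
    have := norm_nonneg (p - p')
    have := norm_nonneg (y - y')
    nlinarith
  obtain ⟨F, F', M, hF, hM, hF0, ρ₀, hρ₀, hdim⟩ := core k ↥(V 0)ᗮ _ hgood hd0 hdk
  have hgc : ContinuousAt (gph (V 0) Φ F) 0 := (gph_hasFDerivAt (Φ := Φ) (hF 0)).continuousAt
  have hg0 : gph (V 0) Φ F 0 = 0 := by simp [gph, hF0]
  have hnb : gph (V 0) Φ F ⁻¹' ball 0 δ ∈ 𝓝 (0 : Fin k → ℝ) :=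
    hgc.preimage_mem_nhds (by rw [hg0]; exact ball_mem_nhds _ hδ)
  obtain ⟨ρ₁, hρ₁, hsub⟩ := Metric.mem_nhds_iff.1 hnb
  set ρ := min ρ₀ ρ₁ with hρ
  have hρpos : 0 < ρ := lt_min hρ₀ hρ₁
  refine ⟨gph (V 0) Φ F '' ball 0 ρ,
    gph_c11 Φ hfin0 hF hM isOpen_ball ⟨0, mem_ball_self hρpos⟩, ?_⟩
  have hts : tangencySet (gph (V 0) Φ F '' ball 0 ρ) V = gph (V 0) Φ F ''
      {x | x ∈ ball (0 : Fin k → ℝ) ρ ∧ F' x = A₁ ((Φ x : Euc n) + (F x : Euc n))} := by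
    have key : ∀ x ∈ ball (0 : Fin k → ℝ) ρ,
        (tangentConeAt ℝ (gph (V 0) Φ F '' ball 0 ρ) (gph (V 0) Φ F x)
          = (V (gph (V 0) Φ F x) : Set (Euc n)) ↔
          F' x = A₁ ((Φ x : Euc n) + (F x : Euc n))) := by
      intro x hx
      obtain ⟨h1, h2⟩ := hA₁ (gph (V 0) Φ F x) (hsub (ball_subset_ball (min_le_right _ _) hx))
      rw [tangentCone_gph (hF x) isOpen_ball hx, hVN _ h1, gphL_range_inj, ← h2]
      rfl
    ext z
    constructor
    · rintro ⟨⟨x, hx, rfl⟩, hz⟩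
      exact ⟨x, ⟨hx, (key x hx).1 hz⟩, rfl⟩
    · rintro ⟨x, ⟨hx, hxt⟩, rfl⟩
      exact ⟨⟨x, hx, rfl⟩, (key x hx).2 hxt⟩
  rw [hts, dimH_gph Φ hF hM]
  exact hdim ρ hρpos (min_le_left _ _)
end
end

section
/- Let V be a distribution of k-planes of class C¹ on ℝⁿ. Then there exists a k-dimensional embedded submanifold S of ℝⁿ of class C^{1,α} for every α ∈ (0,1) (i.e. S ∈ ⋂_{0<α<1} C^{1,α}) such that ℋ^k(τ(S,V)) > 0. -/
noncomputable section
open MeasureTheory Set Module Filter Metric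
open scoped ENNReal NNReal Topology RealInnerProductSpace

variable {n : ℕ}

/-- `S` is a `k`-dimensional embedded submanifold of `ℝⁿ` of class `C^{1,α}`:
near each of its points it is the graph, over a `k`-plane `W`, of a `C¹` function
whose gradient is `α`-Hölder continuous. -/
def IsC1AlphaSubmanifold (k : ℕ) (α : ℝ) (S : Set (Euc n)) : Prop :=
  ∀ x ∈ S, ∃ (W : Submodule ℝ (Euc n)) (U : Set ↥W) (f : ↥W → ↥Wᗮ) (O : Set (Euc n)),
    finrank ℝ W = k ∧ IsOpen U ∧ ContDiffOn ℝ 1 f U ∧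
    (∃ C : ℝ≥0, HolderOnWith C α.toNNReal (fun z => fderiv ℝ f z) U) ∧
    IsOpen O ∧ x ∈ O ∧ S ∩ O = (graphMap W f '' U) ∩ O


lemma iteratedFDeriv_two_clm {E F : Type*} [NormedAddCommGroup E] [NormedSpace ℝ E]
    [NormedAddCommGroup F] [NormedSpace ℝ F] (ℓ : E →L[ℝ] F) (z : E) :
    iteratedFDeriv ℝ 2 (ℓ : E → F) z = 0 := by
  rw [← norm_eq_zero, ← norm_iteratedFDeriv_fderiv]
  have : fderiv ℝ (ℓ : E → F) = fun _ => ℓ := by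
    funext x; exact ContinuousLinearMap.fderiv ℓ
  rw [this, iteratedFDeriv_const_of_ne (by norm_num)]
  simp

/-- a one dimensional cutoff, vanishing near zero -/
lemma beta_exists : ∃ β : ℝ → ℝ, ContDiff ℝ 2 β ∧ (∀ x, |x| ≤ 1 → β x = 0) ∧
    (∀ x, 2 ≤ |x| → β x = 1) ∧
    ∃ C : ℝ, 1 ≤ C ∧ ∀ i ≤ 2, ∀ x, ‖iteratedFDeriv ℝ i β x‖ ≤ C := by
  let b : ContDiffBump (0 : ℝ) := ⟨1, 2, by norm_num, by norm_num⟩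
  have hb : ContDiff ℝ 2 (b : ℝ → ℝ) := b.contDiff
  have hbd : ∀ i : ℕ, i ≤ 2 → ∃ C : ℝ, ∀ x, ‖iteratedFDeriv ℝ i (b : ℝ → ℝ) x‖ ≤ C := by
    intro i hi
    refine Continuous.bounded_above_of_compact_support ?_ (b.hasCompactSupport.iteratedFDeriv i)
    exact hb.continuous_iteratedFDeriv (by exact_mod_cast hi)
  obtain ⟨C0, h0⟩ := hbd 0 (by norm_num)
  obtain ⟨C1, h1⟩ := hbd 1 (by norm_num)
  obtain ⟨C2, h2⟩ := hbd 2 (by norm_num)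
  have hb' : ∀ i : ℕ, i ≤ 2 → ∀ x, ‖iteratedFDeriv ℝ i (b : ℝ → ℝ) x‖ ≤ |C0| + |C1| + |C2| := by
    intro i hi x
    have := abs_nonneg C0
    have := abs_nonneg C1
    have := abs_nonneg C2
    have := le_abs_self C0
    have := le_abs_self C1
    have := le_abs_self C2
    interval_cases i
    · linarith [h0 x]
    · linarith [h1 x]
    · linarith [h2 x]
  refine ⟨fun x => 1 - b x, contDiff_const.sub hb, ?_, ?_, 1 + (|C0| + |C1| + |C2|), ?_, ?_⟩
  · intro x hx
    have : b x = 1 := b.one_of_mem_closedBall (by simpa [b] using hx)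
    simp [this]
  · intro x hx
    have : b x = 0 := b.zero_of_le_dist (by simpa [b] using hx)
    simp [this]
  · have := abs_nonneg C0
    have := abs_nonneg C1
    have := abs_nonneg C2
    linarith
  · intro i hi x
    have e : iteratedFDeriv ℝ i (fun x => 1 - b x) x
        = iteratedFDeriv ℝ i (fun _ : ℝ => (1:ℝ)) x - iteratedFDeriv ℝ i (b : ℝ → ℝ) x := by
      refine iteratedFDeriv_sub_apply ?_ ?_
      · exact contDiff_const.contDiffAt
      · exact (hb.of_le (by exact_mod_cast hi)).contDiffAt
    rw [e]
    refine (norm_sub_le _ _).trans (add_le_add ?_ (hb' i hi x))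
    rcases Nat.eq_zero_or_pos i with h | h
    · subst h; simp
    · rw [iteratedFDeriv_const_of_ne h.ne']; simp

def phi {k : ℕ} (β : ℝ → ℝ) (Λ r : ℝ) (z : Fin k → ℝ) : ℝ :=
  ∏ i, β (Λ * Real.sin (Real.pi / r * z i))

lemma choose_sum_le {m : ℕ} (hm : m ≤ 2) {A B N : ℝ} (hA : 0 ≤ A) (hN : 0 ≤ N)
    (u v : ℕ → ℝ) (hu0 : ∀ i, 0 ≤ v i)
    (hu : ∀ i ≤ 2, u i ≤ A * N ^ i) (hv : ∀ i ≤ 2, v i ≤ B * N ^ i) :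
    ∑ i ∈ Finset.range (m + 1), (m.choose i : ℝ) * u i * v (m - i) ≤ 4 * (A * B) * N ^ m := by
  have hB : 0 ≤ B := by simpa using (hu0 0).trans (hv 0 (by norm_num))
  have key : ∀ i ≤ 2, ∀ j ≤ 2, u i * v j ≤ A * B * N ^ (i + j) := by
    intro i hi j hj
    calc u i * v j ≤ (A * N ^ i) * (B * N ^ j) :=
          mul_le_mul (hu i hi) (hv j hj) (hu0 j) (by positivity)
      _ = _ := by rw [pow_add]; ring
  have hAB : 0 ≤ A * B := by positivity
  interval_cases m
  · simp [Finset.sum_range_succ]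
    have := key 0 (by norm_num) 0 (by norm_num)
    simp at this
    linarith
  · simp [Finset.sum_range_succ]
    have h1 := key 0 (by norm_num) 1 (by norm_num)
    have h2 := key 1 (by norm_num) 0 (by norm_num)
    simp at h1 h2
    have : 0 ≤ A * B * N := by positivity
    linarith
  · simp [Finset.sum_range_succ]
    have h1 := key 0 (by norm_num) 2 (by norm_num)
    have h2 := key 1 (by norm_num) 1 (by norm_num)
    have h3 := key 2 (by norm_num) 0 (by norm_num)
    simp at h1 h2 h3
    linarith

lemma sin_coord_bound {k : ℕ} (i : Fin k) {Λ c : ℝ} (hΛ : 1 ≤ Λ) (hc : 0 ≤ c) (m : ℕ)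
    (hm1 : 1 ≤ m) (hm : m ≤ 2) (z : Fin k → ℝ) :
    ‖iteratedFDeriv ℝ m (fun z : Fin k → ℝ => Λ * Real.sin (c * z i)) z‖ ≤ (2 * Λ * c) ^ m := by
  have hlin : ContDiff ℝ 2 (fun z : Fin k → ℝ => c * z i) := by fun_prop
  have hs : ContDiff ℝ 2 (Real.sin ∘ fun z : Fin k → ℝ => c * z i) := Real.contDiff_sin.comp hlin
  have e : iteratedFDeriv ℝ m (fun z : Fin k → ℝ => Λ * Real.sin (c * z i)) z
      = Λ • iteratedFDeriv ℝ m (Real.sin ∘ fun z : Fin k → ℝ => c * z i) z := by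
    rw [← iteratedFDeriv_const_smul_apply]
    · rfl
    · exact (hs.of_le (by exact_mod_cast hm)).contDiffAt
  have hb : ‖iteratedFDeriv ℝ m (Real.sin ∘ fun z : Fin k → ℝ => c * z i) z‖
      ≤ (m.factorial : ℝ) * 1 * c ^ m := by
    refine norm_iteratedFDeriv_comp_le (N := 2) Real.contDiff_sin hlin (by exact_mod_cast hm) z ?_ ?_
    · intro j hj
      rw [norm_iteratedFDeriv_eq_norm_iteratedDeriv]
      exact Real.abs_iteratedDeriv_sin_le_one _ _
    · intro j hj1 hj2
      let ℓ : (Fin k → ℝ) →L[ℝ] ℝ := c • ContinuousLinearMap.proj i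
      have hℓ : ‖ℓ‖ ≤ c := by
        refine ContinuousLinearMap.opNorm_le_bound _ hc fun x => ?_
        simp only [ℓ, smul_apply, ContinuousLinearMap.proj_apply, smul_eq_mul,
          norm_mul, Real.norm_eq_abs, abs_of_nonneg hc]
        exact mul_le_mul_of_nonneg_left (norm_le_pi_norm x i) hc
      change ‖iteratedFDeriv ℝ j ℓ z‖ ≤ _
      have : j ≤ 2 := hj2.trans hm
      interval_cases j
      · rw [norm_iteratedFDeriv_one, ContinuousLinearMap.fderiv]; simpa using hℓ
      · rw [iteratedFDeriv_two_clm ℓ z]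
        simp; positivity
  rw [e, norm_smul, Real.norm_of_nonneg (by linarith)]
  refine (mul_le_mul_of_nonneg_left hb (by linarith)).trans ?_
  interval_cases m
  · simp; nlinarith [mul_nonneg (by linarith : 0 ≤ Λ) hc]
  · simp [Nat.factorial]
    have : 0 ≤ c ^ 2 * Λ * (Λ - 1) := by
      have : 0 ≤ Λ - 1 := by linarith
      positivity
    have : 0 ≤ c ^ 2 * Λ := by positivity
    nlinarith

lemma contDiff_factor {k : ℕ} {β : ℝ → ℝ} (hβ : ContDiff ℝ 2 β) (i : Fin k) (Λ c : ℝ) :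
    ContDiff ℝ 2 (fun z : Fin k → ℝ => β (Λ * Real.sin (c * z i))) := by
  have : ContDiff ℝ 2 (fun z : Fin k → ℝ => Λ * Real.sin (c * z i)) := by fun_prop
  exact hβ.comp this

lemma contDiff_phi {k : ℕ} {β : ℝ → ℝ} (hβ : ContDiff ℝ 2 β) (Λ r : ℝ) :
    ContDiff ℝ 2 (phi β Λ r : (Fin k → ℝ) → ℝ) := by
  unfold phi
  exact contDiff_prod fun i _ => contDiff_factor hβ i _ _

lemma phi_bound {k : ℕ} {β : ℝ → ℝ} (hβ : ContDiff ℝ 2 β) {C : ℝ} (hC1 : 1 ≤ C)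
    (hC : ∀ i ≤ 2, ∀ x, ‖iteratedFDeriv ℝ i β x‖ ≤ C) {Λ r : ℝ} (hΛ : 1 ≤ Λ) (hr : 0 < r)
    {m : ℕ} (hm : m ≤ 2) (z : Fin k → ℝ) :
    ‖iteratedFDeriv ℝ m (phi β Λ r : (Fin k → ℝ) → ℝ) z‖
      ≤ (8 * C) ^ k * (2 * Λ * (Real.pi / r)) ^ m := by
  have hc : 0 ≤ Real.pi / r := by positivity
  have hN : 0 ≤ 2 * Λ * (Real.pi / r) := by positivity
  set N := 2 * Λ * (Real.pi / r)
  have hfac : ∀ i : Fin k, ∀ m ≤ 2, ‖iteratedFDeriv ℝ m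
      (fun z : Fin k → ℝ => β (Λ * Real.sin (Real.pi / r * z i))) z‖ ≤ (2 * C) * N ^ m := by
    intro i m hm
    have hs : ContDiff ℝ 2 (fun z : Fin k → ℝ => Λ * Real.sin (Real.pi / r * z i)) := by fun_prop
    have := norm_iteratedFDeriv_comp_le (N := 2) (n := m) (D := N) (C := C) hβ hs
      (by exact_mod_cast hm) z
      (fun j hj => hC j (hj.trans hm) _)
      (fun j hj1 hj2 => sin_coord_bound i hΛ hc j hj1 (hj2.trans hm) z)
    refine this.trans ?_
    have h2 : (m.factorial : ℝ) ≤ 2 := by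
      interval_cases m <;> norm_num [Nat.factorial]
    gcongr
  have gen : ∀ s : Finset (Fin k), ∀ m ≤ 2, ‖iteratedFDeriv ℝ m
      (fun z : Fin k → ℝ => ∏ i ∈ s, β (Λ * Real.sin (Real.pi / r * z i))) z‖
        ≤ (8 * C) ^ s.card * N ^ m := by
    intro s
    induction s using Finset.induction_on with
    | empty =>
      intro m hm
      simp only [Finset.prod_empty, Finset.card_empty, pow_zero, one_mul]
      rcases Nat.eq_zero_or_pos m with h | h
      · subst h; simp
      · rw [iteratedFDeriv_const_of_ne h.ne']; simp; positivity
    | insert a s ha ih =>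
      intro m hm
      simp only [Finset.prod_insert ha, Finset.card_insert_of_notMem ha]
      refine (norm_iteratedFDeriv_mul_le (N := 2) (contDiff_factor hβ a _ _)
        (contDiff_prod fun i _ => contDiff_factor hβ i _ _) z (by exact_mod_cast hm)).trans ?_
      refine (choose_sum_le hm (A := 2 * C) (B := (8 * C) ^ s.card) (N := N) (by positivity) hN
        (fun i => ‖iteratedFDeriv ℝ i
          (fun z : Fin k → ℝ => β (Λ * Real.sin (Real.pi / r * z a))) z‖)
        (fun i => ‖iteratedFDeriv ℝ i
          (fun z : Fin k → ℝ => ∏ i ∈ s, β (Λ * Real.sin (Real.pi / r * z i))) z‖)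
        (fun i => norm_nonneg _) (hfac a) ih).trans ?_
      rw [pow_succ]
      apply le_of_eq; ring
  have := gen Finset.univ m hm
  rw [Finset.card_univ, Fintype.card_fin] at this
  exact this

def rr (p j : ℕ) : ℝ := (1 / 2 : ℝ) ^ ((j + p) ^ 2)

def LL (p j : ℕ) : ℝ := (2 : ℝ) ^ (2 * (j + p) + 1)

lemma rr_pos (p j : ℕ) : 0 < rr p j := by unfold rr; positivity

lemma LL_one_le (p j : ℕ) : 1 ≤ LL p j := one_le_pow₀ (by norm_num)

lemma rr_succ (p j : ℕ) : rr p j = LL p j * rr p (j + 1) := by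
  unfold rr LL
  have : (j + 1 + p) ^ 2 = (j + p) ^ 2 + (2 * (j + p) + 1) := by ring
  rw [this, pow_add (1 / 2 : ℝ), mul_left_comm, ← mul_pow]
  norm_num

lemma LL_mono (p j : ℕ) : LL p j ≤ LL p (j + 1) := by
  unfold LL
  exact pow_le_pow_right₀ (by norm_num) (by omega)

lemma rr_le (p j : ℕ) : rr p j ≤ (1 / 2 : ℝ) ^ p * (1 / 2) ^ j := by
  unfold rr
  rw [← pow_add]
  exact pow_le_pow_of_le_one (by norm_num) (by norm_num) (by nlinarith [Nat.le_self_pow (n := 2) (by norm_num) (j+p)])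

def PP {k : ℕ} (r : ℝ) (z : Fin k → ℝ) : Fin k → ℝ := fun i => r * ⌊z i / r⌋

lemma PP_dist {k : ℕ} {r : ℝ} (hr : 0 < r) (z : Fin k → ℝ) : ‖z - PP r z‖ ≤ r := by
  rw [pi_norm_le_iff_of_nonneg hr.le]
  intro i
  have h1 := Int.floor_le (z i / r)
  have h2 := (Int.lt_floor_add_one (z i / r)).le
  rw [le_div_iff₀ hr] at h1
  rw [div_le_iff₀ hr] at h2
  simp only [PP, Pi.sub_apply, Real.norm_eq_abs, abs_le]
  constructor <;> nlinarith

lemma PP_nested {k : ℕ} (p j : ℕ) {z w : Fin k → ℝ}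
    (h : PP (rr p (j + 1)) w = PP (rr p (j + 1)) z) : PP (rr p j) w = PP (rr p j) z := by
  have hp := rr_pos p (j + 1)
  funext i
  have hi := congrFun h i
  simp only [PP] at hi ⊢
  have hf : ⌊w i / rr p (j + 1)⌋ = ⌊z i / rr p (j + 1)⌋ := by
    have := mul_left_cancel₀ hp.ne' hi
    exact_mod_cast this
  have key : ∀ t : ℝ, ⌊t / rr p j⌋ = ⌊t / rr p (j + 1)⌋ / ((2 ^ (2 * (j + p) + 1) : ℕ) : ℤ) := by
    intro t
    rw [← Int.floor_div_natCast]
    congr 1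
    rw [rr_succ p j, LL]
    push_cast
    field_simp
  rw [key, key, hf]

lemma PP_eventually {k : ℕ} {r : ℝ} (z : Fin k → ℝ) (h : ∀ i, Int.fract (z i / r) ≠ 0) :
    ∀ᶠ w in 𝓝 z, PP r w = PP r z := by
  have : ∀ i, ∀ᶠ w in 𝓝 z, ⌊w i / r⌋ = ⌊z i / r⌋ := by
    intro i
    have hc : ContinuousAt (fun w : Fin k → ℝ => w i / r) z := by
      have h0 : Continuous (fun w : Fin k → ℝ => w i) := continuous_apply i
      exact (h0.div_const r).continuousAt
    have h1 : (⌊z i / r⌋ : ℝ) < z i / r := by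
      refine lt_of_le_of_ne (Int.floor_le _) fun h' => h i ?_
      unfold Int.fract; linarith
    have h2 := Int.lt_floor_add_one (z i / r)
    filter_upwards [hc.eventually (lt_mem_nhds h1), hc.eventually (gt_mem_nhds h2)] with w h3 h4
    rw [Int.floor_eq_iff]
    exact ⟨h3.le, h4⟩
  filter_upwards [eventually_all.2 this] with w hw
  funext i
  simp [PP, hw i]

section constr
variable {k : ℕ} {F : Type*} [NormedAddCommGroup F] [NormedSpace ℝ F]

def aa (M : (Fin k → ℝ) × F → ((Fin k → ℝ) →L[ℝ] F)) (p : ℕ) (z : Fin k → ℝ) : ℕ → F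
  | 0 => 0
  | (j + 1) => aa M p z j + M (PP (rr p j) z, aa M p z j) (PP (rr p (j + 1)) z - PP (rr p j) z)

def BB (M : (Fin k → ℝ) × F → ((Fin k → ℝ) →L[ℝ] F)) (p : ℕ) (z : Fin k → ℝ) (j : ℕ) :
    (Fin k → ℝ) →L[ℝ] F := M (PP (rr p j) z, aa M p z j)

def TT (M : (Fin k → ℝ) × F → ((Fin k → ℝ) →L[ℝ] F)) (p : ℕ) (z : Fin k → ℝ) : ℕ →
    ((Fin k → ℝ) →L[ℝ] F)
  | 0 => BB M p z 0
  | (j + 1) => BB M p z (j + 1) - BB M p z j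

def gg (β : ℝ → ℝ) (M : (Fin k → ℝ) × F → ((Fin k → ℝ) →L[ℝ] F)) (p j : ℕ) (z : Fin k → ℝ) : F :=
  phi β (LL p j) (rr p j) z • TT M p z j (z - PP (rr p j) z)

variable (M : (Fin k → ℝ) × F → ((Fin k → ℝ) →L[ℝ] F)) (p : ℕ)

lemma aa_congr {z w : Fin k → ℝ} : ∀ j : ℕ, PP (rr p j) w = PP (rr p j) z →
    aa M p w j = aa M p z j ∧ BB M p w j = BB M p z j ∧ TT M p w j = TT M p z j := by
  intro j
  induction j with
  | zero =>
    intro h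
    refine ⟨rfl, ?_, ?_⟩ <;> simp [TT, BB, aa, h]
  | succ j ih =>
    intro h
    have h' := PP_nested p j h
    obtain ⟨h1, h2, h3⟩ := ih h'
    have h4 : aa M p w (j + 1) = aa M p z (j + 1) := by simp [aa, h1, h, h']
    have h5 : BB M p w (j + 1) = BB M p z (j + 1) := by simp [BB, h4, h]
    exact ⟨h4, h5, by simp [TT, h5, h2]⟩

variable {M} {p}

lemma PP_step (z : Fin k → ℝ) (j : ℕ) : ‖PP (rr p (j + 1)) z - PP (rr p j) z‖ ≤ 2 * rr p j := by
  have h1 := PP_dist (rr_pos p j) z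
  have h2 := PP_dist (rr_pos p (j + 1)) z
  have h3 : rr p (j + 1) ≤ rr p j := by
    rw [rr_succ p j]; nlinarith [LL_one_le p j, rr_pos p (j + 1)]
  have : PP (rr p (j + 1)) z - PP (rr p j) z = (z - PP (rr p j) z) - (z - PP (rr p (j + 1)) z) := by
    abel
  rw [this]
  exact (norm_sub_le _ _).trans (by linarith)

lemma TT_bound_const {B : ℝ} (hB : ∀ x, ‖M x‖ ≤ B) (z : Fin k → ℝ) (j : ℕ) :
    ‖TT M p z j‖ ≤ 2 * B := by
  have hB0 : 0 ≤ B := (norm_nonneg _).trans (hB 0)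
  cases j with
  | zero => exact (hB _).trans (by linarith)
  | succ j =>
    refine (norm_sub_le _ _).trans ?_
    have := hB (PP (rr p (j + 1)) z, aa M p z (j + 1))
    have := hB (PP (rr p j) z, aa M p z j)
    simp only [BB]
    linarith

lemma TT_bound {B : ℝ} (hB : ∀ x, ‖M x‖ ≤ B) {L : ℝ≥0} (hL : LipschitzWith L M) :
    ∃ C : ℝ, 0 ≤ C ∧ ∀ z j, ‖TT M p z j‖ ≤ C * (rr p j * LL p j) := by
  have hB0 : 0 ≤ B := (norm_nonneg _).trans (hB 0)
  have h0 : 0 < rr p 0 * LL p 0 := mul_pos (rr_pos _ _) (by linarith [LL_one_le p 0])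
  refine ⟨2 * L * (1 + B) + B / (rr p 0 * LL p 0), by positivity, fun z j => ?_⟩
  cases j with
  | zero =>
    refine (hB _).trans ?_
    rw [add_mul, div_mul_cancel₀ _ h0.ne']
    have : 0 ≤ 2 * L * (1 + B) * (rr p 0 * LL p 0) := by positivity
    linarith
  | succ j =>
    have h1 : ‖TT M p z (j + 1)‖ ≤ L * (2 * rr p j * (1 + B)) := by
      have := hL.dist_le_mul (PP (rr p (j + 1)) z, aa M p z (j + 1)) (PP (rr p j) z, aa M p z j)
      rw [dist_eq_norm] at this
      refine this.trans (mul_le_mul_of_nonneg_left ?_ L.2)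
      have hr := rr_pos p j
      rw [Prod.dist_eq, max_le_iff]
      simp only [dist_eq_norm]
      constructor
      · refine (PP_step z j).trans ?_
        nlinarith
      · simp only [aa, add_sub_cancel_left]
        refine (ContinuousLinearMap.le_opNorm _ _).trans ?_
        calc _ ≤ B * (2 * rr p j) := mul_le_mul (hB _) (PP_step z j) (norm_nonneg _) hB0
          _ ≤ _ := by nlinarith
    refine h1.trans ?_
    have h2 : rr p j ≤ rr p (j + 1) * LL p (j + 1) := by
      rw [rr_succ p j, mul_comm]
      exact mul_le_mul_of_nonneg_left (LL_mono p j) (rr_pos _ _).le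
    have h3 : 0 ≤ B / (rr p 0 * LL p 0) * (rr p (j + 1) * LL p (j + 1)) := by
      have := rr_pos p (j+1)
      have := LL_one_le p (j+1)
      positivity
    calc (L:ℝ) * (2 * rr p j * (1 + B)) = 2 * L * (1 + B) * rr p j := by ring
      _ ≤ 2 * L * (1 + B) * (rr p (j + 1) * LL p (j + 1)) := by gcongr
      _ ≤ _ := by rw [add_mul]; linarith

/-- partial sums of the affine pieces -/
lemma sum_affine (z w : Fin k → ℝ) (j : ℕ) :
    ∑ m ∈ Finset.range (j + 1), TT M p z m (w - PP (rr p m) z)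
      = aa M p z j + BB M p z j (w - PP (rr p j) z) := by
  induction j with
  | zero => simp [TT, aa]
  | succ j ih =>
    rw [Finset.sum_range_succ, ih]
    simp only [TT, aa, _root_.sub_apply]
    have : w - PP (rr p j) z = (w - PP (rr p (j + 1)) z)
      + (PP (rr p (j + 1)) z - PP (rr p j) z) := by abel
    rw [this, map_add]
    simp only [BB, aa]
    abel

lemma sum_TT (z : Fin k → ℝ) (j : ℕ) :
    ∑ m ∈ Finset.range (j + 1), TT M p z m = BB M p z j := by
  induction j with
  | zero => simp [TT]
  | succ j ih => rw [Finset.sum_range_succ, ih]; simp [TT]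

lemma gg_eventually {β : ℝ → ℝ} (hβ0 : ∀ x, |x| ≤ 1 → β x = 0) (z : Fin k → ℝ) (j : ℕ) :
    gg β M p j =ᶠ[𝓝 z]
      fun w => phi β (LL p j) (rr p j) w • TT M p z j (w - PP (rr p j) z) := by
  by_cases h : ∀ i, Int.fract (z i / rr p j) ≠ 0
  · filter_upwards [PP_eventually z h] with w hw
    simp only [gg]
    rw [hw, (aa_congr M p j hw).2.2]
  · push Not at h
    obtain ⟨i, hi⟩ := h
    have hr := rr_pos p j
    have hs : Real.sin (Real.pi / rr p j * z i) = 0 := by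
      rw [Int.fract_eq_iff] at hi
      obtain ⟨n, hn⟩ := hi.2.2
      rw [Real.sin_eq_zero_iff]
      refine ⟨n, ?_⟩
      rw [← hn]; ring
    have hc : ContinuousAt
        (fun w : Fin k → ℝ => |LL p j * Real.sin (Real.pi / rr p j * w i)|) z :=
      (continuous_const.mul (Real.continuous_sin.comp
        (continuous_const.mul (continuous_apply i)))).abs.continuousAt
    have : ∀ᶠ w in 𝓝 z, |LL p j * Real.sin (Real.pi / rr p j * w i)| < 1 :=
      hc.eventually (gt_mem_nhds (by simp [hs]))
    filter_upwards [this] with w hw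
    have : phi β (LL p j) (rr p j) w = 0 := by
      unfold phi
      exact Finset.prod_eq_zero (Finset.mem_univ i) (hβ0 _ hw.le)
    simp [gg, this]

lemma contDiff_gg {β : ℝ → ℝ} (hβ : ContDiff ℝ 2 β) (hβ0 : ∀ x, |x| ≤ 1 → β x = 0) (j : ℕ) :
    ContDiff ℝ 2 (gg β M p j) := by
  rw [contDiff_iff_contDiffAt]
  intro z
  refine ContDiffAt.congr_of_eventuallyEq ?_ (gg_eventually hβ0 z j)
  refine ContDiff.contDiffAt ?_
  refine (contDiff_phi hβ _ _).smul ?_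
  fun_prop

lemma gg_bound {β : ℝ → ℝ} (hβ : ContDiff ℝ 2 β) (hβ0 : ∀ x, |x| ≤ 1 → β x = 0)
    {C : ℝ} (hC1 : 1 ≤ C) (hC : ∀ i ≤ 2, ∀ x, ‖iteratedFDeriv ℝ i β x‖ ≤ C) (j : ℕ)
    {m : ℕ} (hm : m ≤ 2) (z : Fin k → ℝ) :
    ‖iteratedFDeriv ℝ m (gg β M p j) z‖ ≤
      4 * ((8 * C) ^ k * (‖TT M p z j‖ * rr p j)) * (2 * LL p j * (Real.pi / rr p j)) ^ m := by
  rw [((gg_eventually hβ0 z j).iteratedFDeriv ℝ m).eq_of_nhds]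
  set T := TT M p z j
  have hr := rr_pos p j
  have hΛ := LL_one_le p j
  have hT : ContDiff ℝ 2 (fun w => T (w - PP (rr p j) z)) := by fun_prop
  refine (norm_iteratedFDeriv_smul_le (N := 2) (contDiff_phi hβ _ _) hT z
    (by exact_mod_cast hm)).trans ?_
  refine choose_sum_le hm (A := (8 * C) ^ k) (B := ‖T‖ * rr p j)
    (N := 2 * LL p j * (Real.pi / rr p j)) (by positivity) (by positivity)
    (fun i => ‖iteratedFDeriv ℝ i (phi β (LL p j) (rr p j)) z‖)
    (fun i => ‖iteratedFDeriv ℝ i (fun w => T (w - PP (rr p j) z)) z‖)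
    (fun i => norm_nonneg _) (fun i hi => phi_bound hβ hC1 hC hΛ hr hi z) ?_
  intro i hi
  have e : iteratedFDeriv ℝ i (fun w => T (w - PP (rr p j) z)) z
      = iteratedFDeriv ℝ i T (z - PP (rr p j) z) := by
    rw [iteratedFDeriv_comp_sub]
  refine (congrArg norm e).trans_le ?_
  interval_cases i
  · simp only [norm_iteratedFDeriv_zero, pow_zero, mul_one]
    exact (T.le_opNorm _).trans (mul_le_mul_of_nonneg_left (PP_dist hr z) (norm_nonneg _))
  · rw [norm_iteratedFDeriv_one, ContinuousLinearMap.fderiv, pow_one]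
    have : ‖T‖ * rr p j * (2 * LL p j * (Real.pi / rr p j)) = ‖T‖ * (2 * LL p j * Real.pi) := by
      field_simp
    rw [this]
    have : 1 ≤ 2 * LL p j * Real.pi := by nlinarith [Real.pi_gt_three]
    nlinarith [norm_nonneg T]
  · rw [iteratedFDeriv_two_clm]
    simp; positivity

/-- final bounds on the correction terms -/
lemma gg_bounds {β : ℝ → ℝ} (hβ : ContDiff ℝ 2 β) (hβ0 : ∀ x, |x| ≤ 1 → β x = 0)
    {C : ℝ} (hC1 : 1 ≤ C) (hC : ∀ i ≤ 2, ∀ x, ‖iteratedFDeriv ℝ i β x‖ ≤ C)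
    {B : ℝ} (hB : ∀ x, ‖M x‖ ≤ B) {L : ℝ≥0} (hL : LipschitzWith L M) :
    ∃ D : ℝ, 0 ≤ D ∧ ∀ j z, ‖gg β M p j z‖ ≤ D * (rr p j * LL p j ^ 3) ∧
      ‖fderiv ℝ (gg β M p j) z‖ ≤ D * (rr p j * LL p j ^ 3) ∧
      ‖fderiv ℝ (fderiv ℝ (gg β M p j)) z‖ ≤ D * LL p j ^ 3 := by
  obtain ⟨C', hC'0, hC'⟩ := TT_bound (p := p) hB hL
  refine ⟨4 * ((8 * C) ^ k * C') * (2 * Real.pi) ^ 2, by positivity, fun j z => ?_⟩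
  have hr := rr_pos p j
  have hr1 : rr p j ≤ 1 := by unfold rr; exact pow_le_one₀ (by norm_num) (by norm_num)
  have hΛ := LL_one_le p j
  have hpi := Real.pi_gt_three
  have h0 := gg_bound (M := M) (p := p) hβ hβ0 hC1 hC j (m := 0) (by norm_num) z
  have h1 := gg_bound (M := M) (p := p) hβ hβ0 hC1 hC j (m := 1) (by norm_num) z
  have h2 := gg_bound (M := M) (p := p) hβ hβ0 hC1 hC j (m := 2) (by norm_num) z
  rw [norm_iteratedFDeriv_zero] at h0
  rw [norm_iteratedFDeriv_one] at h1
  rw [← norm_iteratedFDeriv_fderiv, norm_iteratedFDeriv_one] at h2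
  have hT := hC' z j
  set T := TT M p z j
  have hCk : 0 ≤ (8 * C) ^ k := by positivity
  have hpi2 : 1 ≤ 2 * Real.pi := by linarith
  have aux : ∀ m : ℕ, 4 * ((8 * C) ^ k * (‖T‖ * rr p j)) * (2 * LL p j * (Real.pi / rr p j)) ^ m
      ≤ 4 * ((8 * C) ^ k * C') * (2 * Real.pi) ^ m *
        (rr p j * LL p j * rr p j * (LL p j / rr p j) ^ m) := by
    intro m
    calc _ ≤ 4 * ((8 * C) ^ k * (C' * (rr p j * LL p j) * rr p j))
          * (2 * LL p j * (Real.pi / rr p j)) ^ m := by gcongr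
      _ = _ := by
        have : (2 * LL p j * (Real.pi / rr p j)) = (2 * Real.pi) * (LL p j / rr p j) := by ring
        rw [this, mul_pow]; ring
  refine ⟨h0.trans ((aux 0).trans ?_), h1.trans ((aux 1).trans ?_), h2.trans ((aux 2).trans ?_)⟩
  · have e : rr p j * LL p j * rr p j * (LL p j / rr p j) ^ 0 ≤ rr p j * LL p j ^ 3 := by
      have : rr p j * LL p j * rr p j * (LL p j / rr p j) ^ 0 = rr p j * (LL p j * rr p j) := by
        ring
      rw [this]
      refine mul_le_mul_of_nonneg_left ?_ hr.le
      have h3 : LL p j ^ 1 ≤ LL p j ^ 3 := pow_le_pow_right₀ hΛ (by norm_num)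
      nlinarith
    have e2 : (2 * Real.pi) ^ 0 ≤ (2 * Real.pi) ^ 2 := pow_le_pow_right₀ hpi2 (by norm_num)
    gcongr
  · have e : rr p j * LL p j * rr p j * (LL p j / rr p j) ^ 1 ≤ rr p j * LL p j ^ 3 := by
      have : rr p j * LL p j * rr p j * (LL p j / rr p j) ^ 1 = rr p j * LL p j ^ 2 := by
        field_simp
      rw [this]
      exact mul_le_mul_of_nonneg_left (pow_le_pow_right₀ hΛ (by norm_num)) hr.le
    have e2 : (2 * Real.pi) ^ 1 ≤ (2 * Real.pi) ^ 2 := pow_le_pow_right₀ hpi2 (by norm_num)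
    gcongr
  · have e : rr p j * LL p j * rr p j * (LL p j / rr p j) ^ 2 = LL p j ^ 3 := by
      field_simp
    rw [e]

end constr

/-- summability of the constants -/
lemma summable_consts (p : ℕ) {b : ℝ} (hb : 0 < b) :
    Summable fun j => rr p j ^ b * LL p j ^ 3 := by
  have h1 : ∀ m : ℕ, ((1 / 2 : ℝ) ^ (m ^ 2)) ^ b * ((2:ℝ) ^ (2 * m + 1)) ^ 3
      = (2:ℝ) ^ (6 * (m:ℝ) + 3 - b * m ^ 2) := by
    intro m
    have e1 : (1 / 2 : ℝ) ^ (m ^ 2) = (2:ℝ) ^ (-((m:ℝ) ^ 2)) := by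
      rw [Real.rpow_neg (by norm_num), one_div, inv_pow, ← Real.rpow_natCast]
      push_cast; rfl
    have e2 : ((2:ℝ) ^ (2 * m + 1)) ^ 3 = (2:ℝ) ^ (6 * (m:ℝ) + 3) := by
      rw [← pow_mul, ← Real.rpow_natCast]
      push_cast; ring_nf
    rw [e1, e2, ← Real.rpow_mul (by norm_num), ← Real.rpow_add (by norm_num)]
    ring_nf
  have h2 : Summable fun m : ℕ => ((1 / 2 : ℝ) ^ (m ^ 2)) ^ b * ((2:ℝ) ^ (2 * m + 1)) ^ 3 := by
    obtain ⟨n, hn⟩ := exists_nat_ge (10 / b)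
    have hg : Summable fun m : ℕ => (1 / 2 : ℝ) ^ m := summable_geometric_two
    refine hg.of_norm_bounded_eventually_nat ?_
    filter_upwards [eventually_ge_atTop (max n 1)] with m hm
    rw [Real.norm_of_nonneg (by positivity), h1]
    have e1 : (1 / 2 : ℝ) ^ m = (2:ℝ) ^ (-(m:ℝ)) := by
      rw [Real.rpow_neg (by norm_num), one_div, inv_pow, ← Real.rpow_natCast]
    rw [e1]
    refine Real.rpow_le_rpow_of_exponent_le (by norm_num) ?_
    have hm1 : (1:ℝ) ≤ m := by exact_mod_cast (le_max_right n 1).trans hm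
    have hm2 : 10 / b ≤ m := hn.trans (by exact_mod_cast (le_max_left n 1).trans hm)
    rw [div_le_iff₀ hb] at hm2
    nlinarith
  exact (summable_nat_add_iff p).2 h2 

/-- one dimensional fat Cantor type set -/
def KK (p : ℕ) : Set ℝ :=
  {t | t ∈ Ico 0 (rr p 0) ∧ ∀ j, 2 < |LL p j * Real.sin (Real.pi / rr p j * t)|}

lemma sin_small {Λ r t : ℝ} (hr : 0 < r) (hΛ : 1 ≤ Λ)
    (h : |Λ * Real.sin (Real.pi / r * t)| ≤ 2) : |t - round (t / r) * r| ≤ r / Λ := by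
  set n := round (t / r)
  have hn : |t / r - n| ≤ 1 / 2 := abs_sub_round _
  have hpi := Real.pi_pos
  have h1 := Real.mul_abs_le_abs_sin (x := Real.pi * (t / r - n)) (by
    rw [abs_mul, abs_of_pos hpi]; nlinarith)
  have h2 : |Real.sin (Real.pi * (t / r - n))| = |Real.sin (Real.pi / r * t)| := by
    have : Real.pi * (t / r - n) = Real.pi / r * t - n * Real.pi := by ring
    rw [this, Real.sin_sub_int_mul_pi, abs_mul]
    simp
  rw [h2, abs_mul, abs_of_pos hpi] at h1
  have h3 : 2 * |t / r - n| ≤ |Real.sin (Real.pi / r * t)| := by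
    calc _ = 2 / Real.pi * (Real.pi * |t / r - n|) := by field_simp
      _ ≤ _ := h1
  rw [abs_mul, abs_of_pos (by linarith : 0 < Λ)] at h
  have h4 : t - n * r = r * (t / r - n) := by field_simp
  rw [h4, abs_mul, abs_of_pos hr, le_div_iff₀ (by linarith)]
  have h5 : Λ * (2 * |t / r - n|) ≤ 2 := (mul_le_mul_of_nonneg_left h3 (by linarith)).trans h
  nlinarith

lemma bad_volume (p j : ℕ) :
    volume {t | t ∈ Ico 0 (rr p 0) ∧ |LL p j * Real.sin (Real.pi / rr p j * t)| ≤ 2}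
      ≤ ENNReal.ofReal (rr p 0 * (4 / LL p j)) := by
  have hr := rr_pos p j
  have hΛ := LL_one_le p j
  set R : ℕ := 2 ^ ((j + p) ^ 2 - p ^ 2) with hR
  have hR1 : rr p 0 = R * rr p j := by
    simp only [rr, zero_add, hR]
    have : (j + p) ^ 2 = ((j + p) ^ 2 - p ^ 2) + p ^ 2 :=
      (Nat.sub_add_cancel (Nat.pow_le_pow_left (by omega) 2)).symm
    conv_rhs => rw [this, pow_add (1 / 2 : ℝ)]
    push_cast
    rw [← mul_assoc, Nat.add_sub_cancel, ← mul_pow]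
    norm_num
  have hsub : {t | t ∈ Ico 0 (rr p 0) ∧ |LL p j * Real.sin (Real.pi / rr p j * t)| ≤ 2} ⊆
      ⋃ n ∈ Finset.range (R + 1), Icc ((n:ℝ) * rr p j - rr p j / LL p j)
        ((n:ℝ) * rr p j + rr p j / LL p j) := by
    rintro t ⟨⟨ht0, ht1⟩, ht⟩
    have h1 := sin_small hr hΛ ht
    have hn : |t / rr p j - round (t / rr p j)| ≤ 1 / 2 := abs_sub_round _
    set n := round (t / rr p j)
    have hx0 : 0 ≤ t / rr p j := by positivity
    have hx1 : t / rr p j < R := by rw [div_lt_iff₀ hr]; linarith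
    rw [abs_le] at hn h1
    have hn0 : 0 ≤ n := by
      have : (-1 : ℝ) < n := by linarith
      have : (-1 : ℤ) < n := by exact_mod_cast this
      omega
    have hn1 : n < R + 1 := by
      have : (n:ℝ) < R + 1 := by linarith
      exact_mod_cast this
    obtain ⟨m, hm⟩ := Int.eq_ofNat_of_zero_le hn0
    rw [hm] at h1 hn1
    simp only [mem_iUnion, Finset.mem_range, mem_Icc]
    refine ⟨m, by exact_mod_cast hn1, ?_, ?_⟩
    · push_cast at h1; linarith
    · push_cast at h1; linarith
  refine (measure_mono hsub).trans ((measure_biUnion_finset_le _ _).trans ?_)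
  simp only [Real.volume_Icc]
  rw [← ENNReal.ofReal_sum_of_nonneg]
  · refine ENNReal.ofReal_le_ofReal ?_
    simp only [add_sub_sub_cancel, Finset.sum_const, Finset.card_range, nsmul_eq_mul]
    rw [hR1]
    have hR2 : (1:ℝ) ≤ R := by
      rw [hR]; push_cast; exact one_le_pow₀ (by norm_num)
    have : 0 ≤ rr p j / LL p j := by positivity
    push_cast
    calc ((R:ℝ) + 1) * (rr p j / LL p j + rr p j / LL p j)
        = 2 * (R + 1) * (rr p j / LL p j) := by ring
      _ ≤ 4 * R * (rr p j / LL p j) := by nlinarith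
      _ = _ := by ring
  · intro i _
    have : 0 ≤ rr p j / LL p j := by positivity
    linarith

lemma KK_pos {p : ℕ} (hp : 1 ≤ p) : 0 < volume (KK p) := by
  rw [pos_iff_ne_zero]
  intro h0
  have hr := rr_pos p 0
  have hcov : Ico 0 (rr p 0) ⊆ KK p ∪ ⋃ j,
      {t | t ∈ Ico 0 (rr p 0) ∧ |LL p j * Real.sin (Real.pi / rr p j * t)| ≤ 2} := by
    intro t ht
    by_cases h : t ∈ KK p
    · exact Or.inl h
    · right
      simp only [KK, mem_ofPred_eq, not_and, not_forall, not_lt] at h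
      obtain ⟨j, hj⟩ := h ht
      exact mem_iUnion.2 ⟨j, ht, hj⟩
  have hL : ∀ j, 4 / LL p j ≤ (1 / 2) * (1 / 4 : ℝ) ^ j := by
    intro j
    have : (2:ℝ) ^ (2 * (j + 1) + 1) ≤ LL p j :=
      pow_le_pow_right₀ (by norm_num) (by omega)
    have e : (2:ℝ) ^ (2 * (j + 1) + 1) = 8 * 4 ^ j := by
      have : 2 * (j + 1) + 1 = 2 * j + 3 := by ring
      rw [this, pow_add, pow_mul]; norm_num; ring
    rw [e] at this
    rw [div_le_iff₀ (by linarith [LL_one_le p j])]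
    have h4 : (1 / 4 : ℝ) ^ j * 4 ^ j = 1 := by rw [← mul_pow]; norm_num
    have h5 : 0 ≤ (1 / 4 : ℝ) ^ j := by positivity
    nlinarith
  have hgeo : HasSum (fun j : ℕ => rr p 0 * ((1 / 2) * (1 / 4 : ℝ) ^ j)) (rr p 0 * (2 / 3)) := by
    have := (hasSum_geometric_of_lt_one (r := (1/4 : ℝ)) (by norm_num) (by norm_num)).mul_left (1/2)
    have e : (1 / 2 : ℝ) * (1 - 1 / 4)⁻¹ = 2 / 3 := by norm_num
    rw [e] at this
    exact this.mul_left _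
  have h1 : volume (Ico 0 (rr p 0)) ≤ ENNReal.ofReal (rr p 0 * (2 / 3)) := by
    refine (measure_mono hcov).trans ((measure_union_le _ _).trans ?_)
    rw [h0, zero_add]
    refine (measure_iUnion_le _).trans ?_
    rw [← hgeo.tsum_eq, ENNReal.ofReal_tsum_of_nonneg (fun j => by positivity) hgeo.summable]
    refine ENNReal.tsum_le_tsum fun j => (bad_volume p j).trans ?_
    exact ENNReal.ofReal_le_ofReal (mul_le_mul_of_nonneg_left (hL j) hr.le)
  rw [Real.volume_Ico, ENNReal.ofReal_le_ofReal_iff (by positivity)] at h1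
  linarith

lemma rpow_min {D s d r α X : ℝ} (hs : 0 ≤ s) (hD : 0 ≤ D) (hr : 0 < r) (hd : 0 ≤ d)
    (hα0 : 0 < α) (hα1 : α < 1) (h1 : X ≤ 2 * (D * (r * s))) (h2 : X ≤ D * s * d) :
    X ≤ (2 * D * (r ^ (1 - α) * s)) * d ^ α := by
  rcases le_total d r with h | h
  · have : d ≤ r ^ (1 - α) * d ^ α := by
      rcases hd.eq_or_lt with h0 | h0
      · rw [← h0]; positivity
      · calc d = d ^ (1 - α) * d ^ α := by rw [← Real.rpow_add h0]; simp
          _ ≤ _ := by gcongr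
    have hds : 0 ≤ D * s := by positivity
    calc X ≤ D * s * d := h2
      _ ≤ D * s * (r ^ (1 - α) * d ^ α) := mul_le_mul_of_nonneg_left this hds
      _ ≤ 2 * (D * s * (r ^ (1 - α) * d ^ α)) := by
        have : 0 ≤ D * s * (r ^ (1 - α) * d ^ α) := by positivity
        linarith
      _ = _ := by ring
  · have : r ≤ r ^ (1 - α) * d ^ α := by
      calc r = r ^ (1 - α) * r ^ α := by rw [← Real.rpow_add hr]; simp
          _ ≤ _ := by gcongr
    have hds : 0 ≤ 2 * (D * s) := by positivity
    calc X ≤ 2 * (D * s) * r := by linarith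
      _ ≤ 2 * (D * s) * (r ^ (1 - α) * d ^ α) := mul_le_mul_of_nonneg_left this hds
      _ = _ := by ring

theorem core_s4 {k : ℕ} {F : Type*} [NormedAddCommGroup F] [NormedSpace ℝ F] [CompleteSpace F]
    (M : (Fin k → ℝ) × F → ((Fin k → ℝ) →L[ℝ] F)) {B : ℝ} (hB : ∀ x, ‖M x‖ ≤ B) {L : ℝ≥0}
    (hL : LipschitzWith L M) {ρ : ℝ} (hρ : 0 < ρ) :
    ∃ (f : (Fin k → ℝ) → F) (K : Set ℝ), ContDiff ℝ 1 f ∧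
      (∀ α ∈ Ioo (0:ℝ) 1, ∃ C : ℝ, 0 ≤ C ∧ ∀ x y,
        ‖fderiv ℝ f x - fderiv ℝ f y‖ ≤ C * ‖x - y‖ ^ α) ∧
      0 < volume K ∧ ∀ z : Fin k → ℝ, (∀ i, z i ∈ K) →
        ‖z‖ ≤ ρ ∧ ‖f z‖ ≤ ρ ∧ fderiv ℝ f z = M (z, f z) := by
  obtain ⟨β, hβ, hβ0, hβ1, C, hC1, hC⟩ := beta_exists
  have hB0 : 0 ≤ B := (norm_nonneg _).trans (hB 0)
  obtain ⟨p, hp1, hp⟩ : ∃ p : ℕ, 1 ≤ p ∧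
      (1 / 2 : ℝ) ^ p * (1 + 16 * (8 * C) ^ k * B) ≤ ρ := by
    have ht : Tendsto (fun p : ℕ => (1 / 2 : ℝ) ^ p * (1 + 16 * (8 * C) ^ k * B)) atTop (𝓝 0) := by
      simpa using (tendsto_pow_atTop_nhds_zero_of_lt_one (r := (1/2:ℝ)) (by norm_num)
        (by norm_num)).mul_const (1 + 16 * (8 * C) ^ k * B)
    obtain ⟨p, h1, h2⟩ := ((eventually_ge_atTop 1).and (ht.eventually (ge_mem_nhds hρ))).exists
    exact ⟨p, h1, h2⟩
  obtain ⟨D, hD0, hD⟩ := gg_bounds (M := M) (p := p) hβ hβ0 hC1 hC hB hL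
  set g := gg β M p with hg
  have hgC : ∀ j, ContDiff ℝ 2 (g j) := fun j => contDiff_gg hβ hβ0 j
  have hsum : Summable fun j => D * (rr p j * LL p j ^ 3) := by
    have := (summable_consts p (b := 1) one_pos).mul_left D
    simpa using this
  set f : (Fin k → ℝ) → F := fun z => ∑' j, g j z with hf
  have hgs : ∀ z, Summable fun j => g j z := fun z =>
    hsum.of_norm_bounded fun j => (hD j z).1
  have hgd : ∀ z, Summable fun j => fderiv ℝ (g j) z := fun z =>
    hsum.of_norm_bounded fun j => (hD j z).2.1
  have hfd : fderiv ℝ f = fun z => ∑' j, fderiv ℝ (g j) z :=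
    fderiv_tsum hsum (fun j => (hgC j).differentiable (by norm_num)) (fun j z => (hD j z).2.1)
      (hgs 0)
  have hfC : ContDiff ℝ 1 f := by
    refine contDiff_tsum (N := 1) (v := fun _ j => D * (rr p j * LL p j ^ 3))
      (fun j => (hgC j).of_le (by norm_num)) (fun _ _ => hsum) ?_
    intro m j x hm
    have hm : m ≤ 1 := by exact_mod_cast hm
    interval_cases m
    · rw [norm_iteratedFDeriv_zero]; exact (hD j x).1
    · rw [norm_iteratedFDeriv_one]; exact (hD j x).2.1
  refine ⟨f, KK p, hfC, ?_, KK_pos hp1, ?_⟩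
  · rintro α ⟨hα0, hα1⟩
    have hs2 : Summable fun j => 2 * D * (rr p j ^ (1 - α) * LL p j ^ 3) :=
      (summable_consts p (b := 1 - α) (by linarith)).mul_left _
    have hnn : ∀ j, 0 ≤ 2 * D * (rr p j ^ (1 - α) * LL p j ^ 3) := fun j => by
      have := rr_pos p j
      have := LL_one_le p j
      positivity
    refine ⟨∑' j, 2 * D * (rr p j ^ (1 - α) * LL p j ^ 3), tsum_nonneg hnn, fun x y => ?_⟩
    rw [hfd]
    simp only
    rw [← (hgd x).tsum_sub (hgd y), ← tsum_mul_right]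
    refine tsum_of_norm_bounded (hs2.mul_right _).hasSum fun j => ?_
    have hΛ := LL_one_le p j
    refine rpow_min (s := LL p j ^ 3) (by positivity) hD0 (rr_pos p j) (norm_nonneg _) hα0 hα1 ?_ ?_
    · refine (norm_sub_le _ _).trans ?_
      linarith [(hD j x).2.1, (hD j y).2.1]
    · refine Convex.norm_image_sub_le_of_norm_fderiv_le (𝕜 := ℝ) (s := univ) ?_ ?_ convex_univ
        (mem_univ _) (mem_univ _)
      · intro z _
        have : ContDiff ℝ 1 (fderiv ℝ (g j)) := (hgC j).fderiv_right (by norm_num)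
        exact (this.differentiable (by norm_num)) z
      · intro z _
        exact (hD j z).2.2
  · intro z hz
    have hpp : 0 < (1 / 2 : ℝ) ^ p := by positivity
    have hCk : 0 ≤ (8 * C) ^ k * B := by positivity
    have hloc : ∀ j, g j =ᶠ[𝓝 z] fun w => TT M p z j (w - PP (rr p j) z) := by
      intro j
      refine (gg_eventually hβ0 z j).trans ?_
      have : ∀ i, ∀ᶠ w : Fin k → ℝ in 𝓝 z,
          2 < |LL p j * Real.sin (Real.pi / rr p j * w i)| := by
        intro i
        have hc : ContinuousAt
            (fun w : Fin k → ℝ => |LL p j * Real.sin (Real.pi / rr p j * w i)|) z :=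
          (continuous_const.mul (Real.continuous_sin.comp
            (continuous_const.mul (continuous_apply i)))).abs.continuousAt
        exact hc.eventually (lt_mem_nhds ((hz i).2 j))
      filter_upwards [eventually_all.2 this] with w hw
      have : phi β (LL p j) (rr p j) w = 1 := by
        unfold phi
        exact Finset.prod_eq_one fun i _ => hβ1 _ (hw i).le
      rw [this, one_smul]
    have hgz : ∀ j, g j z = TT M p z j (z - PP (rr p j) z) := fun j => (hloc j).eq_of_nhds
    have hgdz : ∀ j, fderiv ℝ (g j) z = TT M p z j := by
      intro j
      rw [(hloc j).fderiv_eq]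
      have : HasFDerivAt (fun w => TT M p z j (w - PP (rr p j) z)) (TT M p z j) z := by
        exact (TT M p z j).hasFDerivAt.comp z ((hasFDerivAt_id z).sub_const (PP (rr p j) z))
      exact this.fderiv
    have hrr0 : Tendsto (rr p) atTop (𝓝 0) := by
      refine squeeze_zero (fun j => (rr_pos p j).le) (rr_le p) ?_
      simpa using (tendsto_pow_atTop_nhds_zero_of_lt_one (r := (1/2:ℝ)) (by norm_num)
        (by norm_num)).const_mul ((1/2:ℝ)^p)
    have hPz : Tendsto (fun j => z - PP (rr p j) z) atTop (𝓝 0) :=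
      squeeze_zero_norm (fun j => PP_dist (rr_pos p j) z) hrr0
    have hPP : Tendsto (fun j => PP (rr p j) z) atTop (𝓝 z) := by
      simpa using (tendsto_const_nhds (x := z)).sub hPz
    have hBz : Tendsto (fun j => BB M p z j (z - PP (rr p j) z)) atTop (𝓝 0) := by
      refine squeeze_zero_norm (a := fun j => B * rr p j) (fun j => ?_) ?_
      · refine (ContinuousLinearMap.le_opNorm _ _).trans ?_
        exact mul_le_mul (hB _) (PP_dist (rr_pos p j) z) (norm_nonneg _) hB0
      · simpa using hrr0.const_mul B
    have haa : Tendsto (fun j => aa M p z j) atTop (𝓝 (f z)) := by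
      have h1 := ((hgs z).hasSum.tendsto_sum_nat).comp (tendsto_add_atTop_nat 1)
      have h2 := h1.sub hBz
      rw [sub_zero] at h2
      refine h2.congr fun j => ?_
      simp only [Function.comp, hgz]
      rw [sum_affine]
      abel
    have hM : Tendsto (fun j => BB M p z j) atTop (𝓝 (M (z, f z))) :=
      (hL.continuous.tendsto _).comp (hPP.prodMk_nhds haa)
    have hM2 : Tendsto (fun j => BB M p z j) atTop (𝓝 (fderiv ℝ f z)) := by
      have h1 := ((hgd z).hasSum.tendsto_sum_nat).comp (tendsto_add_atTop_nat 1)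
      rw [hfd]
      refine h1.congr fun j => ?_
      simp only [Function.comp, hgdz]
      rw [sum_TT]
    refine ⟨?_, ?_, tendsto_nhds_unique hM2 hM⟩
    · rw [pi_norm_le_iff_of_nonneg hρ.le]
      intro i
      have h1 := (hz i).1
      have h2 := rr_le p 0
      rw [Real.norm_of_nonneg h1.1]
      have := h1.2
      simp only [pow_zero, mul_one] at h2
      nlinarith
    · have hgeo : HasSum (fun j : ℕ => 8 * (8 * C) ^ k * B * (1/2:ℝ) ^ p * (1 / 2 : ℝ) ^ j)
          (8 * (8 * C) ^ k * B * (1/2:ℝ) ^ p * 2) := hasSum_geometric_two.mul_left _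
      have : ‖f z‖ ≤ 8 * (8 * C) ^ k * B * (1/2:ℝ) ^ p * 2 := by
        refine tsum_of_norm_bounded hgeo fun j => ?_
        have h0 := gg_bound (M := M) (p := p) hβ hβ0 hC1 hC j (m := 0) (by norm_num) z
        rw [norm_iteratedFDeriv_zero] at h0
        refine h0.trans ?_
        have h1 := TT_bound_const (p := p) hB z j
        have h2 := rr_le p j
        have h3 := rr_pos p j
        calc _ ≤ 4 * ((8 * C) ^ k * (2 * B * ((1/2:ℝ) ^ p * (1 / 2 : ℝ) ^ j))) * 1 := by
              rw [pow_zero]; gcongr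
          _ = _ := by ring
      refine this.trans (le_trans ?_ hp)
      nlinarith

lemma euc_decomp (W : Submodule ℝ (Euc n)) (y : Euc n) :
    ((W.orthogonalProjectionOnto y : W) : Euc n) + ((Wᗮ.orthogonalProjectionOnto y : Wᗮ) : Euc n)
      = y := by
  simpa only [Submodule.starProjection_apply] using W.starProjection_add_starProjection_orthogonal y

lemma proj_add (W : Submodule ℝ (Euc n)) (z : W) (w : Wᗮ) :
    W.orthogonalProjectionOnto ((z : Euc n) + w) = z ∧
    Wᗮ.orthogonalProjectionOnto ((z : Euc n) + w) = w := by
  constructor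
  · rw [map_add, Submodule.orthogonalProjectionOnto_mem_subspace_eq_self,
      Submodule.orthogonalProjectionOnto_apply_of_mem_orthogonal w.2, add_zero]
  · rw [map_add, Submodule.orthogonalProjectionOnto_mem_subspace_eq_self,
      Submodule.orthogonalProjectionOnto_orthogonal_apply_eq_zero z.2, zero_add]

lemma tangentCone_graph (W : Submodule ℝ (Euc n)) (f : W → Wᗮ) (f' : W →L[ℝ] Wᗮ) (z : W)
    (hf : HasFDerivAt f f' z) :
    tangentConeAt ℝ (graphMap W f '' univ) (graphMap W f z) =
      {y | Wᗮ.orthogonalProjectionOnto y = f' (W.orthogonalProjectionOnto y)} := by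
  apply Subset.antisymm
  · intro y hy
    set G : Euc n → Wᗮ := fun x =>
      Wᗮ.orthogonalProjectionOnto x - f (W.orthogonalProjectionOnto x) with hG
    have hGz : ∀ w, G (graphMap W f w) = 0 := by
      intro w
      simp only [hG, graphMap, (proj_add W w (f w)).1, (proj_add W w (f w)).2, sub_self]
    have hpz : W.orthogonalProjectionOnto (graphMap W f z) = z := (proj_add W z (f z)).1
    have hf2 : HasFDerivAt f f' (W.orthogonalProjectionOnto (graphMap W f z)) := by
      rw [hpz]; exact hf
    have hGd : HasFDerivAt G (Wᗮ.orthogonalProjectionOnto - f' ∘L W.orthogonalProjectionOnto)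
        (graphMap W f z) :=
      (Wᗮ.orthogonalProjectionOnto.hasFDerivAt).sub
        (hf2.comp _ (W.orthogonalProjectionOnto.hasFDerivAt))
    have h1 := (hGd.hasFDerivWithinAt (s := graphMap W f '' univ)).mapsTo_tangent_cone hy
    have h2 : G '' (graphMap W f '' univ) ⊆ {0} := by
      rintro _ ⟨_, ⟨w, -, rfl⟩, rfl⟩
      exact hGz w
    have h3 := tangentConeAt_mono h2 h1
    rw [hGz] at h3
    have h4 : ¬ AccPt (0 : Wᗮ) (𝓟 {0}) := by
      rw [accPt_principal_iff_nhdsWithin]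
      simp
    have h5 := tangentConeAt_subset_zero h4 h3
    have h6 : Wᗮ.orthogonalProjectionOnto y - f' (W.orthogonalProjectionOnto y) = 0 := h5
    exact sub_eq_zero.1 h6
  · intro y hy
    have hgd : HasFDerivAt (graphMap W f) (W.subtypeL + Wᗮ.subtypeL ∘L f') z :=
      W.subtypeL.hasFDerivAt.add ((Wᗮ.subtypeL.hasFDerivAt).comp z hf)
    have h0 : W.orthogonalProjectionOnto y ∈ tangentConeAt ℝ (univ : Set W) z := by
      rw [tangentConeAt_univ]; trivial
    have h1 := (hgd.hasFDerivWithinAt (s := univ)).mapsTo_tangent_cone h0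
    have h2 : (W.subtypeL + Wᗮ.subtypeL ∘L f') (W.orthogonalProjectionOnto y) = y := by
      have h3 : Wᗮ.orthogonalProjectionOnto y = f' (W.orthogonalProjectionOnto y) := hy
      conv_rhs => rw [← euc_decomp W y]
      rw [h3]; rfl
    rw [h2] at h1
    exact h1

lemma cutoff_aux {F : Type*} [NormedAddCommGroup F] [NormedSpace ℝ F] (N : Euc n → F) {R : ℝ}
    (hR : 0 < R) (hNd : ∀ x ∈ ball (0 : Euc n) R, ContDiffAt ℝ 1 N x) :
    ∃ g : Euc n → F, ContDiff ℝ 1 g ∧ HasCompactSupport g ∧ ∀ x, ‖x‖ ≤ R / 4 → g x = N x := by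
  let χ : ContDiffBump (0 : Euc n) := ⟨R / 4, R / 2, by positivity, by linarith⟩
  refine ⟨fun x => χ x • N x, ?_, ?_, ?_⟩
  · rw [contDiff_iff_contDiffAt]
    intro x
    by_cases hx : x ∈ ball (0 : Euc n) R
    · exact χ.contDiffAt.smul (hNd x hx)
    · have h1 : x ∉ tsupport χ := by
        rw [χ.tsupport_eq]
        intro h
        apply hx
        have h2 : dist x 0 ≤ R / 2 := h
        rw [mem_ball]; linarith
      have h2 := notMem_tsupport_iff_eventuallyEq.1 h1
      have h3 : (fun x => χ x • N x) =ᶠ[𝓝 x] fun _ => 0 := by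
        filter_upwards [h2] with y hy
        simp [hy]
      exact contDiffAt_const.congr_of_eventuallyEq h3
  · exact χ.hasCompactSupport.smul_right
  · intro x hx
    have hχ : χ x = 1 := χ.one_of_mem_closedBall (by simpa [χ] using hx)
    simp [hχ]

lemma cutoff_s4 {F : Type*} [NormedAddCommGroup F] [NormedSpace ℝ F] (N : Euc n → F) {R : ℝ}
    (hR : 0 < R) (hNd : ∀ x ∈ ball (0 : Euc n) R, ContDiffAt ℝ 1 N x) :
    ∃ (g : Euc n → F) (L : ℝ≥0) (B : ℝ), LipschitzWith L g ∧ (∀ x, ‖g x‖ ≤ B) ∧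
      ∀ x, ‖x‖ ≤ R / 4 → g x = N x := by
  obtain ⟨g, h1, h2, h3⟩ := cutoff_aux N hR hNd
  obtain ⟨L, hL⟩ := h1.lipschitzWith_of_hasCompactSupport h2 one_ne_zero
  obtain ⟨B, hB⟩ := h1.continuous.bounded_above_of_compact_support h2
  exact ⟨g, L, B, hL, hB, h3⟩

set_option maxHeartbeats 1000000 in
lemma plane_chart {k : ℕ} (V : Euc n → Submodule ℝ (Euc n)) (hV : IsC1PlaneField k univ V) :
    ∃ (Mc : Euc n → (V 0 →L[ℝ] (V 0)ᗮ)) (L : ℝ≥0) (B ρ : ℝ), 0 < ρ ∧ LipschitzWith L Mc ∧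
      (∀ x, ‖Mc x‖ ≤ B) ∧ Nonempty ((Fin k → ℝ) ≃L[ℝ] V 0) ∧
      ∀ x, ‖x‖ ≤ ρ → (V x : Set (Euc n)) =
        {y | (V 0)ᗮ.orthogonalProjectionOnto y = Mc x ((V 0).orthogonalProjectionOnto y)} := by
  obtain ⟨-, hdim, hloc⟩ := hV
  obtain ⟨U, hUo, h0U, -, X, hX, hspan⟩ := hloc 0 (mem_univ _)
  set W := V 0 with hW
  set π := W.orthogonalProjectionOnto with hπ
  set q := Wᗮ.orthogonalProjectionOnto with hq
  set Xc : Euc n → ((Fin k → ℝ) →L[ℝ] Euc n) := fun x =>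
    ∑ i, (ContinuousLinearMap.proj (R := ℝ) (φ := fun _ : Fin k => ℝ) i).smulRight (X i x) with hXc
  have hXa : ∀ x u, Xc x u = ∑ i, u i • X i x := by
    intro x u
    simp [hXc]
  have hVr : ∀ x ∈ U, ∀ y, y ∈ V x ↔ ∃ u, Xc x u = y := by
    intro x hx y
    rw [hspan x hx, Submodule.mem_span_range_iff_exists_fun]
    simp only [hXa]
  have hXcd : ContDiffOn ℝ 1 Xc U := by
    apply ContDiffOn.sum
    intro i _
    exact (ContinuousLinearMap.smulRightL ℝ (Fin k → ℝ) (Euc n)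
      (ContinuousLinearMap.proj (R := ℝ) (φ := fun _ : Fin k => ℝ) i)).contDiff.comp_contDiffOn (hX i)
  set A : Euc n → ((Fin k → ℝ) →L[ℝ] W) := fun x => π ∘L Xc x with hA
  have hAd : ContDiffOn ℝ 1 A U := contDiffOn_const.clm_comp hXcd
  have hA0 : Function.Surjective (A 0) := by
    intro w
    obtain ⟨u, hu⟩ := (hVr 0 h0U (w : Euc n)).1 w.2
    refine ⟨u, ?_⟩
    change π (Xc 0 u) = w
    rw [hu]; exact Submodule.orthogonalProjectionOnto_mem_subspace_eq_self w
  have hfr : finrank ℝ (Fin k → ℝ) = finrank ℝ W := by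
    rw [hdim 0 (mem_univ _)]; simp
  have hA0i : Function.Injective (A 0) :=
    (LinearMap.injective_iff_surjective_of_finrank_eq_finrank (f := (A 0 : (Fin k → ℝ) →ₗ[ℝ] W))
      hfr).2 hA0
  set e : (Fin k → ℝ) ≃L[ℝ] W :=
    (LinearEquiv.ofBijective (A 0 : (Fin k → ℝ) →ₗ[ℝ] W) ⟨hA0i, hA0⟩).toContinuousLinearEquiv
    with he
  have heA : (e : (Fin k → ℝ) →L[ℝ] W) = A 0 := by
    ext u; rfl
  have hUn : U ∈ 𝓝 (0 : Euc n) := hUo.mem_nhds h0U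
  have hAc : ContinuousAt A 0 := (hAd.continuousOn).continuousAt hUn
  have hev : ∀ᶠ x in 𝓝 (0 : Euc n), x ∈ U ∧
      A x ∈ range ((↑) : ((Fin k → ℝ) ≃L[ℝ] W) → ((Fin k → ℝ) →L[ℝ] W)) := by
    refine Filter.Eventually.and hUn (hAc ?_)
    rw [← heA]; exact ContinuousLinearEquiv.nhds e
  obtain ⟨R, hR, hball⟩ := Metric.eventually_nhds_iff_ball.1 hev
  set N : Euc n → (W →L[ℝ] Wᗮ) := fun x => (q ∘L Xc x) ∘L (A x).inverse with hN
  have hNd : ∀ x ∈ ball (0 : Euc n) R, ContDiffAt ℝ 1 N x := by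
    intro x hx
    obtain ⟨hxU, ex, hex⟩ := hball x hx
    have h1 : ContDiffAt ℝ 1 Xc x := hXcd.contDiffAt (hUo.mem_nhds hxU)
    have h2 : ContDiffAt ℝ 1 A x := hAd.contDiffAt (hUo.mem_nhds hxU)
    have h3 : ContDiffAt ℝ 1 (ContinuousLinearMap.inverse : ((Fin k → ℝ) →L[ℝ] W) → _) (A x) := by
      rw [← hex]; exact contDiffAt_map_inverse ex
    exact (contDiffAt_const.clm_comp h1).clm_comp (h3.comp x h2)
  obtain ⟨Mc, L, B, hMc1, hMc2, hMc3⟩ := cutoff_s4 N hR hNd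
  refine ⟨Mc, L, B, R / 4, by positivity, hMc1, hMc2, ⟨e⟩, ?_⟩
  · intro x hx
    have hxb : x ∈ ball (0 : Euc n) R := by
      rw [mem_ball_zero_iff]; linarith
    obtain ⟨hxU, ex, hex⟩ := hball x hxb
    have hNx : N x = (q ∘L Xc x) ∘L (ex.symm : W →L[ℝ] (Fin k → ℝ)) := by
      simp only [hN]
      rw [← hex, ContinuousLinearMap.inverse_equiv]
    have hexa : ∀ u, ex u = π (Xc x u) := fun u => by
      have := congrArg (fun T : (Fin k → ℝ) →L[ℝ] W => T u) hex
      exact this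
    ext y
    change y ∈ V x ↔ q y = Mc x (π y)
    rw [hMc3 x hx, hNx]
    change y ∈ V x ↔ q y = q (Xc x (ex.symm (π y)))
    rw [hVr x hxU]
    constructor
    · rintro ⟨u, rfl⟩
      rw [← hexa, ex.symm_apply_apply]
    · intro h
      refine ⟨ex.symm (π y), ?_⟩
      have h1 : π (Xc x (ex.symm (π y))) = π y := by
        rw [← hexa, ex.apply_symm_apply]
      refine (euc_decomp W (Xc x (ex.symm (π y)))).symm.trans (Eq.trans ?_ (euc_decomp W y))
      change ((π (Xc x (ex.symm (π y))) : W) : Euc n) + (q (Xc x (ex.symm (π y))) : Wᗮ) =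
        (π y : W) + (q y : Wᗮ)
      rw [h1, ← h]

lemma holder_of_norm {E F : Type*} [NormedAddCommGroup E] [NormedAddCommGroup F] (g : E → F)
    {C α : ℝ} (hC : 0 ≤ C) (hα : 0 < α) (h : ∀ x y, ‖g x - g y‖ ≤ C * ‖x - y‖ ^ α) :
    ∃ D : ℝ≥0, HolderOnWith D α.toNNReal g univ := by
  refine ⟨C.toNNReal, ?_⟩
  intro x _ y _
  rw [edist_dist, edist_dist, dist_eq_norm, dist_eq_norm, Real.coe_toNNReal _ hα.le,
    ENNReal.ofReal_rpow_of_nonneg (norm_nonneg _) hα.le]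
  change _ ≤ ENNReal.ofReal C * _
  rw [← ENNReal.ofReal_mul hC]
  exact ENNReal.ofReal_le_ofReal (h x y)

lemma precomp_bounds {X Y E F G : Type*} [PseudoEMetricSpace X] [PseudoEMetricSpace Y]
    [NormedAddCommGroup E] [NormedSpace ℝ E] [NormedAddCommGroup F] [NormedSpace ℝ F]
    [NormedAddCommGroup G] [NormedSpace ℝ G] (Mc : Y → (F →L[ℝ] G)) (ψ : X → Y) (ec : E →L[ℝ] F)
    {L D : ℝ≥0} {B : ℝ} (hL : LipschitzWith L Mc) (hψ : LipschitzWith D ψ) (hB : ∀ x, ‖Mc x‖ ≤ B) :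
    (∃ L' : ℝ≥0, LipschitzWith L' (fun p => (Mc (ψ p)) ∘L ec)) ∧
    ∀ p, ‖(Mc (ψ p)) ∘L ec‖ ≤ B * ‖ec‖ := by
  constructor
  · have h : LipschitzWith ‖ec‖₊ (fun T : F →L[ℝ] G => T ∘L ec) := by
      apply LipschitzWith.of_dist_le_mul
      intro S T
      rw [dist_eq_norm, dist_eq_norm, ← ContinuousLinearMap.sub_comp, mul_comm]
      exact ContinuousLinearMap.opNorm_comp_le _ _
    exact ⟨_, h.comp (hL.comp hψ)⟩
  · intro p
    exact (ContinuousLinearMap.opNorm_comp_le _ _).trans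
      (mul_le_mul_of_nonneg_right (hB _) (norm_nonneg _))

lemma holder_comp {E F G : Type*}
    [NormedAddCommGroup E] [NormedSpace ℝ E] [NormedAddCommGroup F] [NormedSpace ℝ F]
    [NormedAddCommGroup G] [NormedSpace ℝ G] (T : F → (F →L[ℝ] G)) (esc : E →L[ℝ] F)
    {C α : ℝ} (hC : 0 ≤ C) (hα : 0 < α) (hCf : ∀ x y, ‖T x - T y‖ ≤ C * ‖x - y‖ ^ α) (a b : E) :
    ‖(T (esc a) - T (esc b)) ∘L esc‖ ≤ C * ‖esc‖ ^ α * ‖esc‖ * ‖a - b‖ ^ α := by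
  have h1 : ‖esc a - esc b‖ ≤ ‖esc‖ * ‖a - b‖ := by
    rw [← map_sub]; exact esc.le_opNorm _
  have h2 : ‖esc a - esc b‖ ^ α ≤ ‖esc‖ ^ α * ‖a - b‖ ^ α := by
    rw [← Real.mul_rpow (norm_nonneg _) (norm_nonneg _)]
    exact Real.rpow_le_rpow (norm_nonneg _) h1 hα.le
  calc ‖(T (esc a) - T (esc b)) ∘L esc‖
      ≤ ‖T (esc a) - T (esc b)‖ * ‖esc‖ :=
        ContinuousLinearMap.opNorm_comp_le _ _
    _ ≤ (C * (‖esc‖ ^ α * ‖a - b‖ ^ α)) * ‖esc‖ := by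
        apply mul_le_mul_of_nonneg_right _ (norm_nonneg _)
        exact (hCf _ _).trans (mul_le_mul_of_nonneg_left h2 hC)
    _ = C * ‖esc‖ ^ α * ‖esc‖ * ‖a - b‖ ^ α := by ring

set_option maxHeartbeats 1000000 in
lemma main_aux {k : ℕ} (V : Euc n → Submodule ℝ (Euc n)) (W : Submodule ℝ (Euc n))
    (hW : finrank ℝ W = k)
    (Mc : Euc n → (W →L[ℝ] Wᗮ)) (L : ℝ≥0) (B ρ : ℝ) (hρ : 0 < ρ)
    (hL : LipschitzWith L Mc) (hB : ∀ x, ‖Mc x‖ ≤ B) (e : (Fin k → ℝ) ≃L[ℝ] W)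
    (hVM : ∀ x, ‖x‖ ≤ ρ → (V x : Set (Euc n)) =
        {y | Wᗮ.orthogonalProjectionOnto y = Mc x (W.orthogonalProjectionOnto y)}) :
    ∃ S : Set (Euc n), S.Nonempty ∧
      (∀ α ∈ Ioo (0 : ℝ) 1, IsC1AlphaSubmanifold k α S) ∧
      0 < μH[(k : ℝ)] (tangencySet S V) := by
  set ec : (Fin k → ℝ) →L[ℝ] W := (e : (Fin k → ℝ) →L[ℝ] W) with hec
  set Ψ : (Fin k → ℝ) × Wᗮ →L[ℝ] Euc n :=
    (W.subtypeL ∘L ec).coprod Wᗮ.subtypeL with hΨ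
  set M : (Fin k → ℝ) × Wᗮ → ((Fin k → ℝ) →L[ℝ] Wᗮ) := fun p => (Mc (Ψ p)) ∘L ec with hM
  obtain ⟨⟨L', hML⟩, hMB⟩ := precomp_bounds Mc Ψ ec hL Ψ.lipschitz hB
  have hρ' : 0 < ρ / (‖ec‖ + 1) := by positivity
  obtain ⟨f, K, hf, hfh, hK, hfK⟩ := core_s4 M hMB hML hρ'
  set esc : W →L[ℝ] (Fin k → ℝ) := (e.symm : W →L[ℝ] (Fin k → ℝ)) with hesc
  set g : W → Wᗮ := fun z => f (esc z) with hg
  have hgd : ∀ z, HasFDerivAt g ((fderiv ℝ f (esc z)) ∘L esc) z := fun z =>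
    ((hf.differentiable one_ne_zero (esc z)).hasFDerivAt).comp z esc.hasFDerivAt
  have hgC : ContDiff ℝ 1 g := hf.comp esc.contDiff
  have hges : ∀ u, esc (e u) = u := fun u => e.symm_apply_apply u
  refine ⟨graphMap W g '' univ, ⟨_, 0, mem_univ _, rfl⟩, ?_, ?_⟩
  · intro α hα x _
    refine ⟨W, univ, g, univ, hW, isOpen_univ, hgC.contDiffOn, ?_, isOpen_univ, mem_univ _, rfl⟩
    obtain ⟨C, hC, hCf⟩ := hfh α hα
    refine holder_of_norm (C := C * ‖esc‖ ^ α * ‖esc‖) (α := α) _ (by positivity) hα.1 ?_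
    intro a b
    rw [(hgd a).fderiv, (hgd b).fderiv, ← ContinuousLinearMap.sub_comp]
    exact holder_comp _ esc hC hα.1 hCf a b
  · have htan : ∀ u : Fin k → ℝ, (∀ i, u i ∈ K) →
        graphMap W g (e u) ∈ tangencySet (graphMap W g '' univ) V := by
      intro u hu
      obtain ⟨h1, h2, h3⟩ := hfK u hu
      have hx : graphMap W g (e u) = Ψ (u, f u) := by
        simp only [graphMap, hg, hges]
        simp [hΨ, hec]
      have hnx : ‖graphMap W g (e u)‖ ≤ ρ := by
        have h4 : ‖e u‖ ≤ ‖ec‖ * ‖u‖ := ec.le_opNorm u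
        have h5 : ‖graphMap W g (e u)‖ ≤ ‖e u‖ + ‖f u‖ := by
          simp only [graphMap, hg, hges]
          exact norm_add_le _ _
        have h6 : ‖ec‖ * ‖u‖ ≤ ‖ec‖ * (ρ / (‖ec‖ + 1)) :=
          mul_le_mul_of_nonneg_left h1 ec.opNorm_nonneg
        have h7 : ‖ec‖ * (ρ / (‖ec‖ + 1)) + ρ / (‖ec‖ + 1) = ρ := by
          have : ‖ec‖ + 1 ≠ 0 := by positivity
          field_simp
        linarith
      refine ⟨mem_image_of_mem _ (mem_univ _), ?_⟩
      have h4 : HasFDerivAt g (Mc (graphMap W g (e u))) (e u) := by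
        have h5 := hgd (e u)
        rw [hges, h3] at h5
        convert h5 using 1
        rw [hx]
        ext w
        have : ec (esc w) = w := e.apply_symm_apply w
        change _ = ((Mc (Ψ (u, f u)) (ec (esc w)) : Wᗮ) : Euc n) _
        rw [this]
      rw [tangentCone_graph W g _ _ h4, hVM _ hnx]
    set P : Euc n →L[ℝ] (Fin k → ℝ) := esc ∘L W.orthogonalProjectionOnto with hP
    have hsub : (univ.pi fun _ : Fin k => K) ⊆ P '' (tangencySet (graphMap W g '' univ) V) := by
      intro u hu
      refine ⟨_, htan u (fun i => hu i (mem_univ _)), ?_⟩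
      change esc (W.orthogonalProjectionOnto (((e u : W) : Euc n) + (g (e u) : Wᗮ))) = u
      rw [(proj_add W _ _).1, hges]
    have hvol : 0 < μH[(k : ℝ)] (univ.pi fun _ : Fin k => K) := by
      have h1 : (μH[(k : ℝ)] : Measure (Fin k → ℝ)) = volume := by
        have := hausdorffMeasure_pi_real (ι := Fin k)
        rwa [Fintype.card_fin] at this
      rw [h1, volume_pi_pi]
      rw [pos_iff_ne_zero, Finset.prod_ne_zero_iff]
      exact fun _ _ => hK.ne'
    have hle := (measure_mono hsub).trans
      (P.lipschitz.hausdorffMeasure_image_le (Nat.cast_nonneg k) (tangencySet (graphMap W g '' univ) V))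
    rw [pos_iff_ne_zero]
    intro h0
    rw [h0, mul_zero] at hle
    exact absurd hle (not_le.2 hvol)

/-- Let `V` be a distribution of `k`-planes of class `C¹` on `ℝⁿ`.
Then there exists a `k`-dimensional embedded submanifold `S` of `ℝⁿ` of class `C^{1,α}`
for every `α ∈ (0,1)`, such that `ℋ^k(τ(S,V)) > 0`. -/
theorem statement4 {n k : ℕ}
    (V : Euc n → Submodule ℝ (Euc n)) (hV : IsC1PlaneField k univ V) :
    ∃ S : Set (Euc n), S.Nonempty ∧
      (∀ α ∈ Ioo (0 : ℝ) 1, IsC1AlphaSubmanifold k α S) ∧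
      0 < μH[(k : ℝ)] (tangencySet S V) := by
  obtain ⟨Mc, L, B, ρ, hρ, h1, h2, ⟨e⟩, h3⟩ := plane_chart V hV
  exact main_aux V (V 0) (hV.2.1 0 (mem_univ _)) Mc L B ρ hρ h1 h2 e h3
end
end

section
/- Let α ∈ (0,1) and q ∈ [1,∞] with αq > n. Then there exists a constant c > 0 depending only on α, q, n such that for every R > 0 and every u ∈ W^{α,q}(B(0,R)) whose continuous representative vanishes on the boundary sphere ∂B(0,R), one has ‖u‖_{L¹(B(0,R))} ≤ c · R^{n(1−1/q)+α} · [u]_{W^{α,q}(B(0,R))}. -/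
noncomputable section
open MeasureTheory Set Module Filter Metric
open scoped ENNReal NNReal Topology

/-- Fractional Sobolev (Slobodeckij) double-integral quantity
`[u]_{W^{s,p}}^p = ∫∫ ‖u x − u y‖^p / dist(x,y)^{sp+d} dμ dμ`. -/
def fracPow {X : Type*} [PseudoEMetricSpace X] [MeasurableSpace X]
    {F : Type*} [NormedAddCommGroup F]
    (d s p : ℝ) (μ : Measure X) (u : X → F) : ℝ≥0∞ :=
  ∫⁻ x, ∫⁻ y, ENNReal.ofReal (‖u x - u y‖ ^ p) / edist x y ^ (s * p + d) ∂μ ∂μ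

/-- Extended `α`-Hölder seminorm of `u` on `A`. -/
def eHolder {X : Type*} [PseudoEMetricSpace X] {F : Type*} [NormedAddCommGroup F]
    (α : ℝ) (A : Set X) (u : X → F) : ℝ≥0∞ :=
  ⨆ (x ∈ A) (y ∈ A), edist (u x) (u y) / edist x y ^ α

/-- The `W^{α,q}` seminorm `[u]_{W^{α,q}(A)}` (Hölder seminorm when `q = ∞`). -/
def eFracSeminorm {n : ℕ} (d α : ℝ) (q : ℝ≥0∞) (A : Set (Euc n)) (u : Euc n → ℝ) : ℝ≥0∞ :=
  if q = ∞ then eHolder α A u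
  else (fracPow d α q.toReal (volume.restrict A) u) ^ (1 / q.toReal)

lemma holder_prod {n : ℕ} (α p : ℝ) (hα : 0 < α) (hp : 1 ≤ p) (A S T : Set (Euc n)) (hS : S ⊆ A) (hT : T ⊆ A)
    (v : Euc n → ℝ) (hv : Measurable v) (d : ℝ) (hd : 0 < d)
    (hST : ∀ x ∈ S, ∀ y ∈ T, edist x y ≤ ENNReal.ofReal d)
    (mS : MeasurableSet S) (mT : MeasurableSet T) (fS : volume S ≠ ∞) (fT : volume T ≠ ∞) :
    ∫⁻ x in S, ∫⁻ y in T, ‖v x - v y‖ₑ ≤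
      (ENNReal.ofReal d) ^ (α + n / p) * (volume S * volume T) ^ (1 - 1 / p) *
        (fracPow (n : ℝ) α p (volume.restrict A) v) ^ (1 / p) := by
  have hp0 : 0 < p := by linarith
  have hpe : 0 ≤ α * p + n := by positivity
  have : IsFiniteMeasure (volume.restrict S) := ⟨by simpa using fS.lt_top⟩
  have : IsFiniteMeasure (volume.restrict T) := ⟨by simpa using fT.lt_top⟩
  set μ := (volume.restrict S).prod (volume.restrict T) with hμ
  set f : Euc n × Euc n → ℝ := fun z => v z.1 - v z.2 with hf
  have mf : Measurable f := by fun_prop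
  have e1 : ∫⁻ x in S, ∫⁻ y in T, ‖v x - v y‖ₑ = ∫⁻ z, ‖f z‖ₑ ∂μ := by
    rw [lintegral_prod _ mf.enorm.aemeasurable]
  have e2 : ∫⁻ z, ‖f z‖ₑ ^ p ∂μ = ∫⁻ x in S, ∫⁻ y in T, ‖v x - v y‖ₑ ^ p := by
    rw [lintegral_prod _ (mf.enorm.pow_const p).aemeasurable]
  have h1 := eLpNorm_le_eLpNorm_mul_rpow_measure_univ (μ := μ) (p := 1) (q := ENNReal.ofReal p)
    (by simpa using hp) mf.aestronglyMeasurable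
  rw [eLpNorm_one_eq_lintegral_enorm, eLpNorm_eq_lintegral_rpow_enorm_toReal (by simpa using hp0) (by simp),
    ENNReal.toReal_ofReal hp0.le, e2, ← e1] at h1
  have hmu : μ univ = volume S * volume T := by
    rw [hμ, ← univ_prod_univ, Measure.prod_prod]; simp
  rw [hmu] at h1
  have h2 : ∫⁻ x in S, ∫⁻ y in T, ‖v x - v y‖ₑ ^ p ≤
      (ENNReal.ofReal d) ^ (α * p + n) * fracPow (n : ℝ) α p (volume.restrict A) v := by
    have key : ∀ x ∈ S, ∀ y ∈ T, ‖v x - v y‖ₑ ^ p ≤ (ENNReal.ofReal d) ^ (α * p + n) *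
        (ENNReal.ofReal (‖v x - v y‖ ^ p) / edist x y ^ (α * p + n)) := by
      intro x hx y hy
      rw [← ENNReal.ofReal_rpow_of_nonneg (norm_nonneg _) hp0.le, ofReal_norm]
      by_cases hxy : x = y
      · subst hxy; simp [hp0]
      have h0 : edist x y ^ (α * p + n) ≠ 0 := by
        rw [Ne, ENNReal.rpow_eq_zero_iff]; simp [edist_ne_top, hxy]
      have ht : edist x y ^ (α * p + n) ≠ ∞ := ENNReal.rpow_ne_top_of_nonneg hpe (edist_ne_top _ _)
      calc ‖v x - v y‖ₑ ^ p = edist x y ^ (α * p + n) * (‖v x - v y‖ₑ ^ p / edist x y ^ (α * p + n)) :=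
            (ENNReal.mul_div_cancel h0 ht).symm
        _ ≤ _ := by gcongr; exact hST x hx y hy
    have hc : (ENNReal.ofReal d) ^ (α * p + n) ≠ ∞ := ENNReal.rpow_ne_top_of_nonneg hpe (by simp)
    calc ∫⁻ x in S, ∫⁻ y in T, ‖v x - v y‖ₑ ^ p
        ≤ ∫⁻ x in S, ∫⁻ y in T, (ENNReal.ofReal d) ^ (α * p + n) *
          (ENNReal.ofReal (‖v x - v y‖ ^ p) / edist x y ^ (α * p + n)) :=
          setLIntegral_mono' mS fun x hx => setLIntegral_mono' mT fun y hy => key x hx y hy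
      _ = (ENNReal.ofReal d) ^ (α * p + n) * ∫⁻ x in S, ∫⁻ y in T,
          (ENNReal.ofReal (‖v x - v y‖ ^ p) / edist x y ^ (α * p + n)) := by
          simp_rw [lintegral_const_mul' _ _ hc]
      _ ≤ _ := by
          unfold fracPow
          gcongr
  calc _ ≤ _ := h1
    _ ≤ ((ENNReal.ofReal d) ^ (α * p + n) * fracPow (n : ℝ) α p (volume.restrict A) v) ^ (1 / p) *
        (volume S * volume T) ^ (1 - 1 / p) := by
        rw [ENNReal.toReal_one, div_one]
        gcongr
    _ = _ := by
        rw [ENNReal.mul_rpow_of_nonneg _ _ (by positivity), ← ENNReal.rpow_mul]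
        have : (α * p + n) * (1 / p) = α + n / p := by field_simp
        rw [this]; ring

lemma avg_step {n : ℕ} (S T : Set (Euc n)) (v : Euc n → ℝ) (hv : Measurable v)
    (C : ℝ≥0∞) (hC : ∫⁻ x in S, ∫⁻ y in T, ‖v x - v y‖ₑ ≤ C)
    (s0 : volume S ≠ 0) (t0 : volume T ≠ 0) (fS : volume S ≠ ∞) (fT : volume T ≠ ∞) :
    (volume S)⁻¹ * ∫⁻ x in S, ‖v x‖ₑ ≤ (volume T)⁻¹ * (∫⁻ x in T, ‖v x‖ₑ)
      + (volume S * volume T)⁻¹ * C := by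
  have h1 : volume T * ∫⁻ x in S, ‖v x‖ₑ ≤ volume S * (∫⁻ x in T, ‖v x‖ₑ) + C := by
    calc volume T * ∫⁻ x in S, ‖v x‖ₑ = ∫⁻ x in S, ∫⁻ y in T, ‖v x‖ₑ := by
          simp [lintegral_mul_const' _ _ fT, mul_comm]
      _ ≤ ∫⁻ x in S, ∫⁻ y in T, (‖v y‖ₑ + ‖v x - v y‖ₑ) := by
          gcongr with x y
          calc ‖v x‖ₑ = ‖v y + (v x - v y)‖ₑ := by congr 1; ring
            _ ≤ _ := enorm_add_le _ _
      _ = ∫⁻ x in S, ((∫⁻ y in T, ‖v y‖ₑ) + ∫⁻ y in T, ‖v x - v y‖ₑ) := by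
          congr 1; ext x; rw [lintegral_add_left hv.enorm]
      _ = volume S * (∫⁻ x in T, ‖v x‖ₑ) + ∫⁻ x in S, ∫⁻ y in T, ‖v x - v y‖ₑ := by
          rw [lintegral_add_left measurable_const]; simp [mul_comm]
      _ ≤ _ := by gcongr
  have hS := ENNReal.inv_mul_cancel s0 fS
  have hT := ENNReal.inv_mul_cancel t0 fT
  rw [ENNReal.mul_inv (Or.inl s0) (Or.inl fS)]
  calc (volume S)⁻¹ * ∫⁻ x in S, ‖v x‖ₑ
      = (volume S)⁻¹ * ((volume T)⁻¹ * volume T) * ∫⁻ x in S, ‖v x‖ₑ := by rw [hT, mul_one]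
    _ = (volume S)⁻¹ * (volume T)⁻¹ * (volume T * ∫⁻ x in S, ‖v x‖ₑ) := by ring
    _ ≤ (volume S)⁻¹ * (volume T)⁻¹ * (volume S * (∫⁻ x in T, ‖v x‖ₑ) + C) := by gcongr
    _ = ((volume S)⁻¹ * volume S) * ((volume T)⁻¹ * (∫⁻ x in T, ‖v x‖ₑ))
        + (volume S)⁻¹ * (volume T)⁻¹ * C := by ring
    _ = _ := by rw [hS, one_mul]

lemma telescope (A : ℕ → ℝ≥0∞) (M ρ : ℝ≥0∞) (h : ∀ k, A k ≤ A (k+1) + M * ρ ^ k)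
    (hA : ∀ ε : ℝ≥0, 0 < ε → ∃ k, A k ≤ ε) : A 0 ≤ M * (1 - ρ)⁻¹ := by
  have h1 : ∀ k, A 0 ≤ A k + M * ∑ i ∈ Finset.range k, ρ ^ i := by
    intro k
    induction k with
    | zero => simp
    | succ k ih =>
      rw [Finset.sum_range_succ, mul_add]
      calc A 0 ≤ _ := ih
        _ ≤ (A (k+1) + M * ρ ^ k) + M * ∑ i ∈ Finset.range k, ρ ^ i := by gcongr; exact h k
        _ = _ := by ring
  refine ENNReal.le_of_forall_pos_le_add fun ε hε _ => ?_
  obtain ⟨k, hk⟩ := hA ε hε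
  calc A 0 ≤ _ := h1 k
    _ ≤ ε + M * (1 - ρ)⁻¹ := by
      rw [← ENNReal.tsum_geometric]
      gcongr
      exact ENNReal.sum_le_tsum _
    _ = _ := add_comm _ _

lemma vol_ball {n : ℕ} (x : Euc n) {r : ℝ} (hr : 0 < r) :
    volume (ball x r) = ENNReal.ofReal (r ^ n * (volume (ball (0 : Euc n) 1)).toReal) := by
  rw [Measure.addHaar_ball_of_pos _ _ hr, ENNReal.ofReal_mul (by positivity), ENNReal.ofReal_toReal measure_ball_lt_top.ne]
  simp

lemma unit_pos (n : ℕ) : 0 < (volume (ball (0 : Euc n) 1)).toReal :=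
  ENNReal.toReal_pos (measure_ball_pos _ _ one_pos).ne' measure_ball_lt_top.ne

lemma exists_sphere {n : ℕ} (hn : 1 ≤ n) {R : ℝ} (hR : 0 < R) : ∃ z : Euc n, ‖z‖ = R :=
  ⟨EuclideanSpace.single ⟨0, hn⟩ R, by simp [abs_of_pos hR]⟩

lemma case_top {n : ℕ} (hn : 1 ≤ n) (α : ℝ) (hα : 0 < α) (R : ℝ) (hR : 0 < R) (u : Euc n → ℝ)
    (hu : ContinuousOn u (closedBall 0 R)) (hz : ∀ x ∈ sphere (0 : Euc n) R, u x = 0) :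
    ∫⁻ x in ball (0 : Euc n) R, ‖u x‖ₑ ≤
      ENNReal.ofReal (((volume (ball (0 : Euc n) 1)).toReal * 2 ^ α) * R ^ ((n : ℝ) + α)) *
        eHolder α (ball 0 R) u := by
  obtain ⟨z, hzR⟩ := exists_sphere hn hR
  have hzs : z ∈ sphere (0 : Euc n) R := by simpa using hzR
  set H := eHolder α (ball 0 R) u with hH
  have hcl : closure (ball (0 : Euc n) R) = closedBall 0 R := closure_ball _ hR.ne'
  have hzc : z ∈ closure (ball (0 : Euc n) R) := by rw [hcl]; exact sphere_subset_closedBall hzs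
  have hne : (𝓝[ball (0 : Euc n) R] z).NeBot := mem_closure_iff_nhdsWithin_neBot.1 hzc
  have hpt : ∀ x ∈ ball (0 : Euc n) R, ‖u x‖ₑ ≤ ENNReal.ofReal ((2 * R) ^ α) * H := by
    intro x hx
    have ht : Tendsto (fun y => ‖u x - u y‖ₑ) (𝓝[ball (0 : Euc n) R] z) (𝓝 ‖u x - u z‖ₑ) := by
      have : Tendsto u (𝓝[ball (0 : Euc n) R] z) (𝓝 (u z)) :=
        ((hu z (sphere_subset_closedBall hzs)).mono ball_subset_closedBall).tendsto
      exact (tendsto_const_nhds.sub this).enorm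
    rw [hz z hzs, sub_zero] at ht
    refine le_of_tendsto ht ?_
    filter_upwards [self_mem_nhdsWithin] with y hy
    by_cases hxy : x = y
    · subst hxy; simp
    have h0 : edist x y ^ α ≠ 0 := by
      rw [Ne, ENNReal.rpow_eq_zero_iff]; simp [edist_ne_top, hxy]
    have htt : edist x y ^ α ≠ ∞ := ENNReal.rpow_ne_top_of_nonneg hα.le (edist_ne_top _ _)
    have hle : edist (u x) (u y) / edist x y ^ α ≤ H := by
      rw [hH, eHolder]
      exact le_iSup₂_of_le x hx (le_iSup₂_of_le y hy le_rfl)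
    have hd : edist x y ≤ ENNReal.ofReal (2 * R) := by
      rw [edist_dist]
      apply ENNReal.ofReal_le_ofReal
      have := dist_triangle_right x y 0
      simp only [mem_ball] at hx hy
      linarith
    calc ‖u x - u y‖ₑ = edist x y ^ α * (edist (u x) (u y) / edist x y ^ α) := by
          rw [ENNReal.mul_div_cancel h0 htt, edist_eq_enorm_sub]
      _ ≤ ENNReal.ofReal (2 * R) ^ α * H := by gcongr
      _ = _ := by rw [ENNReal.ofReal_rpow_of_pos (by positivity)]
  calc ∫⁻ x in ball (0 : Euc n) R, ‖u x‖ₑ ≤ ∫⁻ x in ball (0 : Euc n) R, ENNReal.ofReal ((2 * R) ^ α) * H :=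
        setLIntegral_mono' measurableSet_ball hpt
    _ = ENNReal.ofReal ((2 * R) ^ α) * H * volume (ball (0 : Euc n) R) := by simp
    _ = (ENNReal.ofReal ((2 * R) ^ α) * volume (ball (0 : Euc n) R)) * H := by ring
    _ = _ := by
      rw [vol_ball _ hR, ← ENNReal.ofReal_mul (by positivity)]
      congr 2
      rw [Real.mul_rpow (by norm_num) hR.le, Real.rpow_add hR, Real.rpow_natCast]
      ring

lemma case_fin {n : ℕ} (hn : 1 ≤ n) (α p : ℝ) (hα : 0 < α) (hp : 1 ≤ p) (hαp : n < α * p) :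
    ∃ c : ℝ, 0 < c ∧ ∀ R : ℝ, 0 < R → ∀ u : Euc n → ℝ,
      ContinuousOn u (closedBall 0 R) → (∀ x ∈ sphere (0 : Euc n) R, u x = 0) →
    ∫⁻ x in ball (0 : Euc n) R, ‖u x‖ₑ ≤
      ENNReal.ofReal (c * R ^ ((n : ℝ) * (1 - p⁻¹) + α)) *
        (fracPow (n : ℝ) α p (volume.restrict (ball 0 R)) u) ^ (1 / p) := by
  have hp0 : 0 < p := by linarith
  set w := (volume (ball (0 : Euc n) 1)).toReal with hw
  have w0 : 0 < w := unit_pos n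
  set β : ℝ := α - n / p with hβ
  have β0 : 0 < β := by
    rw [hβ, sub_pos, div_lt_iff₀ hp0]; exact hαp
  set ρ : ℝ := 2 ^ (-β) with hρ
  have ρ0 : 0 < ρ := by positivity
  have ρ1 : ρ < 1 := Real.rpow_lt_one_of_one_lt_of_neg (by norm_num) (by linarith)
  set K : ℝ := (w ^ 2 / 2 ^ n) ^ (-(1 / p)) * 2 ^ (α + n / p) with hK
  have K0 : 0 < K := by positivity
  refine ⟨w * K * (1 - ρ)⁻¹, by have : 0 < 1 - ρ := by linarith
                                positivity, ?_⟩
  intro R hR u hu hz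
  obtain ⟨z, hzR⟩ := exists_sphere hn hR
  have hzs : z ∈ sphere (0 : Euc n) R := by simpa using hzR
  set v : Euc n → ℝ := (ball (0 : Euc n) R).indicator u with hv
  have mv : Measurable v := by
    classical
    have := (hu.mono ball_subset_closedBall).measurable_piecewise
      (g := fun _ => (0:ℝ)) continuousOn_const (measurableSet_ball)
    rw [hv, ← piecewise_eq_indicator]; exact this
  have huv : ∀ x ∈ ball (0 : Euc n) R, u x = v x := fun x hx => by simp [hv, indicator_of_mem hx]
  have hF : fracPow (n : ℝ) α p (volume.restrict (ball 0 R)) u =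
      fracPow (n : ℝ) α p (volume.restrict (ball 0 R)) v := by
    unfold fracPow
    refine setLIntegral_congr_fun measurableSet_ball fun x hx => ?_
    refine setLIntegral_congr_fun measurableSet_ball fun y hy => ?_
    simp only [huv x hx, huv y hy]
  have hI : ∫⁻ x in ball (0 : Euc n) R, ‖u x‖ₑ = ∫⁻ x in ball (0 : Euc n) R, ‖v x‖ₑ :=
    setLIntegral_congr_fun measurableSet_ball fun x hx => by simp only [huv x hx]
  rw [hF, hI]
  set F := (fracPow (n : ℝ) α p (volume.restrict (ball 0 R)) v) ^ (1 / p) with hFdef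
  set r : ℕ → ℝ := fun k => R / 2 ^ k with hr
  have r0 : ∀ k, 0 < r k := fun k => by positivity
  set B : ℕ → Set (Euc n) := fun k => ball ((1 - (1/2 : ℝ) ^ k) • z) (r k) with hB
  have hB0 : B 0 = ball 0 R := by simp [hB, hr]
  have hsucc : ∀ k, B (k+1) ⊆ B k := by
    intro k
    apply ball_subset_ball'
    rw [dist_eq_norm, ← sub_smul, norm_smul, hzR]
    have : (1 - (1/2:ℝ)^(k+1) - (1 - (1/2)^k)) = (1/2)^(k+1) := by rw [pow_succ]; ring
    rw [this, Real.norm_of_nonneg (by positivity)]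
    simp only [hr]
    apply le_of_eq
    rw [one_div, inv_pow]
    field_simp
    ring
  have hBA : ∀ k, B k ⊆ ball 0 R := by
    intro k
    induction k with
    | zero => rw [hB0]
    | succ k ih => exact (hsucc k).trans ih
  have hvol : ∀ k, volume (B k) = ENNReal.ofReal (r k ^ n * w) := fun k => vol_ball _ (r0 k)
  have hv0 : ∀ k, volume (B k) ≠ 0 := fun k => by
    rw [hvol]; have := r0 k; simp; positivity
  have hvt : ∀ k, volume (B k) ≠ ∞ := fun k => by rw [hvol]; simp
  have step : ∀ k, (volume (B k))⁻¹ * ∫⁻ x in B k, ‖v x‖ₑ ≤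
      (volume (B (k+1)))⁻¹ * (∫⁻ x in B (k+1), ‖v x‖ₑ) +
        (ENNReal.ofReal (K * R ^ β) * F) * (ENNReal.ofReal ρ) ^ k := by
    intro k
    have h1 := holder_prod α p hα hp (ball 0 R) (B k) (B (k+1)) (hBA k) (hBA (k+1)) v mv (2 * r k)
      (by have := r0 k; positivity) (by
        intro x hx y hy
        have hy := hsucc k hy
        rw [edist_dist]
        apply ENNReal.ofReal_le_ofReal
        have := dist_triangle_right x y ((1 - (1/2 : ℝ) ^ k) • z)
        simp only [hB, mem_ball] at hx hy
        linarith) measurableSet_ball measurableSet_ball (hvt k) (hvt (k+1))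
    refine (avg_step _ _ v mv _ h1 (hv0 k) (hv0 (k+1)) (hvt k) (hvt (k+1))).trans (le_of_eq ?_)
    congr 1
    rw [← hFdef, hvol, hvol, ← ENNReal.ofReal_mul (by have := r0 k; positivity)]
    have hrs : r (k+1) = r k / 2 := by simp only [hr]; rw [pow_succ]; field_simp
    have hrk := r0 k
    have hprod : r k ^ n * w * (r (k+1) ^ n * w) = (w ^ 2 / 2 ^ n) * (r k) ^ (2 * n : ℝ) := by
      rw [hrs]
      have : (r k) ^ (2 * n : ℝ) = (r k ^ n) * (r k ^ n) := by
        rw [← Real.rpow_natCast, ← Real.rpow_add hrk]; congr 1; ring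
      rw [this]
      generalize r k = t
      rw [div_pow]; field_simp
    rw [hprod]
    set V := (w ^ 2 / 2 ^ n) * (r k) ^ (2 * n : ℝ) with hV
    have V0 : 0 < V := by positivity
    rw [← ENNReal.ofReal_inv_of_pos V0, ENNReal.ofReal_rpow_of_pos V0,
      ENNReal.ofReal_rpow_of_pos (by positivity), ← ENNReal.ofReal_mul (by positivity), ← mul_assoc,
      ← ENNReal.ofReal_mul (by positivity), ← ENNReal.ofReal_pow ρ0.le]
    rw [mul_right_comm, ← ENNReal.ofReal_mul (by positivity)]
    congr 2
    have e1 : V⁻¹ * V ^ (1 - 1 / p) = V ^ (-(1/p)) := by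
      rw [← Real.rpow_neg_one, ← Real.rpow_add V0]; congr 1; ring
    have e2 : V ^ (-(1/p)) = (w ^ 2 / 2 ^ n) ^ (-(1/p)) * (r k) ^ (-(2 * n / p)) := by
      rw [hV, Real.mul_rpow (by positivity) (by positivity), ← Real.rpow_mul hrk.le]
      congr 2; ring
    have e3 : (r k) ^ (-(2 * n / p)) * (r k) ^ (α + n / p) = (r k) ^ β := by
      rw [← Real.rpow_add hrk]; congr 1; rw [hβ]; ring
    have e4 : (r k) ^ β = R ^ β * ρ ^ k := by
      simp only [hr]
      rw [Real.div_rpow hR.le (by positivity), hρ, ← Real.rpow_natCast, ← Real.rpow_natCast,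
        ← Real.rpow_mul (by norm_num), ← Real.rpow_mul (by norm_num), div_eq_mul_inv,
        ← Real.rpow_neg (by norm_num)]
      congr 2; ring
    calc V⁻¹ * ((2 * r k) ^ (α + n / p) * V ^ (1 - 1 / p))
        = (V⁻¹ * V ^ (1 - 1 / p)) * (2 * r k) ^ (α + n / p) := by ring
      _ = K * ((r k) ^ (-(2 * n / p)) * (r k) ^ (α + n / p)) := by
          rw [e1, e2, Real.mul_rpow (by norm_num) hrk.le, hK]; ring
      _ = _ := by rw [e3, e4]; ring
  have hsmall : ∀ ε : ℝ≥0, 0 < ε → ∃ k, (volume (B k))⁻¹ * ∫⁻ x in B k, ‖v x‖ₑ ≤ ε := by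
    intro ε hε
    obtain ⟨δ, δ0, hδ⟩ := Metric.continuousOn_iff.1 hu z (sphere_subset_closedBall hzs) ε hε
    obtain ⟨k, hk⟩ := exists_pow_lt_of_lt_one (show (0:ℝ) < δ / (2 * R) by positivity)
      (show (1/2 : ℝ) < 1 by norm_num)
    rw [lt_div_iff₀ (by positivity)] at hk
    refine ⟨k, ?_⟩
    have hpt : ∀ x ∈ B k, ‖v x‖ₑ ≤ ε := by
      intro x hx
      have hxA := hBA k hx
      have hd : dist x z < δ := by
        have h1 := dist_triangle x ((1 - (1/2 : ℝ) ^ k) • z) z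
        have h2 : dist ((1 - (1/2 : ℝ) ^ k) • z) z = (1/2)^k * R := by
          rw [dist_eq_norm]
          have : (1 - (1/2 : ℝ) ^ k) • z - z = (-(1/2 : ℝ) ^ k) • z := by
            module
          rw [this, norm_smul, hzR, norm_neg, Real.norm_of_nonneg (by positivity)]
        have h3 : r k = (1/2)^k * R := by simp only [hr]; rw [one_div, inv_pow]; field_simp
        simp only [hB, mem_ball] at hx
        linarith
      have := hδ x (ball_subset_closedBall hxA) hd
      rw [hz z hzs, dist_zero_right, huv x hxA] at this
      rw [enorm_le_coe]
      exact_mod_cast this.le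
    calc (volume (B k))⁻¹ * ∫⁻ x in B k, ‖v x‖ₑ ≤ (volume (B k))⁻¹ * ∫⁻ x in B k, (ε : ℝ≥0∞) := by
          gcongr 1
          exact setLIntegral_mono' measurableSet_ball hpt
      _ = (volume (B k))⁻¹ * volume (B k) * ε := by simp; ring
      _ = ε := by rw [ENNReal.inv_mul_cancel (hv0 k) (hvt k), one_mul]
  have hfin := telescope (fun k => (volume (B k))⁻¹ * ∫⁻ x in B k, ‖v x‖ₑ) _ _ step hsmall
  have h1ρ : (1 - ENNReal.ofReal ρ)⁻¹ = ENNReal.ofReal ((1 - ρ)⁻¹) := by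
    rw [ENNReal.ofReal_inv_of_pos (by linarith), ENNReal.ofReal_sub _ ρ0.le, ENNReal.ofReal_one]
  rw [h1ρ] at hfin
  have h1ρ0 : 0 < 1 - ρ := by linarith
  calc ∫⁻ x in ball (0 : Euc n) R, ‖v x‖ₑ
      = volume (B 0) * ((volume (B 0))⁻¹ * ∫⁻ x in B 0, ‖v x‖ₑ) := by
        rw [← mul_assoc, ENNReal.mul_inv_cancel (hv0 0) (hvt 0), one_mul, hB0]
    _ ≤ volume (B 0) * ((ENNReal.ofReal (K * R ^ β) * F) * ENNReal.ofReal ((1 - ρ)⁻¹)) := by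
        gcongr
    _ = (volume (B 0) * ENNReal.ofReal (K * R ^ β) * ENNReal.ofReal ((1 - ρ)⁻¹)) * F := by ring
    _ = _ := by
        rw [hvol, ← ENNReal.ofReal_mul (by have := r0 0; positivity),
          ← ENNReal.ofReal_mul (by have := r0 0; positivity)]
        congr 2
        have : r 0 = R := by simp [hr]
        have e : R ^ ((n : ℝ) * (1 - p⁻¹) + α) = R ^ n * R ^ β := by
          rw [← Real.rpow_natCast, ← Real.rpow_add hR]; congr 1; rw [hβ]; ring
        rw [this, e]; ring

/-- fractional Poincaré inequality.
Let `α ∈ (0,1)` and `q ∈ [1,∞]` with `αq > n`. Then there is `c > 0` depending only on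
`α, q, n` such that for every `R > 0` and every `u ∈ W^{α,q}(B(0,R))` whose continuous
representative vanishes on `∂B(0,R)`, one has
`‖u‖_{L¹(B(0,R))} ≤ c · R^{n(1−1/q)+α} · [u]_{W^{α,q}(B(0,R))}`. -/
theorem statement8 {n : ℕ} (hn : 1 ≤ n) (α : ℝ) (hα : α ∈ Ioo (0 : ℝ) 1)
    (q : ℝ≥0∞) (hq : 1 ≤ q) (hαq : (n : ℝ≥0∞) < ENNReal.ofReal α * q) :
    ∃ c : ℝ, 0 < c ∧ ∀ R : ℝ, 0 < R → ∀ u : Euc n → ℝ,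
      ContinuousOn u (closedBall 0 R) → (∀ x ∈ sphere (0 : Euc n) R, u x = 0) →
      ∫⁻ x in ball (0 : Euc n) R, ‖u x‖₊ ≤
        ENNReal.ofReal (c * R ^ ((n : ℝ) * (1 - q⁻¹.toReal) + α)) *
          eFracSeminorm (n : ℝ) α q (ball 0 R) u := by
  by_cases hqt : q = ∞
  · subst hqt
    refine ⟨(volume (ball (0 : Euc n) 1)).toReal * 2 ^ α,
      by have := unit_pos n; positivity, fun R hR u hu hz => ?_⟩
    have := case_top hn α hα.1 R hR u hu hz
    simp only [eFracSeminorm, if_true, ENNReal.inv_top, ENNReal.toReal_zero, sub_zero, mul_one]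
    exact this
  · have hp : 1 ≤ q.toReal := by
      have := ENNReal.toReal_mono hqt hq
      simpa using this
    have hαp : (n : ℝ) < α * q.toReal := by
      have := (ENNReal.toReal_lt_toReal (by simp) (ENNReal.mul_ne_top (by simp) hqt)).2 hαq
      simpa [ENNReal.toReal_mul, ENNReal.toReal_ofReal hα.1.le] using this
    obtain ⟨c, hc, h⟩ := case_fin hn α q.toReal hα.1 hp hαp
    refine ⟨c, hc, fun R hR u hu hz => ?_⟩
    have := h R hR u hu hz
    rw [eFracSeminorm, if_neg hqt, ENNReal.toReal_inv]
    exact this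
end
end
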